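/- arXiv:1511.07806 — 2 statements merged into one kernel-verified Lean document; each statement's English description precedes it below -/
import Mathlib

section
/- Let N = 1 and m > 1, and let u be a radial (even) very weak solution of Eq. (E) with even initial datum u₀ ∈ L^∞(ℝ) ∩ C(ℝ), u₀ ≥ 0, u₀ ≢ 0, satisfying u₀(0) = 0 and M₀ := ∫₀^∞ u₀(x)/x dx < ∞. Let k > 0 be the unique constant with ((m-1)/m) m^{-1/(m-1)} k^{m/(m-1)} = M₀, and define F(x,t) = t^{-1/m} [ (1/m) t^{-1/m} log|x| ]₊^{1/(m-1)} for 0 < |x| < e^{k t^{1/m}}, and F(x,t) = 0 for |x| ≥ e^{k t^{1/m}}. Then for every p ∈ [1,∞): lim_{t→∞} t^{(p-1)/(mp)} ( ∫_ℝ |u(x,t) − F(x,t)|^p / |x| dx )^{1/p} = 0. -/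
/-!
In the variable `s = log r` the equation reads `W_t = (W ^ m)_ss - (W ^ m)_s`, and `W` has a
potential `Q` with `Q_ss - Q_s = W`, `Q_t = W ^ m`, `Q → M` as `s → -∞` and `Q → 0` as `s → ∞`.
After the rescaling `s = y t ^ (1 / m)` the second order term `Q_ss` is of lower order, and `Q`
approaches the solution `(M - (m - 1) (y₊ / m) ^ (m / (m - 1)))₊` of the Hamilton–Jacobi equation
`Q_t = (-Q_s) ^ m`: travelling waves and perturbed rarefactions are barriers on the two sides of
the limit. By the comparison principle and the scaling of the equation, `Q` is convex in the
variable `t ^ (-1 / (m - 1))`; a convex function that converges does so with its derivative, so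
`t Q_t = t W ^ m`, and hence the rescaled density, converges pointwise. The masses converge too,
and Scheffé's lemma together with a uniform bound on the rescaled density gives convergence in
every `L ^ p`.
-/

open Real MeasureTheory Set Filter Topology

noncomputable section

/-- `v` (in radial variables: `v r t`, `r = |x|`) is a radial very weak solution of the
nonhomogeneous porous medium equation `|x|^{-2} ∂ₜ u = Δ(u^m)` in dimension `N`,
with initial datum `v₀`: `v` is nonnegative, continuous on `ℝ^N × (0,∞)`, bounded on
`ℝ^N × [0,T]` for every `T`, and satisfies the very weak (integral) formulation against
every nonnegative test function `φ ∈ C^{2,1}` vanishing on the lateral boundary. -/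
def IsRadialVeryWeakSolution (N : ℕ) (m : ℝ) (v : ℝ → ℝ → ℝ) (v₀ : ℝ → ℝ) : Prop :=
  (∀ r t, 0 ≤ v r t) ∧
  ContinuousOn (fun p : ℝ × ℝ => v p.1 p.2) (Set.Ici 0 ×ˢ Set.Ioi 0) ∧
  (∀ T : ℝ, 0 < T → ∃ C : ℝ, ∀ r ∈ Set.Ici (0 : ℝ), ∀ t ∈ Set.Icc (0 : ℝ) T, v r t ≤ C) ∧
  ∀ (r₁ r₂ T : ℝ) (φ φt φr φrr : ℝ → ℝ → ℝ),
    0 < r₁ → r₁ < r₂ → 0 < T →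
    (∀ r t, 0 ≤ φ r t) →
    (∀ r t, HasDerivAt (fun τ => φ r τ) (φt r t) t) →
    (∀ r t, HasDerivAt (fun ρ => φ ρ t) (φr r t) r) →
    (∀ r t, HasDerivAt (fun ρ => φr ρ t) (φrr r t) r) →
    Continuous (fun p : ℝ × ℝ => φ p.1 p.2) →
    Continuous (fun p : ℝ × ℝ => φt p.1 p.2) →
    Continuous (fun p : ℝ × ℝ => φr p.1 p.2) →
    Continuous (fun p : ℝ × ℝ => φrr p.1 p.2) →
    (∀ t ∈ Set.Ico (0 : ℝ) T, φ r₁ t = 0 ∧ φ r₂ t = 0) →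
    (∫ t in (0 : ℝ)..T, ∫ r in r₁..r₂,
        (r ^ (-2 : ℝ) * v r t * φt r t
          + (φrr r t + (((N : ℝ) - 1) / r) * φr r t) * v r t ^ m) * r ^ ((N : ℝ) - 1))
      = (∫ r in r₁..r₂,
          r ^ (-2 : ℝ) * (v r T * φ r T - v₀ r * φ r 0) * r ^ ((N : ℝ) - 1))
        + ∫ t in (0 : ℝ)..T,
            (r₂ ^ ((N : ℝ) - 1) * v r₂ t ^ m * φr r₂ t
              - r₁ ^ ((N : ℝ) - 1) * v r₁ t ^ m * φr r₁ t)

/-! ### The maximum principle in logarithmic variables -/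

/-- The derivatives of `f` at `(s, t)` entering the equation in the variable `s = log r`: `ft` is
the time derivative, `fs` the space derivative near `s`, and `L` stands for `f_ss - f_s`, which is
`r² f_rr` in the original variable. -/
structure HasLogJetAt (f : ℝ → ℝ → ℝ) (ft : ℝ) (fs : ℝ → ℝ) (L s t : ℝ) : Prop where
  time : HasDerivAt (fun τ => f s τ) ft t
  space : ∀ᶠ σ in 𝓝 s, HasDerivAt (fun σ => f σ t) (fs σ) σ
  space₂ : HasDerivAt fs (L + fs s) s

namespace HasLogJetAt

variable {f g : ℝ → ℝ → ℝ} {ft gt : ℝ} {fs gs : ℝ → ℝ} {L L' s t : ℝ}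

lemma sub (hf : HasLogJetAt f ft fs L s t) (hg : HasLogJetAt g gt gs L' s t) :
    HasLogJetAt (fun s t => f s t - g s t) (ft - gt) (fun σ => fs σ - gs σ) (L - L') s t where
  time := hf.time.sub hg.time
  space := (hf.space.and hg.space).mono fun _ h => h.1.sub h.2
  space₂ := (hf.space₂.sub hg.space₂).congr_deriv (by ring)

lemma add (hf : HasLogJetAt f ft fs L s t) (hg : HasLogJetAt g gt gs L' s t) :
    HasLogJetAt (fun s t => f s t + g s t) (ft + gt) (fun σ => fs σ + gs σ) (L + L') s t where
  time := hf.time.add hg.time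
  space := (hf.space.and hg.space).mono fun _ h => h.1.add h.2
  space₂ := (hf.space₂.add hg.space₂).congr_deriv (by ring)

lemma const_mul (c : ℝ) (hf : HasLogJetAt f ft fs L s t) :
    HasLogJetAt (fun s t => c * f s t) (c * ft) (fun σ => c * fs σ) (c * L) s t where
  time := hf.time.const_mul c
  space := hf.space.mono fun _ h => h.const_mul c
  space₂ := (hf.space₂.const_mul c).congr_deriv (by ring)

lemma const_add (c : ℝ) (hf : HasLogJetAt f ft fs L s t) :
    HasLogJetAt (fun s t => c + f s t) ft fs L s t where
  time := hf.time.const_add c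
  space := hf.space.mono fun _ h => h.const_add c
  space₂ := hf.space₂

lemma const_sub (c : ℝ) (hf : HasLogJetAt f ft fs L s t) :
    HasLogJetAt (fun s t => c - f s t) (-ft) (fun σ => -fs σ) (-L) s t where
  time := hf.time.const_sub c
  space := hf.space.mono fun _ h => h.const_sub c
  space₂ := hf.space₂.neg.congr_deriv (by ring)

lemma comp_add_const_space {c : ℝ} (hf : HasLogJetAt f ft fs L (s + c) t) :
    HasLogJetAt (fun s t => f (s + c) t) ft (fun σ => fs (σ + c)) L s t where
  time := hf.time
  space := ((continuous_add_const c).continuousAt.eventually hf.space).mono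
    fun σ h => h.comp_add_const σ c
  space₂ := hf.space₂.comp_add_const s c

lemma comp_const_mul_time {c : ℝ} (hf : HasLogJetAt f ft fs L s (c * t)) :
    HasLogJetAt (fun s t => f s (c * t)) (c * ft) fs L s t where
  time := by
    have h : HasDerivAt (fun τ => c * τ) c t := by simpa using (hasDerivAt_id t).const_mul c
    exact (hf.time.comp t h).congr_deriv (mul_comm _ _)
  space := hf.space
  space₂ := hf.space₂

lemma nonpos_of_isLocalMax (hf : HasLogJetAt f ft fs L s t)
    (hmax : IsLocalMax (fun σ => f σ t) s) : L ≤ 0 := by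
  have hfs : fs s = 0 := hmax.hasDerivAt_eq_zero hf.space.self_of_nhds
  by_contra! hL
  have hderiv : deriv (fun σ => f σ t) =ᶠ[𝓝 s] fs := hf.space.mono fun _ h => h.deriv
  have hmin : IsLocalMin (fun σ => f σ t) s := by
    refine isLocalMin_of_deriv_deriv_pos ?_ (hderiv.eq_of_nhds.trans hfs)
      hf.space.self_of_nhds.continuousAt
    simpa [hderiv.deriv_eq, hf.space₂.deriv, hfs] using hL
  have hconst : (fun σ => f σ t) =ᶠ[𝓝 s] fun _ => f s t := by
    filter_upwards [hmax, hmin] with σ h₁ h₂ using le_antisymm h₁ h₂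
  have hzero : deriv (deriv fun σ => f σ t) s = 0 := by simp [hconst.deriv.deriv_eq]
  rw [hderiv.deriv_eq, hf.space₂.deriv, hfs] at hzero
  linarith

lemma time_nonneg_of_left_max (hf : HasLogJetAt f ft fs L s t)
    (hmax : ∀ᶠ τ in 𝓝[<] t, f s τ ≤ f s t) : 0 ≤ ft := by
  refine ge_of_tendsto (hasDerivWithinAt_iff_tendsto_slope' self_notMem_Iio |>.1
    hf.time.hasDerivWithinAt) ?_
  filter_upwards [hmax, self_mem_nhdsWithin] with τ hτ hlt
  rw [slope_def_field]
  exact div_nonneg_of_nonpos (sub_nonpos.2 hτ) (sub_nonpos.2 (le_of_lt hlt))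

end HasLogJetAt

/-- A positive function growing as `s → ±∞` that penalises the maximum principle: with
`L = 2 exp (K * t - s)` and time derivative `K * exp (K * t - s)`, it is a strict supersolution of
`f_t = A * L` as soon as `2 * A < K`. -/
def penalty (K s t : ℝ) : ℝ := exp s + exp (K * t - s)

lemma penalty_pos (K s t : ℝ) : 0 < penalty K s t := by
  unfold penalty; positivity

lemma continuous_penalty (K : ℝ) : Continuous fun p : ℝ × ℝ => penalty K p.1 p.2 := by
  unfold penalty; fun_prop

lemma exp_le_penalty {K s t R : ℝ} (hKt : 0 ≤ K * t) (hR : R ≤ |s|) : exp R ≤ penalty K s t := by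
  unfold penalty
  rcases abs_cases s with ⟨h, -⟩ | ⟨h, -⟩
  · linarith [exp_le_exp.2 (show R ≤ s by linarith), exp_pos (K * t - s)]
  · linarith [exp_le_exp.2 (show R ≤ K * t - s by linarith), exp_pos s]

lemma hasLogJetAt_penalty (K s t : ℝ) :
    HasLogJetAt (penalty K) (K * exp (K * t - s)) (fun σ => exp σ - exp (K * t - σ))
      (2 * exp (K * t - s)) s t where
  time := by
    have h : HasDerivAt (fun τ => K * τ - s) K t := by
      simpa using ((hasDerivAt_id t).const_mul K).sub_const s
    exact (h.exp.const_add (exp s)).congr_deriv (mul_comm _ _)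
  space := .of_forall fun σ => by
    have h : HasDerivAt (fun σ => K * t - σ) (-1) σ := (hasDerivAt_id σ).const_sub (K * t)
    exact ((Real.hasDerivAt_exp σ).add h.exp).congr_deriv (by ring)
  space₂ := by
    have h : HasDerivAt (fun σ => K * t - σ) (-1) s := (hasDerivAt_id s).const_sub (K * t)
    exact ((Real.hasDerivAt_exp s).sub h.exp).congr_deriv (by ring)

lemma exists_interior_max_of_lt {T R c s₀ t₀ : ℝ} {Φ : ℝ → ℝ → ℝ}
    (hcont : ContinuousOn (fun p : ℝ × ℝ => Φ p.1 p.2) (univ ×ˢ Ioi 0))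
    (hout : ∀ s, ∀ t ∈ Ioc 0 T, R ≤ |s| → Φ s t ≤ c)
    (hstart : ∀ᶠ t in 𝓝[>] 0, ∀ s, Φ s t ≤ c)
    (ht₀ : t₀ ∈ Ioc 0 T) (hc : c < Φ s₀ t₀) :
    ∃ s, ∃ t ∈ Ioc 0 T, c < Φ s t ∧ (∀ᶠ τ in 𝓝[<] t, Φ s τ ≤ Φ s t) ∧
      IsLocalMax (fun σ => Φ σ t) s := by
  obtain ⟨δ, hδ, hδΦ⟩ := mem_nhdsGT_iff_exists_Ioo_subset.1 hstart
  obtain ⟨t₁, ht₁, ht₁'⟩ := exists_between (lt_min (show 0 < δ from hδ) ht₀.1)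
  obtain ⟨ht₁δ, ht₁t₀⟩ := lt_min_iff.1 ht₁'
  have hsR₀ : |s₀| < R := by
    by_contra! h
    linarith [hout s₀ t₀ ht₀ h]
  have hmem : ((s₀, t₀) : ℝ × ℝ) ∈ Icc (-R) R ×ˢ Icc t₁ T :=
    ⟨abs_le.1 hsR₀.le, ht₁t₀.le, ht₀.2⟩
  obtain ⟨⟨s, t⟩, ⟨hs, ht⟩, hmax⟩ :=
    (isCompact_Icc.prod isCompact_Icc).exists_isMaxOn ⟨_, hmem⟩
      (hcont.mono (prod_mono (subset_univ (Icc (-R) R)) fun t ht => ht₁.trans_le ht.1))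
  have hle : ∀ σ ∈ Icc (-R) R, ∀ τ ∈ Icc t₁ T, Φ σ τ ≤ Φ s t := fun σ hσ τ hτ =>
    hmax (mk_mem_prod hσ hτ)
  have hcst : c < Φ s t := hc.trans_le (hle s₀ hmem.1 t₀ hmem.2)
  have htT : t ∈ Ioc 0 T := ⟨ht₁.trans_le ht.1, ht.2⟩
  have hsR : |s| < R := by
    by_contra! h
    linarith [hout s t htT h]
  have ht₁t : t₁ < t := by
    by_contra! h
    exact hcst.not_ge (hδΦ ⟨htT.1, h.trans_lt ht₁δ⟩ s)
  refine ⟨s, t, htT, hcst, ?_, ?_⟩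
  · filter_upwards [Ioo_mem_nhdsLT ht₁t] with τ hτ
    exact hle s hs τ ⟨hτ.1.le, hτ.2.le.trans ht.2⟩
  · filter_upwards [Icc_mem_nhds (abs_lt.1 hsR).1 (abs_lt.1 hsR).2] with σ hσ
    exact hle σ hσ t ht

lemma exists_penalized_max {T C K s₀ t₀ : ℝ} (hK : 0 ≤ K) {D : ℝ → ℝ → ℝ}
    (hcont : ContinuousOn (fun p : ℝ × ℝ => D p.1 p.2) (univ ×ˢ Ioi 0))
    (hbd : ∀ s t, 0 < t → t ≤ T → D s t ≤ C)
    (hstart : ∀ ε > 0, ∀ᶠ t in 𝓝[>] 0, ∀ s, D s t ≤ ε)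
    (ht₀ : t₀ ∈ Ioc 0 T) (hpos : 0 < D s₀ t₀) :
    ∃ ε > 0, ∃ s, ∃ t ∈ Ioc 0 T, 0 < D s t ∧
      (∀ᶠ τ in 𝓝[<] t, D s τ - ε * penalty K s τ ≤ D s t - ε * penalty K s t) ∧
      IsLocalMax (fun σ => D σ t - ε * penalty K σ t) s := by
  have hB : 0 < penalty K s₀ t₀ := penalty_pos K s₀ t₀
  obtain ⟨ε, hε, hεB⟩ : ∃ ε > 0, ε * penalty K s₀ t₀ = D s₀ t₀ / 2 :=
    ⟨D s₀ t₀ / 2 / penalty K s₀ t₀, by positivity, div_mul_cancel₀ _ hB.ne'⟩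
  have hlt : ∀ s t, D s t - ε * penalty K s t < D s t := fun s t =>
    sub_lt_self _ (mul_pos hε (penalty_pos K s t))
  obtain ⟨R, hRC⟩ : ∃ R : ℝ, C < ε * exp R :=
    ((tendsto_exp_atTop.const_mul_atTop hε).eventually_gt_atTop C).exists
  obtain ⟨s, t, ht, hst, hleft, hloc⟩ :=
    exists_interior_max_of_lt (R := R) (c := D s₀ t₀ / 4) (t₀ := t₀) (s₀ := s₀)
      (Φ := fun s t => D s t - ε * penalty K s t)
      (hcont.sub ((continuous_penalty K).const_mul ε).continuousOn)
      (fun s t ht hs => by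
        have := mul_le_mul_of_nonneg_left (exp_le_penalty (mul_nonneg hK ht.1.le) hs) hε.le
        linarith [hbd s t ht.1 ht.2])
      ((hstart _ (by positivity)).mono fun t h s => (hlt s t).le.trans (h s)) ht₀ (by linarith)
  exact ⟨ε, hε, s, t, ht, by linarith [hlt s t], hleft, hloc⟩

theorem nonpos_of_time_le_max_log_laplacian {T A C : ℝ} (hA : 0 ≤ A) {D : ℝ → ℝ → ℝ}
    (hcont : ContinuousOn (fun p : ℝ × ℝ => D p.1 p.2) (univ ×ˢ Ioi 0))
    (hbd : ∀ s t, 0 < t → t ≤ T → D s t ≤ C)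
    (hstart : ∀ ε > 0, ∀ᶠ t in 𝓝[>] 0, ∀ s, D s t ≤ ε)
    (hjet : ∀ s t, 0 < t → t ≤ T → 0 < D s t →
      ∃ Dt Ds L, HasLogJetAt D Dt Ds L s t ∧ Dt ≤ A * max L 0)
    {s t : ℝ} (ht : 0 < t) (htT : t ≤ T) : D s t ≤ 0 := by
  by_contra! hpos
  obtain ⟨ε, hε, s₁, t₁, ht₁, hD, hleft, hloc⟩ :=
    exists_penalized_max (K := 2 * A + 1) (by positivity) hcont hbd hstart ⟨ht, htT⟩ hpos
  obtain ⟨Dt, Ds, L, hDjet, hle⟩ := hjet s₁ t₁ ht₁.1 ht₁.2 hD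
  have hΦ := hDjet.sub ((hasLogJetAt_penalty (2 * A + 1) s₁ t₁).const_mul ε)
  have htime := hΦ.time_nonneg_of_left_max hleft
  have hspace := hΦ.nonpos_of_isLocalMax hloc
  set E := ε * exp ((2 * A + 1) * t₁ - s₁)
  have hEpos : 0 < E := by positivity
  have hL : max L 0 ≤ 2 * E := max_le (by linarith) (by positivity)
  have := mul_le_mul_of_nonneg_left hL hA
  linarith

lemma rpow_sub_rpow_le_mul_max {m A x y : ℝ} (hm : 1 ≤ m) (hx : 0 ≤ x) (hy : 0 ≤ y)
    (hxA : x ≤ A) : x ^ m - y ^ m ≤ m * A ^ (m - 1) * max (x - y) 0 := by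
  have hA : 0 ≤ A ^ (m - 1) := rpow_nonneg (hx.trans hxA) _
  rcases le_or_gt x y with h | h
  · exact (sub_nonpos.2 (rpow_le_rpow hx h (by linarith))).trans (by positivity)
  · have hx₀ : 0 < x := hy.trans_lt h
    have hbern := one_add_mul_self_le_rpow_one_add (s := y / x - 1)
      (by linarith [div_nonneg hy hx]) hm
    rw [add_sub_cancel, div_rpow hy hx, le_div_iff₀ (rpow_pos_of_pos hx₀ m)] at hbern
    have hsplit : x ^ m = x ^ (m - 1) * x := by rw [rpow_sub_one hx₀.ne']; field_simp
    have htangent : (1 + m * (y / x - 1)) * x ^ m = x ^ m - m * x ^ (m - 1) * (x - y) := by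
      rw [hsplit]; field_simp; ring
    have hmono : m * x ^ (m - 1) * (x - y) ≤ m * A ^ (m - 1) * (x - y) := by gcongr
    rw [max_eq_left (sub_nonneg.2 h.le)]
    linarith

/-- `F` is, at the point `(s, t)`, a subsolution of `F_t = (F_ss - F_s) ^ m` whose density
`F_ss - F_s` lies in `[0, A]`. -/
def IsLogSubsolutionAt (m A : ℝ) (F : ℝ → ℝ → ℝ) (s t : ℝ) : Prop :=
  ∃ Ft Fs, ∃ L ∈ Icc 0 A, HasLogJetAt F Ft Fs L s t ∧ Ft ≤ L ^ m

/-- `G` is, at the point `(s, t)`, a supersolution of `G_t = (G_ss - G_s) ^ m` with nonnegative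
density `G_ss - G_s`. -/
def IsLogSupersolutionAt (m : ℝ) (G : ℝ → ℝ → ℝ) (s t : ℝ) : Prop :=
  ∃ Gt Gs L, 0 ≤ L ∧ HasLogJetAt G Gt Gs L s t ∧ L ^ m ≤ Gt

theorem le_of_isLogSubsolutionAt_of_isLogSupersolutionAt {m T A C : ℝ} (hm : 1 ≤ m) (hA : 0 ≤ A)
    {F G : ℝ → ℝ → ℝ}
    (hF : ContinuousOn (fun p : ℝ × ℝ => F p.1 p.2) (univ ×ˢ Ioi 0))
    (hG : ContinuousOn (fun p : ℝ × ℝ => G p.1 p.2) (univ ×ˢ Ioi 0))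
    (hbd : ∀ s t, 0 < t → t ≤ T → F s t ≤ G s t + C)
    (hstart : ∀ ε > 0, ∀ᶠ t in 𝓝[>] 0, ∀ s, F s t ≤ G s t + ε)
    (hsub : ∀ s t, 0 < t → t ≤ T → G s t < F s t → IsLogSubsolutionAt m A F s t)
    (hsup : ∀ s t, 0 < t → t ≤ T → G s t < F s t → IsLogSupersolutionAt m G s t)
    {s t : ℝ} (ht : 0 < t) (htT : t ≤ T) : F s t ≤ G s t := by
  refine sub_nonpos.1 (nonpos_of_time_le_max_log_laplacian (D := fun s t => F s t - G s t)
    (A := m * A ^ (m - 1)) (by positivity) (hF.sub hG)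
    (fun s t ht htT => sub_le_iff_le_add'.2 (hbd s t ht htT))
    (fun ε hε => (hstart ε hε).mono fun t h s => sub_le_iff_le_add'.2 (h s)) ?_ ht htT)
  intro s t ht htT hpos
  obtain ⟨Ft, Fs, x, ⟨hx, hxA⟩, hFjet, hFt⟩ := hsub s t ht htT (sub_pos.1 hpos)
  obtain ⟨Gt, Gs, y, hy, hGjet, hGt⟩ := hsup s t ht htT (sub_pos.1 hpos)
  exact ⟨_, _, _, hFjet.sub hGjet, by
    linarith [rpow_sub_rpow_le_mul_max hm hx hy hxA]⟩

/-! ### Potentials -/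

/-- `Q` is a potential, in the variable `s = log r`, of a solution with density `W`: the density is
`W = Q_ss - Q_s` and `Q_t = W ^ m`. The initial potential `Q₀` decreases from the total mass `M` to
`0`, and is approached from above, at a linear rate. -/
structure IsLogPotential (m M : ℝ) (W Q : ℝ → ℝ → ℝ) (Q₀ : ℝ → ℝ) : Prop where
  density_nonneg : ∀ s t, 0 ≤ W s t
  density_bdd : ∀ T, 0 < T → ∃ C, ∀ s t, 0 < t → t ≤ T → W s t ≤ C
  hasLogJetAt : ∀ s t, 0 < t →
    HasLogJetAt Q (W s t ^ m) (deriv fun σ => Q σ t) (W s t) s t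
  continuousOn : ContinuousOn (fun p : ℝ × ℝ => Q p.1 p.2) (univ ×ˢ Ioi 0)
  initial_le : ∀ s t, 0 < t → Q₀ s ≤ Q s t
  le_initial_add : ∀ T, 0 < T → ∃ C, ∀ s t, 0 < t → t ≤ T → Q s t ≤ Q₀ s + C * t
  initial_nonneg : ∀ s, 0 ≤ Q₀ s
  initial_le_mass : ∀ s, Q₀ s ≤ M
  tendsto_initial_atBot : Tendsto Q₀ atBot (𝓝 M)
  tendsto_initial_atTop : Tendsto Q₀ atTop (𝓝 0)

lemma rpow_add_le_of_weights {m a b x y w v : ℝ} (hm : 1 ≤ m) (ha : 0 ≤ a) (hb : 0 ≤ b)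
    (hx : 0 < x) (hy : 0 < y) (hw : 0 ≤ w) (hv : 0 ≤ v) (hab : a / x + b / y = 1) :
    (a * w + b * v) ^ m ≤ a * (x ^ (m - 1) * w ^ m) + b * (y ^ (m - 1) * v ^ m) := by
  have hconv := (convexOn_rpow hm).2 (mem_Ici.2 (mul_nonneg hx.le hw))
    (mem_Ici.2 (mul_nonneg hy.le hv)) (div_nonneg ha hx.le) (div_nonneg hb hy.le) hab
  have hterm : ∀ {c l u : ℝ}, 0 < l → 0 ≤ u →
      c / l * (l * u) ^ m = c * (l ^ (m - 1) * u ^ m) := fun hl hu => by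
    rw [mul_rpow hl.le hu, rpow_sub_one hl.ne']; field_simp
  simp only [smul_eq_mul] at hconv
  rwa [hterm hx hw, hterm hy hv, ← mul_assoc, ← mul_assoc, div_mul_cancel₀ _ hx.ne',
    div_mul_cancel₀ _ hy.ne'] at hconv

namespace IsLogPotential

variable {m M : ℝ} {W Q : ℝ → ℝ → ℝ} {Q₀ : ℝ → ℝ}

lemma nonneg (h : IsLogPotential m M W Q Q₀) {s t : ℝ} (ht : 0 < t) : 0 ≤ Q s t :=
  (h.initial_nonneg s).trans (h.initial_le s t ht)

lemma mass_nonneg (h : IsLogPotential m M W Q Q₀) : 0 ≤ M :=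
  (h.initial_nonneg 0).trans (h.initial_le_mass 0)

lemma eventually_le_initial_add (h : IsLogPotential m M W Q Q₀) {ε : ℝ} (hε : 0 < ε) :
    ∀ᶠ t in 𝓝[>] 0, ∀ s, Q s t ≤ Q₀ s + ε := by
  obtain ⟨C, hC⟩ := h.le_initial_add 1 one_pos
  have hsmall : ∀ᶠ t in 𝓝[>] (0 : ℝ), C * t < ε := by
    have : Tendsto (fun t => C * t) (𝓝[>] 0) (𝓝 (C * 0)) :=
      (continuous_const_mul C).continuousAt.tendsto.mono_left nhdsWithin_le_nhds
    exact this.eventually_lt_const (by simpa using hε)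
  filter_upwards [hsmall, Ioc_mem_nhdsGT one_pos] with t ht ht₁ s
  linarith [hC s t ht₁.1 ht₁.2]

theorem le_of_supersolution (h : IsLogPotential m M W Q Q₀) (hm : 1 ≤ m) {G : ℝ → ℝ → ℝ}
    (hG : ContinuousOn (fun p : ℝ × ℝ => G p.1 p.2) (univ ×ˢ Ioi 0))
    (hstart : ∀ s t, 0 < t → Q₀ s ≤ G s t)
    (hsup : ∀ s t, 0 < t → IsLogSupersolutionAt m G s t) {s t : ℝ} (ht : 0 < t) :
    Q s t ≤ G s t := by
  obtain ⟨A, hA⟩ := h.density_bdd t ht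
  obtain ⟨C, hC⟩ := h.le_initial_add t ht
  refine le_of_isLogSubsolutionAt_of_isLogSupersolutionAt (T := t) (C := |C| * t) hm
    ((h.density_nonneg 0 t).trans (hA 0 t ht le_rfl)) h.continuousOn hG (fun σ τ hτ hτt => ?_)
    (fun ε hε => ?_) (fun σ τ hτ hτt _ => ⟨_, _, _, ⟨h.density_nonneg σ τ, hA σ τ hτ hτt⟩,
      h.hasLogJetAt σ τ hτ, le_rfl⟩) (fun σ τ hτ _ _ => hsup σ τ hτ) ht le_rfl
  · have hCt : C * τ ≤ |C| * t := mul_le_mul (le_abs_self C) hτt hτ.le (abs_nonneg C)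
    linarith [hC σ τ hτ hτt, hstart σ τ hτ]
  · filter_upwards [h.eventually_le_initial_add hε, self_mem_nhdsWithin] with τ hQ hτ σ
    linarith [hQ σ, hstart σ τ hτ]

lemma le_mass (h : IsLogPotential m M W Q Q₀) (hm : 1 ≤ m) {s t : ℝ} (ht : 0 < t) :
    Q s t ≤ M := by
  refine h.le_of_supersolution hm (G := fun _ _ => M) continuousOn_const
    (fun s _ _ => h.initial_le_mass s) (fun s t _ => ?_) ht
  refine ⟨0, fun _ => 0, 0, le_rfl, ⟨hasDerivAt_const _ _, .of_forall fun σ => hasDerivAt_const _ _,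
    by simpa using hasDerivAt_const s (0 : ℝ)⟩, ?_⟩
  rw [zero_rpow (by linarith)]

/-- Convexity of `w ↦ w ^ m`, with the weights `a / x` and `b / y`, makes the combination of two
rescaled potentials a supersolution. -/
lemma combination_le (h : IsLogPotential m M W Q Q₀) (hm : 1 ≤ m) {a b x y : ℝ}
    (ha : 0 ≤ a) (hb : 0 ≤ b) (hab : a + b = 1) (hx : 0 < x) (hy : 0 < y)
    (hxy : a / x + b / y = 1) {s t : ℝ} (ht : 0 < t) :
    Q s t ≤ a * Q s (x ^ (m - 1) * t) + b * Q s (y ^ (m - 1) * t) := by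
  have hcont : ∀ {c : ℝ}, 0 < c →
      ContinuousOn (fun p : ℝ × ℝ => Q p.1 (c * p.2)) (univ ×ˢ Ioi 0) := fun {c} hc =>
    h.continuousOn.comp (f := fun p : ℝ × ℝ => (p.1, c * p.2)) (by fun_prop)
      fun p hp => ⟨mem_univ _, mul_pos hc hp.2⟩
  have hx' : 0 < x ^ (m - 1) := rpow_pos_of_pos hx _
  have hy' : 0 < y ^ (m - 1) := rpow_pos_of_pos hy _
  refine h.le_of_supersolution hm
    (G := fun s t => a * Q s (x ^ (m - 1) * t) + b * Q s (y ^ (m - 1) * t))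
    (((hcont hx').const_smul a).add ((hcont hy').const_smul b)) (fun s t ht => ?_)
    (fun s t ht => ?_) ht
  · calc Q₀ s = a * Q₀ s + b * Q₀ s := by rw [← add_mul, hab, one_mul]
      _ ≤ _ := by gcongr <;> exact h.initial_le _ _ (by positivity)
  · have hw := h.density_nonneg s (x ^ (m - 1) * t)
    have hv := h.density_nonneg s (y ^ (m - 1) * t)
    exact ⟨_, _, _, by positivity,
      ((h.hasLogJetAt s _ (mul_pos hx' ht)).comp_const_mul_time.const_mul a).add
        ((h.hasLogJetAt s _ (mul_pos hy' ht)).comp_const_mul_time.const_mul b),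
      rpow_add_le_of_weights hm ha hb hx hy hw hv hxy⟩

theorem convexOn_time (h : IsLogPotential m M W Q Q₀) (hm : 1 ≤ m) {s t : ℝ} (ht : 0 < t) :
    ConvexOn ℝ (Ioi 0) fun c : ℝ => Q s (t * c ^ (-(m - 1))) := by
  refine ⟨convex_Ioi 0, fun x hx y hy a b ha hb hab => ?_⟩
  have hc : 0 < a • x + b • y := convex_Ioi 0 hx hy ha hb hab
  rw [mem_Ioi] at hx hy
  simp only [smul_eq_mul] at hc ⊢
  set c := a * x + b * y with hc_def
  have hscale : ∀ {z : ℝ}, 0 < z →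
      (c / z) ^ (m - 1) * (t * c ^ (-(m - 1))) = t * z ^ (-(m - 1)) := fun {z} hz => by
    rw [div_rpow hc.le hz.le, rpow_neg hc.le, rpow_neg hz.le]
    field_simp
  have hweights : a / (c / x) + b / (c / y) = 1 := by
    field_simp
    exact hc_def.symm
  have := h.combination_le hm ha hb hab (div_pos hc hx) (div_pos hc hy) hweights (s := s)
    (mul_pos ht (rpow_pos_of_pos hc (-(m - 1))))
  rwa [hscale hx, hscale hy] at this

end IsLogPotential

/-! ### The upper barrier: smoothed travelling fronts -/

/-- The smooth approximation `log (1 + exp x)` of `max x 0`, a primitive of `Real.sigmoid`. -/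
def softplus (x : ℝ) : ℝ := log (1 + exp x)

lemma continuous_softplus : Continuous softplus := by
  unfold softplus
  exact Continuous.log (by fun_prop) fun x => by positivity

lemma softplus_nonneg (x : ℝ) : 0 ≤ softplus x :=
  log_nonneg (by linarith [exp_pos x])

lemma le_softplus (x : ℝ) : x ≤ softplus x :=
  (le_log_iff_exp_le (by positivity)).2 (by linarith)

lemma softplus_le (x : ℝ) : softplus x ≤ log 2 + max x 0 := by
  have hone : 1 ≤ exp (max x 0) := one_le_exp (le_max_right _ _)
  have hexp : exp x ≤ exp (max x 0) := exp_le_exp.2 (le_max_left _ _)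
  calc softplus x ≤ log (2 * exp (max x 0)) := log_le_log (by positivity) (by linarith)
    _ = log 2 + max x 0 := by rw [log_mul two_ne_zero (exp_pos _).ne', log_exp]

lemma hasDerivAt_softplus (x : ℝ) : HasDerivAt softplus (sigmoid x) x := by
  refine (((Real.hasDerivAt_exp x).const_add 1).log (by positivity)).congr_deriv ?_
  rw [sigmoid_def, exp_neg]
  field_simp
  ring

/-- A smoothed travelling front of slope `-p` moving with speed `p ^ (m - 1)`. The smoothing rate
`(m - 1) / m` is the one for which `rpow_mul_one_add_le` holds. -/
def frontBarrier (m p s₀ s t : ℝ) : ℝ :=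
  p / ((m - 1) / m) * softplus ((m - 1) / m * (s₀ + p ^ (m - 1) * t - s))

lemma continuous_frontBarrier (m p s₀ : ℝ) :
    Continuous fun x : ℝ × ℝ => frontBarrier m p s₀ x.1 x.2 :=
  continuous_const.mul (continuous_softplus.comp (by fun_prop))

lemma rpow_mul_one_add_le {m z : ℝ} (hm : 1 ≤ m) (hz : 0 < z) (hz₁ : z ≤ 1) :
    (z * (1 + (m - 1) / m * (1 - z))) ^ m ≤ z := by
  set a := (m - 1) / m with ha
  have ha₀ : 0 ≤ a := div_nonneg (by linarith) (by linarith)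
  have hexp : 1 + a * (1 - z) ≤ z ^ (-a) := by
    rw [rpow_def_of_pos hz]
    nlinarith [add_one_le_exp (log z * -a), log_le_sub_one_of_pos hz]
  have hroot : z * (1 + a * (1 - z)) ≤ z ^ (1 / m) := by
    calc z * (1 + a * (1 - z)) ≤ z * z ^ (-a) := by gcongr
      _ = z ^ (1 + -a) := by rw [rpow_add hz, rpow_one]
      _ = z ^ (1 / m) := by congr 1; rw [ha]; field_simp; ring
  have hnonneg : 0 ≤ z * (1 + a * (1 - z)) :=
    mul_nonneg hz.le (add_nonneg zero_le_one (mul_nonneg ha₀ (sub_nonneg.2 hz₁)))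
  calc (z * (1 + a * (1 - z))) ^ m ≤ (z ^ (1 / m)) ^ m :=
        rpow_le_rpow hnonneg hroot (by linarith)
    _ = z := by rw [← rpow_mul hz.le, one_div_mul_cancel (by linarith), rpow_one]

lemma hasLogJetAt_frontBarrier {m p : ℝ} (hm : 1 < m) (hp : 0 < p) (s₀ s t : ℝ) :
    HasLogJetAt (frontBarrier m p s₀)
      (p ^ m * sigmoid ((m - 1) / m * (s₀ + p ^ (m - 1) * t - s)))
      (fun σ => -(p * sigmoid ((m - 1) / m * (s₀ + p ^ (m - 1) * t - σ))))
      (p * (sigmoid ((m - 1) / m * (s₀ + p ^ (m - 1) * t - s)) *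
        (1 + (m - 1) / m * (1 - sigmoid ((m - 1) / m * (s₀ + p ^ (m - 1) * t - s)))))) s t := by
  set a := (m - 1) / m
  have ha : 0 < a := div_pos (by linarith) (by linarith)
  have hpm : p ^ m = p * p ^ (m - 1) := by rw [rpow_sub_one hp.ne']; field_simp
  set V := p ^ (m - 1)
  have hspace : ∀ σ, HasDerivAt (fun σ => a * (s₀ + V * t - σ)) (-a) σ := fun σ =>
    (((hasDerivAt_id σ).const_sub (s₀ + V * t)).const_mul a).congr_deriv (by ring)
  have htime : HasDerivAt (fun τ => a * (s₀ + V * τ - s)) (a * V) t :=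
    (((((hasDerivAt_id t).const_mul V).const_add s₀).sub_const s).const_mul a).congr_deriv
      (by ring)
  refine ⟨?_, .of_forall fun σ => ?_, ?_⟩
  · refine (((hasDerivAt_softplus _).comp t htime).const_mul (p / a)).congr_deriv ?_
    rw [hpm]; field_simp
  · refine (((hasDerivAt_softplus _).comp σ (hspace σ)).const_mul (p / a)).congr_deriv ?_
    field_simp
  · exact (((hasDerivAt_sigmoid _).comp s (hspace s)).const_mul p).neg.congr_deriv (by ring)

lemma isLogSupersolutionAt_const_add_frontBarrier {m p : ℝ} (hm : 1 < m) (hp : 0 < p)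
    (ε s₀ s t : ℝ) :
    IsLogSupersolutionAt m (fun s t => ε + frontBarrier m p s₀ s t) s t := by
  have hjet := (hasLogJetAt_frontBarrier hm hp s₀ s t).const_add ε
  set z := sigmoid ((m - 1) / m * (s₀ + p ^ (m - 1) * t - s))
  have hz : 0 < z := sigmoid_pos _
  have hz₁ : z ≤ 1 := sigmoid_le_one _
  have hL : 0 ≤ z * (1 + (m - 1) / m * (1 - z)) :=
    mul_nonneg hz.le (add_nonneg zero_le_one
      (mul_nonneg (div_nonneg (by linarith) (by linarith)) (sub_nonneg.2 hz₁)))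
  refine ⟨_, _, _, mul_nonneg hp.le hL, hjet, ?_⟩
  rw [mul_rpow hp.le hL]
  gcongr
  exact rpow_mul_one_add_le hm.le hz hz₁

lemma frontBarrier_nonneg {m p : ℝ} (hm : 1 < m) (hp : 0 < p) (s₀ s t : ℝ) :
    0 ≤ frontBarrier m p s₀ s t :=
  mul_nonneg (div_nonneg hp.le (div_nonneg (by linarith) (by linarith))) (softplus_nonneg _)

lemma le_frontBarrier {m p : ℝ} (hm : 1 < m) (hp : 0 < p) (s₀ s t : ℝ) :
    p * (s₀ + p ^ (m - 1) * t - s) ≤ frontBarrier m p s₀ s t := by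
  have ha : 0 < (m - 1) / m := div_pos (by linarith) (by linarith)
  calc p * (s₀ + p ^ (m - 1) * t - s)
      = p / ((m - 1) / m) * ((m - 1) / m * (s₀ + p ^ (m - 1) * t - s)) := by
        rw [← mul_assoc, div_mul_cancel₀ _ ha.ne']
    _ ≤ _ := mul_le_mul_of_nonneg_left (le_softplus _) (div_pos hp ha).le

lemma frontBarrier_le {m p : ℝ} (hm : 1 < m) (hp : 0 < p) (s₀ s t : ℝ) :
    frontBarrier m p s₀ s t ≤
      p / ((m - 1) / m) * log 2 + max (p * (s₀ + p ^ (m - 1) * t - s)) 0 := by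
  have ha : 0 < (m - 1) / m := div_pos (by linarith) (by linarith)
  refine (mul_le_mul_of_nonneg_left (softplus_le _) (div_pos hp ha).le).trans_eq ?_
  rw [mul_add, mul_max_of_nonneg _ _ (div_pos hp ha).le, mul_zero, ← mul_assoc (p / _),
    div_mul_cancel₀ _ ha.ne']

theorem IsLogPotential.le_add_max {m M : ℝ} {W Q : ℝ → ℝ → ℝ} {Q₀ : ℝ → ℝ}
    (h : IsLogPotential m M W Q Q₀) (hm : 1 < m) {p ε s₁ : ℝ} (hp : 0 < p) (hε : 0 ≤ ε)
    (hs₁ : ∀ s, s₁ ≤ s → Q₀ s ≤ ε) {s t : ℝ} (ht : 0 < t) :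
    Q s t ≤ ε + p / ((m - 1) / m) * log 2 + max (M + p * s₁ + p ^ m * t - p * s) 0 := by
  have hslope : ∀ s t, p * (s₁ + M / p + p ^ (m - 1) * t - s)
      = M + p * s₁ + p ^ m * t - p * s := fun s t => by
    rw [rpow_sub_one hp.ne']; field_simp; ring
  have hle : Q s t ≤ ε + frontBarrier m p (s₁ + M / p) s t := by
    refine h.le_of_supersolution hm.le (G := fun s t => ε + frontBarrier m p (s₁ + M / p) s t)
      (continuous_const.add (continuous_frontBarrier m p _)).continuousOn (fun s t ht => ?_)
      (fun s t _ => isLogSupersolutionAt_const_add_frontBarrier hm hp ε _ s t) ht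
    rcases le_or_gt s₁ s with hs | hs
    · linarith [hs₁ s hs, frontBarrier_nonneg hm hp (s₁ + M / p) s t]
    · have hfront := le_frontBarrier hm hp (s₁ + M / p) s t
      rw [hslope] at hfront
      have hpt : 0 < p ^ m * t := mul_pos (rpow_pos_of_pos hp _) ht
      linarith [h.initial_le_mass s, mul_lt_mul_of_pos_left hs hp]
  have := frontBarrier_le hm hp (s₁ + M / p) s t
  rw [hslope] at this
  linarith

/-! ### The lower barrier: the rarefaction wave -/

/-- The self-similar rarefaction wave of the Hamilton–Jacobi equation `R_t + R_s ^ m = 0`, which is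
what remains of `-Q_t = -(Q_ss - Q_s) ^ m` at large scales. In the similarity variable
`y = s * t ^ (-1/m)` it is the mass of the limiting profile on `[0, y]`. -/
def rarefaction (m s t : ℝ) : ℝ :=
  (m - 1) * (t * (max s 0 / (m * t)) ^ (1 / (m - 1) + 1))

lemma rarefaction_nonneg {m : ℝ} (hm : 1 < m) (s : ℝ) {t : ℝ} (ht : 0 < t) :
    0 ≤ rarefaction m s t := by
  have := sub_pos.2 hm
  unfold rarefaction
  positivity

lemma rarefaction_of_nonpos {m s : ℝ} (hm : 1 < m) (hs : s ≤ 0) (t : ℝ) :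
    rarefaction m s t = 0 := by
  have := sub_pos.2 hm
  rw [rarefaction, max_eq_right hs, zero_div, zero_rpow (by positivity)]
  simp

lemma rarefaction_of_pos {m s t : ℝ} (hm : 1 < m) (hs : 0 < s) (ht : 0 < t) :
    rarefaction m s t = (m - 1) * (s / m) * (s / (m * t)) ^ (1 / (m - 1)) := by
  rw [rarefaction, max_eq_left hs.le, rpow_add_one (by positivity)]
  field_simp

lemma monotone_rarefaction {m : ℝ} (hm : 1 < m) {t : ℝ} (ht : 0 < t) :
    Monotone fun s => rarefaction m s t := fun s s' h => by
  have := sub_pos.2 hm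
  simp only [rarefaction]
  gcongr

lemma continuousOn_rarefaction {m : ℝ} (hm : 1 < m) :
    ContinuousOn (fun p : ℝ × ℝ => rarefaction m p.1 p.2) (univ ×ˢ Ioi 0) := by
  have := sub_pos.2 hm
  refine continuousOn_const.mul (continuousOn_snd.mul (ContinuousOn.rpow_const ?_
    fun _ _ => Or.inr (by positivity)))
  exact ContinuousOn.div (by fun_prop) (by fun_prop) fun p hp =>
    (mul_pos (by linarith) hp.2).ne'

lemma continuous_rarefaction_space {m : ℝ} (hm : 1 < m) {t : ℝ} (ht : 0 < t) :
    Continuous fun s => rarefaction m s t :=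
  (continuousOn_rarefaction hm).comp_continuous (f := fun s => (s, t)) (by fun_prop)
    fun _ => ⟨mem_univ _, ht⟩

lemma tendsto_rarefaction_nhdsGT_zero {m s : ℝ} (hm : 1 < m) (hs : 0 < s) :
    Tendsto (rarefaction m s) (𝓝[>] 0) atTop := by
  have hm₁ := sub_pos.2 hm
  have hm₀ : 0 < m := by linarith
  have hquot : Tendsto (fun t => s / (m * t)) (𝓝[>] 0) atTop := by
    simpa only [← div_div, div_eq_mul_inv (s / m)] using
      tendsto_inv_nhdsGT_zero.const_mul_atTop (div_pos hs hm₀)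
  have hrpow := ((tendsto_rpow_atTop (one_div_pos.2 hm₁)).comp hquot).const_mul_atTop
    (show 0 < (m - 1) * (s / m) by positivity)
  refine hrpow.congr' ?_
  filter_upwards [self_mem_nhdsWithin] with t ht
  exact (rarefaction_of_pos hm hs ht).symm

lemma rarefaction_mul_rpow {m c : ℝ} (hm : 1 < m) (hc : 0 < c) (s : ℝ) {t : ℝ} (ht : 0 < t) :
    rarefaction m (s * c ^ (1 / m)) (t * c) = rarefaction m s t := by
  have hm₁ := sub_pos.2 hm
  have hc' : 0 < c ^ (1 / m) := rpow_pos_of_pos hc _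
  have hmax : max (s * c ^ (1 / m)) 0 / (m * (t * c)) = max s 0 / (m * t) * c ^ (1 / m - 1) := by
    rw [rpow_sub_one hc.ne', show max (s * c ^ (1 / m)) 0 = max s 0 * c ^ (1 / m) by
      rw [max_mul_of_nonneg _ _ hc'.le, zero_mul]]
    field_simp
  have hexp : (1 / m - 1) * (1 / (m - 1) + 1) = -1 := by field_simp; ring
  rw [rarefaction, rarefaction, hmax, mul_rpow (by positivity) (by positivity), ← rpow_mul hc.le,
    hexp, rpow_neg_one]
  field_simp

lemma rarefaction_mul_rpow_time {m c : ℝ} (hm : 1 < m) (hc : 0 < c) (s : ℝ) {t : ℝ}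
    (ht : 0 < t) : rarefaction m s (t * c ^ (-(m - 1))) = c * rarefaction m s t := by
  have hm₁ := sub_pos.2 hm
  have hexp : (m - 1) * (1 / (m - 1) + 1) = m - 1 + 1 := by field_simp; ring
  have hcm : 0 < c ^ (m - 1) := rpow_pos_of_pos hc _
  have hquot : max s 0 / (m * (t * (c ^ (m - 1))⁻¹)) = max s 0 / (m * t) * c ^ (m - 1) := by
    field_simp
  rw [rarefaction, rarefaction, rpow_neg hc.le, hquot, mul_rpow (by positivity) hcm.le,
    ← rpow_mul hc.le, hexp, rpow_add_one hc.ne']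
  field_simp

lemma hasDerivAt_rarefaction_space {m s t : ℝ} (hm : 1 < m) (hs : 0 < s) (ht : 0 < t) :
    HasDerivAt (fun σ => rarefaction m σ t) ((s / (m * t)) ^ (1 / (m - 1))) s := by
  have hm₁ := sub_pos.2 hm
  have hv : 0 < s / (m * t) := by positivity
  have h := ((((hasDerivAt_id s).div_const (m * t)).rpow_const (p := 1 / (m - 1) + 1)
    (Or.inl hv.ne')).const_mul t).const_mul (m - 1)
  refine (h.congr_of_eventuallyEq ?_).congr_deriv ?_
  · filter_upwards [lt_mem_nhds hs] with σ hσ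
    rw [rarefaction, max_eq_left hσ.le, id]
  · rw [add_sub_cancel_right, id]; field_simp; ring

lemma hasDerivAt_rarefaction_time {m s t : ℝ} (hm : 1 < m) (hs : 0 < s) (ht : 0 < t) :
    HasDerivAt (rarefaction m s) (-(s / (m * t)) ^ (1 / (m - 1) + 1)) t := by
  have hm₁ := sub_pos.2 hm
  have hv : 0 < s / (m * t) := by positivity
  have hquot : HasDerivAt (fun τ => s / (m * τ)) (-(s / (m * t) / t)) t := by
    refine ((hasDerivAt_const t s).div ((hasDerivAt_id t).const_mul m) (by positivity)).congr_deriv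
      ?_
    simp only [id]; field_simp; ring
  have h := (((hasDerivAt_id t).mul (hquot.rpow_const (p := 1 / (m - 1) + 1)
    (Or.inl hv.ne'))).const_mul (m - 1))
  refine (h.congr_of_eventuallyEq (.of_forall fun τ => ?_)).congr_deriv ?_
  · rw [rarefaction, max_eq_left hs.le]; rfl
  · rw [add_sub_cancel_right, rpow_add_one hv.ne', id]; field_simp; ring

lemma hasLogJetAt_rarefaction {m s t : ℝ} (hm : 1 < m) (hs : 0 < s) (ht : 0 < t) :
    HasLogJetAt (rarefaction m) (-(s / (m * t)) ^ (1 / (m - 1) + 1))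
      (fun σ => (σ / (m * t)) ^ (1 / (m - 1)))
      ((s / (m * t)) ^ (1 / (m - 1)) * (1 / ((m - 1) * s) - 1)) s t where
  time := hasDerivAt_rarefaction_time hm hs ht
  space := (lt_mem_nhds hs).mono fun σ hσ => hasDerivAt_rarefaction_space hm hσ ht
  space₂ := by
    have hm₁ := sub_pos.2 hm
    have hv : 0 < s / (m * t) := by positivity
    refine (((hasDerivAt_id s).div_const (m * t)).rpow_const (p := 1 / (m - 1))
      (Or.inl hv.ne')).congr_deriv ?_
    rw [id, rpow_sub_one hv.ne']; field_simp; ring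

lemma eventually_rpow_mul_one_sub_rpow_ge {m b : ℝ} (hm : 1 < m) (hb : 1 < b) :
    ∀ᶠ S in atTop, 0 ≤ 1 - 1 / ((m - 1) * S) ∧
      1 ≤ b ^ (m - 1) * (1 - 1 / ((m - 1) * S)) ^ m := by
  have hm₁ := sub_pos.2 hm
  have hlim : Tendsto (fun S : ℝ => 1 - 1 / ((m - 1) * S)) atTop (𝓝 1) := by
    simpa using ((tendsto_const_nhds (x := (1 : ℝ))).div_atTop
      (tendsto_id.const_mul_atTop hm₁)).const_sub 1
  have hlim' : Tendsto (fun S : ℝ => b ^ (m - 1) * (1 - 1 / ((m - 1) * S)) ^ m) atTop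
      (𝓝 (b ^ (m - 1))) := by
    simpa using (hlim.rpow_const (Or.inr (by linarith : 0 ≤ m))).const_mul (b ^ (m - 1))
  exact (hlim.eventually_const_le one_pos).and
    (hlim'.eventually_const_le (one_lt_rpow hb hm₁))

lemma isLogSubsolutionAt_sub_mul_rarefaction {m b c K S H s t : ℝ} (hm : 1 < m) (hb : 0 < b)
    (hS : 0 < S) (hκ : 0 ≤ 1 - 1 / ((m - 1) * S))
    (hbS : 1 ≤ b ^ (m - 1) * (1 - 1 / ((m - 1) * S)) ^ m) (hs : S ≤ s + c) (ht : 0 < t)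
    (hH : ((s + c) / (m * t)) ^ (1 / (m - 1)) ≤ H) :
    IsLogSubsolutionAt m (b * H) (fun s t => K - b * rarefaction m (s + c) t) s t := by
  have hm₁ := sub_pos.2 hm
  have hsc : 0 < s + c := hS.trans_le hs
  have hjet := (((hasLogJetAt_rarefaction hm hsc ht).comp_add_const_space).const_mul b).const_sub K
  have hκ' : 1 - 1 / ((m - 1) * S) ≤ 1 - 1 / ((m - 1) * (s + c)) := by gcongr
  have hκ₁ : 1 - 1 / ((m - 1) * (s + c)) ≤ 1 := sub_le_self _ (by positivity)
  set κ := 1 - 1 / ((m - 1) * (s + c)) with hκ_def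
  have hv : 0 ≤ (s + c) / (m * t) := by positivity
  set v := (s + c) / (m * t)
  have hvn : 0 ≤ v ^ (1 / (m - 1)) := rpow_nonneg hv _
  have hκ₀ : 0 ≤ κ := hκ.trans hκ'
  refine ⟨_, _, b * (v ^ (1 / (m - 1)) * κ), ⟨by positivity, ?_⟩,
    by convert hjet using 1; rw [hκ_def]; ring, ?_⟩
  · have := mul_le_mul hH hκ₁ hκ₀ (hvn.trans hH)
    rw [mul_one] at this
    gcongr
  · have hvm : (v ^ (1 / (m - 1))) ^ m = v ^ (1 / (m - 1) + 1) := by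
      rw [← rpow_mul hv]; congr 1; field_simp; ring
    have hκm : 1 ≤ b ^ (m - 1) * κ ^ m := hbS.trans (by gcongr)
    calc -(b * -v ^ (1 / (m - 1) + 1)) = b * v ^ (1 / (m - 1) + 1) * 1 := by ring
      _ ≤ b * v ^ (1 / (m - 1) + 1) * (b ^ (m - 1) * κ ^ m) := by gcongr
      _ = (b * (v ^ (1 / (m - 1)) * κ)) ^ m := by
        rw [mul_rpow hb.le (by positivity), mul_rpow hvn hκ₀, hvm, rpow_sub_one hb.ne']
        field_simp

lemma rpow_le_of_rarefaction_le {m M S s t : ℝ} (hm : 1 < m) (hS : 0 < S) (hs : S ≤ s)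
    (ht : 0 < t) (hM : rarefaction m s t ≤ M) :
    (s / (m * t)) ^ (1 / (m - 1)) ≤ m * M / ((m - 1) * S) := by
  have hm₁ := sub_pos.2 hm
  have hm₀ : 0 < m := by linarith
  have hs₀ : 0 < s := hS.trans_le hs
  rw [rarefaction_of_pos hm hs₀ ht] at hM
  rw [le_div_iff₀ (by positivity)]
  calc (s / (m * t)) ^ (1 / (m - 1)) * ((m - 1) * S)
      ≤ (s / (m * t)) ^ (1 / (m - 1)) * ((m - 1) * s) := by gcongr
    _ = m * ((m - 1) * (s / m) * (s / (m * t)) ^ (1 / (m - 1))) := by field_simp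
    _ ≤ m * M := by gcongr

theorem IsLogPotential.sub_rarefaction_le {m M : ℝ} {W Q : ℝ → ℝ → ℝ} {Q₀ : ℝ → ℝ}
    (h : IsLogPotential m M W Q Q₀) (hm : 1 < m) {b c K S : ℝ} (hb : 1 ≤ b) (hKM : K ≤ M)
    (hS : 0 < S) (hκ : 0 ≤ 1 - 1 / ((m - 1) * S))
    (hbS : 1 ≤ b ^ (m - 1) * (1 - 1 / ((m - 1) * S)) ^ m)
    (hK : ∀ s, s + c ≤ S → K ≤ Q₀ s) {s t : ℝ} (ht : 0 < t) :
    K - b * rarefaction m (s + c) t ≤ Q s t := by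
  have hM := h.mass_nonneg
  have hbR : ∀ s t, 0 < t → rarefaction m (s + c) t ≤ b * rarefaction m (s + c) t :=
    fun s t ht => le_mul_of_one_le_left (rarefaction_nonneg hm _ ht) hb
  have hfar : ∀ s t, 0 < t → s + c ≤ S → K - b * rarefaction m (s + c) t ≤ Q s t :=
    fun s t ht hs => by
      linarith [hbR s t ht, rarefaction_nonneg hm (s + c) ht, hK s hs, h.initial_le s t ht]
  refine le_of_isLogSubsolutionAt_of_isLogSupersolutionAt (T := t) (C := M)
    (A := b * (m * M / ((m - 1) * S))) (F := fun s t => K - b * rarefaction m (s + c) t) hm.le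
    (by positivity) ?_ h.continuousOn (fun s t ht _ => ?_) (fun ε hε => ?_) (fun s t ht _ hlt => ?_)
    (fun s t ht _ _ => ⟨_, _, _, h.density_nonneg s t, h.hasLogJetAt s t ht, le_rfl⟩) ht le_rfl
  · exact continuousOn_const.sub (((continuousOn_rarefaction hm).comp (f := fun p : ℝ × ℝ =>
      (p.1 + c, p.2)) (by fun_prop) fun p hp => ⟨mem_univ _, hp.2⟩).const_smul b)
  · linarith [hbR s t ht, rarefaction_nonneg hm (s + c) ht, h.nonneg (s := s) ht]
  · filter_upwards [(tendsto_rarefaction_nhdsGT_zero hm hS).eventually_ge_atTop K,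
      self_mem_nhdsWithin] with t htK ht s
    rcases le_total (s + c) S with hs | hs
    · linarith [hfar s t ht hs]
    · linarith [hbR s t ht, monotone_rarefaction hm ht hs, h.nonneg (s := s) ht]
  · have hs : S < s + c := by
      by_contra! hs
      exact hlt.not_ge (hfar s t ht hs)
    exact isLogSubsolutionAt_sub_mul_rarefaction hm (by linarith) hS hκ hbS hs.le ht
      (rpow_le_of_rarefaction_le hm hS hs.le ht
        (by linarith [hbR s t ht, h.nonneg (s := s) ht]))

/-! ### The self-similar limit of a potential -/

lemma legendre_rarefaction {m y τ : ℝ} (hm : 1 < m) (hy : 0 < y) (hτ : 0 < τ) :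
    ((y / (m * τ)) ^ (1 / (m - 1))) ^ m * τ - (y / (m * τ)) ^ (1 / (m - 1)) * y =
      -rarefaction m y τ := by
  have hm₁ := sub_pos.2 hm
  have hv : 0 < y / (m * τ) := by positivity
  have hexp : 1 / (m - 1) * m = 1 / (m - 1) + 1 := by field_simp; ring
  rw [rarefaction_of_pos hm hy hτ, ← rpow_mul hv.le, hexp, rpow_add_one hv.ne']
  field_simp
  ring

lemma tendsto_rpow_neg_inv_atTop {m : ℝ} (hm : 0 < m) :
    Tendsto (fun t : ℝ => t ^ (-(1 / m))) atTop (𝓝 0) :=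
  tendsto_rpow_neg_atTop (one_div_pos.2 hm)

lemma rpow_neg_inv_mul_rpow_inv {m t : ℝ} (ht : 0 < t) : t ^ (-(1 / m)) * t ^ (1 / m) = 1 := by
  rw [← rpow_add ht, neg_add_cancel, rpow_zero]

namespace IsLogPotential

variable {m M : ℝ} {W Q : ℝ → ℝ → ℝ} {Q₀ : ℝ → ℝ}

lemma eventually_lt_rescaled (h : IsLogPotential m M W Q Q₀) (hm : 1 < m) {y τ a : ℝ}
    (hτ : 0 < τ) (ha : a < M - rarefaction m y τ) :
    ∀ᶠ t : ℝ in atTop, a < Q (y * t ^ (1 / m)) (τ * t) := by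
  have hm₀ : 0 < m := by linarith
  obtain ⟨ε, hε, hεa⟩ : ∃ ε > 0, a < M - ε - (1 + ε) * rarefaction m y τ := by
    have hcont : Tendsto (fun ε => M - ε - (1 + ε) * rarefaction m y τ) (𝓝[>] 0)
        (𝓝 (M - 0 - (1 + 0) * rarefaction m y τ)) :=
      Tendsto.mono_left (Continuous.tendsto (by fun_prop) 0) nhdsWithin_le_nhds
    rw [sub_zero, add_zero, one_mul] at hcont
    exact ((eventually_mem_nhdsWithin (s := Ioi 0)).and (hcont.eventually_const_lt ha)).exists
  obtain ⟨z, hz⟩ := eventually_atBot.1 (h.tendsto_initial_atBot.eventually_const_le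
    (sub_lt_self M hε))
  obtain ⟨S, ⟨hκ, hbS⟩, hS⟩ := ((eventually_rpow_mul_one_sub_rpow_ge hm
    (lt_add_of_pos_right 1 hε)).and (eventually_gt_atTop 0)).exists
  have hlim : Tendsto (fun t : ℝ => M - ε -
      (1 + ε) * rarefaction m (y + (S - z) * t ^ (-(1 / m))) τ) atTop
      (𝓝 (M - ε - (1 + ε) * rarefaction m y τ)) := by
    have hshift := ((tendsto_rpow_neg_inv_atTop hm₀).const_mul (S - z)).const_add y
    rw [mul_zero, add_zero] at hshift
    exact (((continuous_rarefaction_space hm hτ).tendsto y).comp hshift).const_mul _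
      |>.const_sub _
  filter_upwards [hlim.eventually_const_lt hεa, eventually_gt_atTop 0] with t hat ht
  refine hat.trans_le ?_
  have hlower := h.sub_rarefaction_le hm (c := S - z) (s := y * t ^ (1 / m)) (by linarith)
    (sub_le_self M hε.le) hS hκ hbS (fun s hs => hz s (by linarith)) (mul_pos hτ ht)
  rwa [← rarefaction_mul_rpow hm ht _ hτ, add_mul y, mul_assoc (S - z),
    rpow_neg_inv_mul_rpow_inv ht, mul_one]

lemma eventually_rescaled_lt (h : IsLogPotential m M W Q Q₀) (hm : 1 < m) {y τ a : ℝ}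
    (hτ : 0 < τ) (ha : max (M - rarefaction m y τ) 0 < a) :
    ∀ᶠ t : ℝ in atTop, Q (y * t ^ (1 / m)) (τ * t) < a := by
  have hm₀ : 0 < m := by linarith
  rcases le_or_gt y 0 with hy | hy
  · rw [rarefaction_of_nonpos hm hy, sub_zero] at ha
    filter_upwards [eventually_gt_atTop 0] with t ht
    exact (h.le_mass hm.le (mul_pos hτ ht)).trans_lt ((le_max_left _ _).trans_lt ha)
  set q := (y / (m * τ)) ^ (1 / (m - 1))
  have hq : 0 < q := rpow_pos_of_pos (by positivity) _
  obtain ⟨ε, hε, hεa⟩ := exists_between (sub_pos.2 ha)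
  obtain ⟨s₁, hs₁⟩ := eventually_atTop.1 (h.tendsto_initial_atTop.eventually_le_const hε)
  have hlim : Tendsto (fun t : ℝ => ε + q * t ^ (-(1 / m)) / ((m - 1) / m) * log 2 +
      max (M + q * t ^ (-(1 / m)) * s₁ - rarefaction m y τ) 0) atTop
      (𝓝 (ε + max (M - rarefaction m y τ) 0)) := by
    have hp : Tendsto (fun t : ℝ => q * t ^ (-(1 / m))) atTop (𝓝 0) := by
      simpa using (tendsto_rpow_neg_inv_atTop hm₀).const_mul q
    have hcont : Continuous fun p => ε + p / ((m - 1) / m) * log 2 +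
      max (M + p * s₁ - rarefaction m y τ) 0 := by fun_prop
    simpa [Function.comp_def] using (hcont.tendsto 0).comp hp
  filter_upwards [hlim.eventually_lt_const (lt_sub_iff_add_lt.1 hεa), eventually_gt_atTop 0]
    with t hat ht
  refine lt_of_le_of_lt ?_ hat
  have hupper := h.le_add_max hm (s := y * t ^ (1 / m)) (mul_pos hq (rpow_pos_of_pos ht (-(1 / m))))
    hε.le hs₁ (mul_pos hτ ht)
  have hpow : (q * t ^ (-(1 / m))) ^ m * (τ * t) = q ^ m * τ := by
    rw [mul_rpow hq.le (by positivity), ← rpow_mul ht.le, neg_mul, one_div_mul_cancel hm₀.ne',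
      rpow_neg_one]
    field_simp
  have hlin : q * t ^ (-(1 / m)) * (y * t ^ (1 / m)) = q * y := by
    rw [mul_mul_mul_comm, rpow_neg_inv_mul_rpow_inv ht, mul_one]
  rwa [hpow, hlin, add_sub_assoc, legendre_rarefaction hm hy hτ, ← sub_eq_add_neg] at hupper

theorem tendsto_rescaled (h : IsLogPotential m M W Q Q₀) (hm : 1 < m) (y : ℝ) {τ : ℝ}
    (hτ : 0 < τ) :
    Tendsto (fun t : ℝ => Q (y * t ^ (1 / m)) (τ * t)) atTop
      (𝓝 (max (M - rarefaction m y τ) 0)) := by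
  refine tendsto_order.2 ⟨fun a ha => ?_, fun a ha => h.eventually_rescaled_lt hm hτ ha⟩
  rcases lt_max_iff.1 ha with ha | ha
  · exact h.eventually_lt_rescaled hm hτ ha
  · filter_upwards [eventually_gt_atTop 0] with t ht
    exact ha.trans_le (h.nonneg (mul_pos hτ ht))

end IsLogPotential

/-! ### From potentials to densities -/

lemma tendsto_of_convexOn_of_hasDerivAt {ι : Type*} {l : Filter ι} {f : ι → ℝ → ℝ} {g : ℝ → ℝ}
    {S : Set ℝ} {x d' : ℝ} {d : ι → ℝ} (hS : S ∈ 𝓝 x) (hconv : ∀ᶠ i in l, ConvexOn ℝ S (f i))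
    (hlim : ∀ y ∈ S, Tendsto (fun i => f i y) l (𝓝 (g y)))
    (hd : ∀ᶠ i in l, HasDerivAt (f i) (d i) x) (hg : HasDerivAt g d' x) :
    Tendsto d l (𝓝 d') := by
  have hx := mem_of_mem_nhds hS
  have hslope : ∀ y ∈ S, Tendsto (fun i => slope (f i) x y) l (𝓝 (slope g x y)) := fun y hy => by
    simpa only [slope_def_field] using ((hlim y hy).sub (hlim x hx)).div_const (y - x)
  have hgslope := hasDerivAt_iff_tendsto_slope.1 hg
  refine tendsto_order.2 ⟨fun a ha => ?_, fun a ha => ?_⟩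
  · obtain ⟨y, ⟨hay, hyS⟩, hyx⟩ := (((hgslope.mono_left
      (nhdsWithin_mono x fun y (hy : y ∈ Iio x) => hy.ne)).eventually_const_lt ha).and
      (mem_nhdsWithin_of_mem_nhds hS)).and self_mem_nhdsWithin |>.exists
    filter_upwards [(hslope y hyS).eventually_const_lt hay, hconv, hd] with i hi hfi hdi
    exact hi.trans_le (slope_comm (f i) x y ▸ hfi.slope_le_of_hasDerivAt hyS hx hyx hdi)
  · obtain ⟨y, ⟨hay, hyS⟩, hyx⟩ := (((hgslope.mono_left
      (nhdsWithin_mono x fun y (hy : y ∈ Ioi x) => hy.ne')).eventually_lt_const ha).and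
      (mem_nhdsWithin_of_mem_nhds hS)).and self_mem_nhdsWithin |>.exists
    filter_upwards [(hslope y hyS).eventually_lt_const hay, hconv, hd] with i hi hfi hdi
    exact (hfi.le_slope_of_hasDerivAt hx hyS hyx hdi).trans_lt hi

/-- The limiting density in the similarity variable `y = s * t ^ (-1/m)`: a rarefaction wave
cut off at the front `y = k`. -/
def frontProfile (m k y : ℝ) : ℝ :=
  if y < k then (max (y / m) 0) ^ (1 / (m - 1)) else 0

lemma frontProfile_nonneg (m k y : ℝ) : 0 ≤ frontProfile m k y := by
  unfold frontProfile
  split_ifs <;> positivity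

lemma rarefaction_one {m : ℝ} (hm : 0 < m) (y : ℝ) :
    rarefaction m y 1 = (m - 1) * (max (y / m) 0) ^ (1 / (m - 1) + 1) := by
  rw [rarefaction, mul_one, one_mul, max_div_div_right hm.le y 0 |>.symm, zero_div]

lemma strictMonoOn_rarefaction_one {m : ℝ} (hm : 1 < m) :
    StrictMonoOn (fun y => rarefaction m y 1) (Ici 0) := fun y hy z hz hyz => by
  have hm₁ := sub_pos.2 hm
  have hm₀ : 0 < m := by linarith
  rw [mem_Ici] at hy
  simp only [rarefaction_one hm₀, max_eq_left (div_nonneg hy hm₀.le),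
    max_eq_left (div_nonneg (hy.trans hyz.le) hm₀.le)]
  gcongr

lemma hasDerivAt_max_sub_rarefaction {m k y : ℝ} (hm : 1 < m) (hk : 0 < k) (hyk : y ≠ k) :
    HasDerivAt (fun c => max (rarefaction m k 1 - c * rarefaction m y 1) 0)
      (-((m - 1) * frontProfile m k y ^ m)) 1 := by
  have hm₁ := sub_pos.2 hm
  have hm₀ : 0 < m := by linarith
  have hlin : HasDerivAt (fun c => rarefaction m k 1 - c * rarefaction m y 1)
      (-rarefaction m y 1) 1 := by
    simpa using ((hasDerivAt_id (1 : ℝ)).mul_const (rarefaction m y 1)).const_sub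
      (rarefaction m k 1)
  rcases hyk.lt_or_gt with hlt | hgt
  · have hpos : rarefaction m y 1 < rarefaction m k 1 :=
      ((monotone_rarefaction hm one_pos) (le_max_left y 0)).trans_lt
        (strictMonoOn_rarefaction_one hm (le_max_right y 0) hk.le (max_lt hlt hk))
    refine (hlin.congr_of_eventuallyEq ?_).congr_deriv ?_
    · have := hlin.continuousAt.eventually_const_lt (u := 0) (by linarith)
      filter_upwards [this] with c hc
      exact max_eq_left hc.le
    · rw [rarefaction_one hm₀, frontProfile, if_pos hlt, ← rpow_mul (le_max_right _ _)]
      congr 3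
      field_simp
      ring
  · have hneg : rarefaction m k 1 < rarefaction m y 1 :=
      strictMonoOn_rarefaction_one hm hk.le (hk.trans hgt).le hgt
    refine ((hasDerivAt_const (1 : ℝ) (0 : ℝ)).congr_of_eventuallyEq ?_).congr_deriv ?_
    · have := hlin.continuousAt.eventually_lt_const (u := 0) (by linarith)
      filter_upwards [this] with c hc
      exact max_eq_right hc.le
    · rw [frontProfile, if_neg hgt.not_gt, zero_rpow hm₀.ne', mul_zero, neg_zero]

namespace IsLogPotential

variable {m M : ℝ} {W Q : ℝ → ℝ → ℝ} {Q₀ : ℝ → ℝ}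

lemma hasDerivAt_time_rescaled (h : IsLogPotential m M W Q Q₀) {s t : ℝ} (ht : 0 < t) :
    HasDerivAt (fun c : ℝ => Q s (t * c ^ (-(m - 1)))) (-((m - 1) * (t * W s t ^ m))) 1 := by
  have hinner : HasDerivAt (fun c : ℝ => t * c ^ (-(m - 1))) (t * -(m - 1)) 1 := by
    simpa using ((hasDerivAt_id (1 : ℝ)).rpow_const (p := -(m - 1))
      (Or.inl one_ne_zero)).const_mul t
  have hone : t * (1 : ℝ) ^ (-(m - 1)) = t := by rw [one_rpow, mul_one]
  have htime : HasDerivAt (Q s) (W s t ^ m) (t * (1 : ℝ) ^ (-(m - 1))) :=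
    hone.symm ▸ (h.hasLogJetAt s t ht).time
  exact (htime.comp 1 hinner).congr_deriv (by ring)

theorem mul_density_rpow_le (h : IsLogPotential m M W Q Q₀) (hm : 1 < m) {s t : ℝ} (ht : 0 < t) :
    t * W s t ^ m ≤ 2 * M / (m - 1) := by
  have hm₁ := sub_pos.2 hm
  have hslope := (h.convexOn_time hm.le ht (s := s)).slope_le_of_hasDerivAt
    (x := 1 / 2) (y := 1) (by norm_num) (by norm_num) (by norm_num) (h.hasDerivAt_time_rescaled ht)
  rw [slope_def_field, one_rpow, mul_one, div_le_iff₀ (by norm_num)] at hslope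
  have hhalf : 0 < t * (1 / 2 : ℝ) ^ (-(m - 1)) := mul_pos ht (rpow_pos_of_pos (by norm_num) _)
  rw [le_div_iff₀ hm₁]
  linarith [h.le_mass hm.le hhalf (s := s), h.nonneg ht (s := s)]

lemma tendsto_mul_density_rpow {k : ℝ} (h : IsLogPotential m (rarefaction m k 1) W Q Q₀)
    (hm : 1 < m) (hk : 0 < k) {y : ℝ} (hyk : y ≠ k) :
    Tendsto (fun t : ℝ => t * W (y * t ^ (1 / m)) t ^ m) atTop (𝓝 (frontProfile m k y ^ m)) := by
  have hm₁ := sub_pos.2 hm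
  have hconv := tendsto_of_convexOn_of_hasDerivAt (l := atTop)
    (f := fun t c => Q (y * t ^ (1 / m)) (t * c ^ (-(m - 1)))) (Ioi_mem_nhds one_pos)
    ((eventually_gt_atTop 0).mono fun t ht => h.convexOn_time hm.le ht) (fun c hc => ?_)
    ((eventually_gt_atTop 0).mono fun t ht => h.hasDerivAt_time_rescaled ht)
    (hasDerivAt_max_sub_rarefaction hm hk hyk)
  · simpa [hm₁.ne'] using hconv.neg.div_const (m - 1)
  · have hlim := h.tendsto_rescaled hm y (rpow_pos_of_pos hc (-(m - 1)))
    rw [← one_mul (c ^ (-(m - 1))), rarefaction_mul_rpow_time hm hc y one_pos, one_mul] at hlim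
    simpa only [mul_comm] using hlim

theorem tendsto_rescaled_density {k : ℝ} (h : IsLogPotential m (rarefaction m k 1) W Q Q₀)
    (hm : 1 < m) (hk : 0 < k) {y : ℝ} (hyk : y ≠ k) :
    Tendsto (fun t : ℝ => t ^ (1 / m) * W (y * t ^ (1 / m)) t) atTop
      (𝓝 (frontProfile m k y)) := by
  have hm₀ : 0 < m := by linarith
  have hroot : ∀ {x : ℝ}, 0 ≤ x → (x ^ m) ^ (1 / m) = x := fun hx => by
    rw [← rpow_mul hx, mul_one_div_cancel hm₀.ne', rpow_one]
  have hlim := (h.tendsto_mul_density_rpow hm hk hyk).rpow_const (p := 1 / m)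
    (Or.inr (by positivity))
  rw [hroot (frontProfile_nonneg m k y)] at hlim
  refine hlim.congr' ?_
  filter_upwards [eventually_gt_atTop 0] with t ht
  have hW := h.density_nonneg (y * t ^ (1 / m)) t
  rw [mul_rpow ht.le (by positivity), hroot hW]

lemma rescaled_density_le (h : IsLogPotential m M W Q Q₀) (hm : 1 < m) {s t : ℝ} (ht : 0 < t) :
    t ^ (1 / m) * W s t ≤ (2 * M / (m - 1)) ^ (1 / m) := by
  have hm₀ : 0 < m := by linarith
  have hW := h.density_nonneg s t
  calc t ^ (1 / m) * W s t = (t * W s t ^ m) ^ (1 / m) := by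
        rw [mul_rpow ht.le (by positivity), ← rpow_mul hW, mul_one_div_cancel hm₀.ne', rpow_one]
    _ ≤ _ := by gcongr; exact h.mul_density_rpow_le hm ht

end IsLogPotential

/-! ### The mass of the density -/

lemma integrable_and_integral_le_of_hasDerivAt {G w : ℝ → ℝ} {a b : ℝ}
    (hG : ∀ s, HasDerivAt G (w s) s) (hw : ∀ s, 0 ≤ w s) (hGmem : ∀ s, G s ∈ Icc a b) :
    Integrable w ∧ ∫ s, w s ≤ b - a := by
  have hint : ∀ x y, IntervalIntegrable w volume x y := fun x y =>
    intervalIntegral.intervalIntegrable_deriv_of_nonneg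
      (fun s _ => (hG s).continuousAt.continuousWithinAt) (fun s _ => hG s) fun s _ => hw s
  have hle : ∀ x y, ∫ s in x..y, w s ≤ b - a := fun x y => by
    rw [intervalIntegral.integral_eq_sub_of_hasDerivAt (fun s _ => hG s) (hint x y)]
    linarith [(hGmem y).2, (hGmem x).1]
  have hwint : Integrable w :=
    integrable_of_intervalIntegral_norm_bounded (b - a) (fun n : ℕ => (hint (-n) n).1)
      (tendsto_neg_atTop_atBot.comp tendsto_natCast_atTop_atTop) tendsto_natCast_atTop_atTop
      (.of_forall fun n => by simpa only [norm_of_nonneg (hw _)] using hle (-n) n)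
  exact ⟨hwint, le_of_tendsto (intervalIntegral_tendsto_integral hwint
    (tendsto_neg_atTop_atBot.comp tendsto_natCast_atTop_atTop) tendsto_natCast_atTop_atTop)
    (.of_forall fun n : ℕ => hle (-n) n)⟩

lemma nonpos_of_hasDerivAt_of_bddAbove {f f' : ℝ → ℝ} {s δ M : ℝ}
    (hf : ∀ σ, HasDerivAt f (f' σ) σ) (hf' : ∀ σ, s ≤ σ → δ ≤ f' σ) (hM : ∀ σ, f σ ≤ M) :
    δ ≤ 0 := by
  by_contra! hδ
  have hgrowth : ∀ σ, s ≤ σ → δ * (σ - s) ≤ f σ - f s := fun σ hσ =>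
    (convex_Ici s).mul_sub_le_image_sub_of_le_deriv
      (fun x _ => (hf x).continuousAt.continuousWithinAt)
      (fun x _ => (hf x).differentiableAt.differentiableWithinAt)
      (fun x hx => (hf x).deriv ▸ hf' x (interior_subset hx)) s self_mem_Ici σ hσ hσ
  have hunbdd : Tendsto (fun σ => δ * (σ - s)) atTop atTop :=
    (tendsto_atTop_add_const_right _ (-s) tendsto_id).const_mul_atTop hδ
  obtain ⟨σ, hσ, hσs⟩ := ((hunbdd.eventually_gt_atTop (M - f s)).and
    (eventually_ge_atTop s)).exists
  linarith [hgrowth σ hσs, hM σ]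

namespace IsLogPotential

variable {m M : ℝ} {W Q : ℝ → ℝ → ℝ} {Q₀ : ℝ → ℝ}

lemma hasDerivAt_space (h : IsLogPotential m M W Q Q₀) (s : ℝ) {t : ℝ} (ht : 0 < t) :
    HasDerivAt (fun σ => Q σ t) (deriv (fun σ => Q σ t) s) s :=
  (h.hasLogJetAt s t ht).space.self_of_nhds

lemma hasDerivAt_space₂ (h : IsLogPotential m M W Q Q₀) (s : ℝ) {t : ℝ} (ht : 0 < t) :
    HasDerivAt (deriv fun σ => Q σ t) (deriv (fun σ => Q σ t) s + W s t) s :=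
  (h.hasLogJetAt s t ht).space₂.congr_deriv (by ring)

lemma deriv_space_nonpos (h : IsLogPotential m M W Q Q₀) (hm : 1 ≤ m) (s : ℝ) {t : ℝ}
    (ht : 0 < t) : deriv (fun σ => Q σ t) s ≤ 0 := by
  set q' := deriv fun σ => Q σ t
  have hmono : Monotone fun σ => exp (-σ) * q' σ := by
    refine monotone_of_hasDerivAt_nonneg (f' := fun σ => exp (-σ) * W σ t) (fun σ => ?_)
      fun σ => mul_nonneg (exp_pos _).le (h.density_nonneg σ t)
    exact ((hasDerivAt_neg σ).exp.mul (h.hasDerivAt_space₂ σ ht)).congr_deriv (by ring)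
  by_contra! hpos
  refine hpos.not_ge (nonpos_of_hasDerivAt_of_bddAbove (s := s) (fun σ => h.hasDerivAt_space σ ht)
    (fun σ hσ => ?_) fun σ => h.le_mass hm ht)
  calc q' s ≤ exp (σ - s) * q' s := le_mul_of_one_le_left hpos.le (one_le_exp (by linarith))
    _ = exp σ * (exp (-s) * q' s) := by rw [sub_eq_add_neg, exp_add, mul_assoc]
    _ ≤ exp σ * (exp (-σ) * q' σ) :=
        mul_le_mul_of_nonneg_left (hmono hσ) (exp_pos σ).le
    _ = q' σ := by rw [← mul_assoc, ← exp_add, add_neg_cancel, exp_zero, one_mul]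

lemma sub_deriv_space_le (h : IsLogPotential m M W Q Q₀) (hm : 1 ≤ m) (s : ℝ) {t : ℝ}
    (ht : 0 < t) : Q s t - deriv (fun σ => Q σ t) s ≤ M := by
  set q' := deriv fun σ => Q σ t
  have hmono : Monotone fun σ => q' σ - Q σ t := by
    refine monotone_of_hasDerivAt_nonneg (f' := fun σ => W σ t) (fun σ => ?_)
      fun σ => h.density_nonneg σ t
    exact ((h.hasDerivAt_space₂ σ ht).sub (h.hasDerivAt_space σ ht)).congr_deriv (by ring)
  have hreflect : ∀ σ, HasDerivAt (fun σ => Q (-σ) t) (-q' (-σ)) σ := fun σ => by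
    simpa using! (h.hasDerivAt_space (-σ) ht).scomp σ (hasDerivAt_neg σ)
  refine sub_nonpos.1 (nonpos_of_hasDerivAt_of_bddAbove (s := -s) hreflect (fun σ hσ => ?_)
    fun σ => h.le_mass hm ht)
  linarith [hmono (neg_le.1 hσ), h.le_mass hm ht (s := -σ)]

theorem integrable_density_and_integral_le (h : IsLogPotential m M W Q Q₀) (hm : 1 ≤ m) {t : ℝ}
    (ht : 0 < t) : Integrable (fun s => W s t) ∧ ∫ s, W s t ≤ M := by
  have := integrable_and_integral_le_of_hasDerivAt (w := fun s => W s t) (a := -M) (b := 0)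
    (G := fun s => deriv (fun σ => Q σ t) s - Q s t)
    (fun s => ((h.hasDerivAt_space₂ s ht).sub (h.hasDerivAt_space s ht)).congr_deriv (by ring))
    (fun s => h.density_nonneg s t)
    fun s => ⟨by linarith [h.sub_deriv_space_le hm s ht],
      by linarith [h.deriv_space_nonpos hm s ht, h.nonneg ht (s := s)]⟩
  simpa using this

end IsLogPotential

/-! ### Convergence of the rescaled density in `L^p` -/

section Scheffe

variable {α ι : Type*} [MeasurableSpace α] {μ : Measure α} {l : Filter ι} {f : ι → α → ℝ}
  {g : α → ℝ} {C p : ℝ}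

theorem tendsto_integral_abs_sub_of_integral_le [l.IsCountablyGenerated]
    (hf : ∀ᶠ i in l, Integrable (f i) μ) (hg : Integrable g μ)
    (hf₀ : ∀ᶠ i in l, ∀ᵐ x ∂μ, 0 ≤ f i x) (hle : ∀ᶠ i in l, ∫ x, f i x ∂μ ≤ ∫ x, g x ∂μ)
    (hlim : ∀ᵐ x ∂μ, Tendsto (fun i => f i x) l (𝓝 (g x))) :
    Tendsto (fun i => ∫ x, |f i x - g x| ∂μ) l (𝓝 0) := by
  have hpos : Tendsto (fun i => ∫ x, max (g x - f i x) 0 ∂μ) l (𝓝 (∫ _, 0 ∂μ)) := by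
    refine tendsto_integral_filter_of_dominated_convergence (fun x => |g x|)
      (hf.mono fun i hi => (hg.sub hi).pos_part.aestronglyMeasurable) ?_ hg.abs ?_
    · filter_upwards [hf₀] with i hi
      filter_upwards [hi] with x hx
      rw [norm_of_nonneg (le_max_right _ _)]
      exact max_le (by linarith [le_abs_self (g x)]) (abs_nonneg _)
    · filter_upwards [hlim] with x hx
      simpa using (hx.const_sub (g x)).max (tendsto_const_nhds (x := (0 : ℝ)))
  have hpos' := hpos.const_mul 2
  rw [integral_zero, mul_zero] at hpos'
  refine squeeze_zero' (.of_forall fun i => integral_nonneg fun x => abs_nonneg _) ?_ hpos'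
  filter_upwards [hf, hle] with i hi hlei
  have habs : ∀ x, |f i x - g x| = f i x - g x + 2 * max (g x - f i x) 0 := fun x => by
    rcases le_total (f i x) (g x) with h | h
    · rw [abs_of_nonpos (sub_nonpos.2 h), max_eq_left (sub_nonneg.2 h)]; ring
    · rw [abs_of_nonneg (sub_nonneg.2 h), max_eq_right (sub_nonpos.2 h)]; ring
  have hsplit := integral_add (hi.sub hg) ((hg.sub hi).pos_part.const_mul 2)
  simp only [Pi.sub_apply, ← habs] at hsplit
  rw [hsplit, integral_sub hi hg, integral_const_mul]
  linarith

lemma rpow_le_rpow_sub_one_mul {x : ℝ} (hp : 1 ≤ p) (hx : 0 ≤ x) (hxC : x ≤ C) :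
    x ^ p ≤ C ^ (p - 1) * x := by
  calc x ^ p = x ^ (p - 1) * x := by
        rw [← rpow_add_one' hx (by linarith), sub_add_cancel]
    _ ≤ C ^ (p - 1) * x := by gcongr

theorem tendsto_integral_abs_sub_rpow_of_integral_le [l.NeBot] [l.IsCountablyGenerated]
    (hp : 1 ≤ p) (hf : ∀ᶠ i in l, Integrable (f i) μ) (hg : Integrable g μ)
    (hfC : ∀ᶠ i in l, ∀ x, f i x ∈ Icc 0 C) (hle : ∀ᶠ i in l, ∫ x, f i x ∂μ ≤ ∫ x, g x ∂μ)
    (hlim : ∀ᵐ x ∂μ, Tendsto (fun i => f i x) l (𝓝 (g x))) :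
    Tendsto (fun i => ∫ x, |f i x - g x| ^ p ∂μ) l (𝓝 0) := by
  have hscheffe := (tendsto_integral_abs_sub_of_integral_le hf hg
    (hfC.mono fun i hi => .of_forall fun x => (hi x).1) hle hlim).const_mul (C ^ (p - 1))
  rw [mul_zero] at hscheffe
  have hgC : ∀ᵐ x ∂μ, g x ∈ Icc 0 C := hlim.mono fun x hx =>
    isClosed_Icc.mem_of_tendsto hx (hfC.mono fun i hi => hi x)
  refine squeeze_zero' (.of_forall fun i => integral_nonneg fun x => by positivity) ?_ hscheffe
  filter_upwards [hf, hfC] with i hi hiC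
  rw [← integral_const_mul]
  refine integral_mono_of_nonneg (.of_forall fun x => by positivity)
    ((hi.sub hg).abs.const_mul _) ?_
  filter_upwards [hgC] with x hx
  exact rpow_le_rpow_sub_one_mul hp (abs_nonneg _)
    (abs_sub_le_of_nonneg_of_le (hiC x).1 (hiC x).2 hx.1 hx.2)

end Scheffe

lemma frontProfile_eq_indicator {m : ℝ} (hm : 1 < m) (k : ℝ) :
    frontProfile m k = (Ioo 0 k).indicator fun y => (y / m) ^ (1 / (m - 1)) := by
  have hm₀ : 0 < m := by linarith
  funext y
  by_cases hy : y ∈ Ioo 0 k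
  · rw [indicator_of_mem hy, frontProfile, if_pos hy.2, max_eq_left (div_pos hy.1 hm₀).le]
  · rw [indicator_of_notMem hy, frontProfile]
    split_ifs with hyk
    · have hy₀ : y ≤ 0 := not_lt.1 fun hy₀ => hy ⟨hy₀, hyk⟩
      rw [max_eq_right (div_nonpos_of_nonpos_of_nonneg hy₀ hm₀.le), zero_rpow (by positivity)]
    · rfl

lemma integrable_frontProfile {m : ℝ} (hm : 1 < m) (k : ℝ) : Integrable (frontProfile m k) := by
  rw [frontProfile_eq_indicator hm, integrable_indicator_iff measurableSet_Ioo]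
  exact ((continuous_id.div_const m).rpow_const fun _ =>
    Or.inr (by positivity)).integrableOn_Icc.mono_set Ioo_subset_Icc_self

lemma integral_frontProfile {m k : ℝ} (hm : 1 < m) (hk : 0 < k) :
    ∫ y, frontProfile m k y = rarefaction m k 1 := by
  have hm₁ := sub_pos.2 hm
  have hm₀ : 0 < m := by linarith
  have hexp : 1 / (m - 1) + 1 = m / (m - 1) := by field_simp; ring
  rw [frontProfile_eq_indicator hm, integral_indicator measurableSet_Ioo,
    ← integral_Ioc_eq_integral_Ioo, ← intervalIntegral.integral_of_le hk.le,
    intervalIntegral.integral_comp_div (fun y => y ^ (1 / (m - 1))) hm₀.ne',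
    integral_rpow (Or.inl (lt_trans (by norm_num) (one_div_pos.2 hm₁))), zero_div,
    zero_rpow (by positivity), sub_zero, smul_eq_mul, rarefaction_one hm₀,
    max_eq_left (by positivity), hexp]
  field_simp

theorem IsLogPotential.tendsto_integral_abs_sub_rpow {m k p : ℝ} {W Q : ℝ → ℝ → ℝ} {Q₀ : ℝ → ℝ}
    (h : IsLogPotential m (rarefaction m k 1) W Q Q₀) (hm : 1 < m) (hk : 0 < k) (hp : 1 ≤ p) :
    Tendsto (fun t : ℝ => ∫ y, |t ^ (1 / m) * W (y * t ^ (1 / m)) t - frontProfile m k y| ^ p)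
      atTop (𝓝 0) := by
  refine tendsto_integral_abs_sub_rpow_of_integral_le hp ?_ (integrable_frontProfile hm k)
    (C := (2 * rarefaction m k 1 / (m - 1)) ^ (1 / m)) ?_ ?_ ?_
  · filter_upwards [eventually_gt_atTop 0] with t ht
    exact ((h.integrable_density_and_integral_le hm.le ht).1.comp_mul_right'
      (rpow_pos_of_pos ht _).ne').const_mul _
  · filter_upwards [eventually_gt_atTop 0] with t ht y
    exact ⟨mul_nonneg (by positivity) (h.density_nonneg _ _), h.rescaled_density_le hm ht⟩
  · filter_upwards [eventually_gt_atTop 0] with t ht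
    have hscale : 0 < t ^ (1 / m) := rpow_pos_of_pos ht _
    rw [integral_frontProfile hm hk, integral_const_mul,
      Measure.integral_comp_mul_right (fun s => W s t), abs_of_pos (inv_pos.2 hscale), smul_eq_mul,
      mul_inv_cancel_left₀ hscale.ne']
    exact (h.integrable_density_and_integral_le hm.le ht).2
  · filter_upwards [compl_mem_ae_iff.2 (measure_singleton k)] with y hy
    exact h.tendsto_rescaled_density hm hk hy

/-! ### Weak second derivatives on the line -/

/-- `φ` is a nonnegative `C²` test function with compact support in `U`. -/
structure IsTestFunction (φ : ℝ → ℝ) (U : Set ℝ) : Prop where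
  contDiff : ContDiff ℝ 2 φ
  nonneg : ∀ x, 0 ≤ φ x
  hasCompactSupport : HasCompactSupport φ
  tsupport_subset : tsupport φ ⊆ U

/-- `P'' = g` weakly in `U`, tested only against nonnegative functions, as in the definition of
very weak solutions. -/
def HasWeakSecondDeriv (P g : ℝ → ℝ) (U : Set ℝ) : Prop :=
  ∀ φ, IsTestFunction φ U → ∫ x, deriv (deriv φ) x * P x = ∫ x, φ x * g x

lemma contDiff_deriv_of_contDiff_two {φ : ℝ → ℝ} (hφ : ContDiff ℝ 2 φ) :
    ContDiff ℝ 1 (deriv φ) :=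
  ((contDiff_succ_iff_deriv (n := 1)).1 (by simpa [one_add_one_eq_two] using hφ)).2.2

lemma IsTestFunction.contDiff_deriv {φ : ℝ → ℝ} {U : Set ℝ} (h : IsTestFunction φ U) :
    ContDiff ℝ 1 (deriv φ) :=
  contDiff_deriv_of_contDiff_two h.contDiff

lemma IsTestFunction.mono {φ : ℝ → ℝ} {U V : Set ℝ} (h : IsTestFunction φ U) (hUV : U ⊆ V) :
    IsTestFunction φ V :=
  { h with tsupport_subset := h.tsupport_subset.trans hUV }

lemma IsTestFunction.apply_eq_zero {φ : ℝ → ℝ} {U : Set ℝ} (h : IsTestFunction φ U) {x : ℝ}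
    (hx : x ∉ U) : φ x = 0 :=
  image_eq_zero_of_notMem_tsupport fun hx' => hx (h.tsupport_subset hx')

lemma IsTestFunction.tsupport_deriv_deriv_subset {φ : ℝ → ℝ} {U : Set ℝ}
    (h : IsTestFunction φ U) : tsupport (deriv (deriv φ)) ⊆ U :=
  (tsupport_deriv_subset.trans tsupport_deriv_subset).trans h.tsupport_subset

lemma IsTestFunction.deriv_deriv_eq_zero {φ : ℝ → ℝ} {U : Set ℝ} (h : IsTestFunction φ U)
    {x : ℝ} (hx : x ∉ U) : deriv (deriv φ) x = 0 :=
  image_eq_zero_of_notMem_tsupport fun hx' => hx (h.tsupport_deriv_deriv_subset hx')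

lemma integrable_mul_of_locallyIntegrableOn {ψ f : ℝ → ℝ} {U : Set ℝ} (hψ : Continuous ψ)
    (hs : HasCompactSupport ψ) (hU : tsupport ψ ⊆ U) (hf : LocallyIntegrableOn f U) :
    Integrable fun x => ψ x * f x :=
  (integrableOn_iff_integrable_of_support_subset ((Function.support_mul_subset_left _ _).trans
    (subset_tsupport ψ))).1
    ((hf.integrableOn_compact_subset hU hs).continuousOn_mul hψ.continuousOn hs)

lemma integral_deriv_mul_eq_neg_integral_mul {φ G g : ℝ → ℝ} (hφ : ContDiff ℝ 1 φ)
    (hs : HasCompactSupport φ) (hG : ∀ x, HasDerivAt G (g x) x) (hg : Continuous g) :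
    ∫ x, deriv φ x * G x = -∫ x, φ x * g x := by
  have hGc : Continuous G := continuous_iff_continuousAt.2 fun x => (hG x).continuousAt
  rw [integral_mul_deriv_eq_deriv_mul_of_integrable (u' := deriv φ) (v := G)
    (fun x _ => (hφ.differentiable one_ne_zero x).hasDerivAt) (fun x _ => hG x), neg_neg]
  · exact (hφ.continuous.mul hg).integrable_of_hasCompactSupport hs.mul_right
  · exact ((hφ.continuous_deriv le_rfl).mul hGc).integrable_of_hasCompactSupport
      hs.deriv.mul_right
  · exact (hφ.continuous.mul hGc).integrable_of_hasCompactSupport hs.mul_right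

namespace HasWeakSecondDeriv

variable {P P' g g' : ℝ → ℝ} {U V : Set ℝ}

lemma of_hasDerivAt (U : Set ℝ) (hP : ∀ x, HasDerivAt P (P' x) x)
    (hP' : ∀ x, HasDerivAt P' (g x) x) (hg : Continuous g) : HasWeakSecondDeriv P g U :=
  fun φ hφ => by
    have hP'c : Continuous P' := continuous_iff_continuousAt.2 fun x => (hP' x).continuousAt
    rw [integral_deriv_mul_eq_neg_integral_mul hφ.contDiff_deriv hφ.hasCompactSupport.deriv hP
      hP'c, integral_deriv_mul_eq_neg_integral_mul (hφ.contDiff.of_le one_le_two)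
      hφ.hasCompactSupport hP' hg, neg_neg]

lemma mono (h : HasWeakSecondDeriv P g V) (hUV : U ⊆ V) : HasWeakSecondDeriv P g U :=
  fun φ hφ => h φ (hφ.mono hUV)

lemma congr (h : HasWeakSecondDeriv P g U) (hP : EqOn P P' U) (hg : EqOn g g' U) :
    HasWeakSecondDeriv P' g' U := fun φ hφ => by
  have hleft : (fun x => deriv (deriv φ) x * P' x) = fun x => deriv (deriv φ) x * P x := by
    funext x
    by_cases hx : x ∈ U
    · rw [hP hx]
    · rw [hφ.deriv_deriv_eq_zero hx, zero_mul, zero_mul]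
  have hright : (fun x => φ x * g' x) = fun x => φ x * g x := by
    funext x
    by_cases hx : x ∈ U
    · rw [hg hx]
    · rw [hφ.apply_eq_zero hx, zero_mul, zero_mul]
  rw [hleft, hright, h φ hφ]

lemma add (hP : LocallyIntegrableOn P U) (hP' : LocallyIntegrableOn P' U)
    (hg : LocallyIntegrableOn g U) (hg' : LocallyIntegrableOn g' U) (h : HasWeakSecondDeriv P g U)
    (h' : HasWeakSecondDeriv P' g' U) :
    HasWeakSecondDeriv (fun x => P x + P' x) (fun x => g x + g' x) U := fun φ hφ => by
  have hφ'' := hφ.contDiff_deriv.continuous_deriv le_rfl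
  simp only [mul_add]
  rw [integral_add, integral_add, h φ hφ, h' φ hφ]
  · exact integrable_mul_of_locallyIntegrableOn hφ.contDiff.continuous hφ.hasCompactSupport
      hφ.tsupport_subset hg
  · exact integrable_mul_of_locallyIntegrableOn hφ.contDiff.continuous hφ.hasCompactSupport
      hφ.tsupport_subset hg'
  · exact integrable_mul_of_locallyIntegrableOn hφ'' hφ.hasCompactSupport.deriv.deriv
      hφ.tsupport_deriv_deriv_subset hP
  · exact integrable_mul_of_locallyIntegrableOn hφ'' hφ.hasCompactSupport.deriv.deriv
      hφ.tsupport_deriv_deriv_subset hP'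

lemma convolution_deriv_deriv_eq_zero {R ψ : ℝ → ℝ} (h : HasWeakSecondDeriv R (fun _ => 0) U)
    {y : ℝ} (hψ : IsTestFunction (fun z => ψ (y - z)) U) :
    (convolution (deriv (deriv ψ)) R (ContinuousLinearMap.lsmul ℝ ℝ) volume) y = 0 := by
  have hreflect : ∀ f : ℝ → ℝ, (deriv fun z => f (y - z)) = fun z => -deriv f (y - z) :=
    fun f => funext fun z => deriv_comp_const_sub (f := f) y z
  have htest := h _ hψ
  simp only [hreflect, deriv.fun_neg', neg_neg, mul_zero, integral_zero] at htest
  rw [convolution_lsmul_swap]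
  exact htest

end HasWeakSecondDeriv

lemma eq_affine_of_hasDerivAt {f f' : ℝ → ℝ} {c d : ℝ} (hcd : c < d)
    (hf : ∀ x, HasDerivAt f (f' x) x) (hf' : ∀ x ∈ Icc c d, HasDerivAt f' 0 x) :
    ∀ x ∈ Icc c d, f x = f c + (x - c) / (d - c) * (f d - f c) := by
  have hconst : ∀ x ∈ Icc c d, f' x = f' c := constant_of_has_deriv_right_zero
    (fun x hx => (hf' x hx).continuousAt.continuousWithinAt)
    fun x hx => (hf' x (Ico_subset_Icc_self hx)).hasDerivWithinAt
  have hlin : ∀ x ∈ Icc c d, f x - f' c * x = f c - f' c * c :=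
    constant_of_has_deriv_right_zero (f := fun x => f x - f' c * x)
      (fun x _ => ((hf x).continuousAt.sub (by fun_prop)).continuousWithinAt)
      fun x hx => (((hf x).sub ((hasDerivAt_id x).const_mul (f' c))).congr_deriv (by
        rw [hconst x (Ico_subset_Icc_self hx)]; ring)).hasDerivWithinAt
  intro x hx
  have hd := hlin d (right_mem_Icc.2 hcd.le)
  have hslope : f d - f c = f' c * (d - c) := by linarith
  rw [hslope]
  field_simp [(sub_pos.2 hcd).ne']
  linarith [hlin x hx]

lemma isTestFunction_comp_const_sub_bump (B : ContDiffBump (0 : ℝ)) {y : ℝ} {U : Set ℝ}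
    (hy : Metric.closedBall y B.rOut ⊆ U) :
    IsTestFunction (fun z => B.normed volume (y - z)) U := by
  have hts : tsupport (fun z => B.normed volume (y - z)) ⊆ Metric.closedBall y B.rOut := by
    refine closure_minimal (fun z hz => ?_) Metric.isClosed_closedBall
    have hz' : y - z ∈ Function.support (B.normed volume) := hz
    rw [B.support_normed_eq, mem_ball_zero_iff] at hz'
    rw [Metric.mem_closedBall, dist_comm, dist_eq_norm]
    exact hz'.le
  exact ⟨B.contDiff_normed.comp (contDiff_const.sub contDiff_id), fun z => B.nonneg_normed _,
    .of_support_subset_isCompact (isCompact_closedBall y B.rOut)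
      ((subset_tsupport _).trans hts), hts.trans hy⟩

/-- Mollification reduces the claim to the classical case. -/
theorem HasWeakSecondDeriv.eq_affine {R : ℝ → ℝ} {U : Set ℝ} (hR : Continuous R)
    (h : HasWeakSecondDeriv R (fun _ => 0) U) {c d δ : ℝ} (hcd : c < d) (hδ : 0 < δ)
    (hU : Metric.cthickening δ (Icc c d) ⊆ U) :
    ∀ x ∈ Icc c d, R x = R c + (x - c) / (d - c) * (R d - R c) := by
  intro x hx
  let B : ℕ → ContDiffBump (0 : ℝ) := fun n =>
    ⟨1 / ((n : ℝ) + 1) / 2, 1 / ((n : ℝ) + 1), by positivity, half_lt_self (by positivity)⟩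
  have hrOut : Tendsto (fun n => (B n).rOut) atTop (𝓝 0) :=
    tendsto_one_div_add_atTop_nhds_zero_nat
  have hlim := ContDiffBump.convolution_tendsto_right_of_continuous (μ := volume) hrOut hR
  refine tendsto_nhds_unique_of_eventuallyEq (hlim x)
    ((hlim c).add (((hlim d).sub (hlim c)).const_mul _)) ?_
  filter_upwards [hrOut.eventually_le_const hδ] with n hn
  have hψ : ContDiff ℝ 2 ((B n).normed volume) := (B n).contDiff_normed
  have hψ' : ContDiff ℝ 1 (deriv ((B n).normed volume)) :=
    contDiff_deriv_of_contDiff_two hψ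
  have hψs := (B n).hasCompactSupport_normed (μ := volume)
  have hRloc := hR.locallyIntegrable (μ := volume)
  refine eq_affine_of_hasDerivAt hcd
    (fun y => hψs.hasDerivAt_convolution_left (ContinuousLinearMap.lsmul ℝ ℝ)
      (hψ.of_le one_le_two) hRloc y) (fun y hy => ?_) x hx
  have hzero := h.convolution_deriv_deriv_eq_zero (isTestFunction_comp_const_sub_bump (B n)
    ((Metric.closedBall_subset_closedBall hn).trans
      ((Metric.closedBall_subset_cthickening hy δ).trans hU)))
  exact (hψs.deriv.hasDerivAt_convolution_left (ContinuousLinearMap.lsmul ℝ ℝ) hψ' hRloc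
    y).congr_deriv hzero

lemma exists_second_antideriv {g : ℝ → ℝ} (hg : Continuous g) :
    ∃ G G' : ℝ → ℝ, (∀ x, HasDerivAt G (G' x) x) ∧ ∀ x, HasDerivAt G' (g x) x := by
  have hprim : ∀ {f : ℝ → ℝ}, Continuous f →
      ∀ x, HasDerivAt (fun x => ∫ y in (0)..x, f y) (f x) x := fun hf x =>
    intervalIntegral.integral_hasDerivAt_right (hf.intervalIntegrable _ _)
      (hf.stronglyMeasurableAtFilter _ _) hf.continuousAt
  exact ⟨_, _, hprim (continuous_iff_continuousAt.2 fun x => (hprim hg x).continuousAt),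
    hprim hg⟩

lemma HasWeakSecondDeriv.hasDerivAt_of_continuous {P g : ℝ → ℝ} (hP : Continuous P)
    (hg : Continuous g) {x δ : ℝ} (hδ : 0 < δ)
    (h : HasWeakSecondDeriv P g (Metric.closedBall x (δ + δ))) :
    HasDerivAt P (deriv P x) x ∧ HasDerivAt (deriv P) (g x) x := by
  obtain ⟨G, G', hG, hG'⟩ := exists_second_antideriv hg
  have hGc : Continuous G := continuous_iff_continuousAt.2 fun y => (hG y).continuousAt
  have hR : HasWeakSecondDeriv (fun y => P y - G y) (fun _ => 0)
      (Metric.closedBall x (δ + δ)) := by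
    have hloc : ∀ {f : ℝ → ℝ}, Continuous f →
        LocallyIntegrableOn f (Metric.closedBall x (δ + δ)) :=
      fun hf => hf.continuousOn.locallyIntegrableOn Metric.isClosed_closedBall.measurableSet
    simpa only [Pi.neg_apply, ← sub_eq_add_neg, sub_self] using h.add (hloc hP) (hloc hGc.neg)
      (hloc hg) (hloc hg.neg) (.of_hasDerivAt _ (fun y => (hG y).neg) (fun y => (hG' y).neg) hg.neg)
  have haff := hR.eq_affine (hP.sub hGc) (c := x - δ) (d := x + δ) (by linarith) hδ
    (by rw [← Real.closedBall_eq_Icc, cthickening_closedBall hδ.le hδ.le])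
  set κ := (P (x + δ) - G (x + δ) - (P (x - δ) - G (x - δ))) / (x + δ - (x - δ))
  have hP' : ∀ y ∈ Ioo (x - δ) (x + δ), HasDerivAt P (G' y + κ) y := fun y hy => by
    refine (((hG y).add ((((hasDerivAt_id y).sub_const (x - δ)).mul_const κ).const_add
      (P (x - δ) - G (x - δ)))).congr_deriv (by ring)).congr_of_eventuallyEq ?_
    filter_upwards [Ioo_mem_nhds hy.1 hy.2] with z hz
    have hz' := haff z (Ioo_subset_Icc_self hz)
    rw [div_mul_eq_mul_div, mul_div_assoc] at hz'
    simp only [Pi.sub_apply] at hz'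
    simp only [Pi.add_apply, id]
    linarith
  have hx : x ∈ Ioo (x - δ) (x + δ) := ⟨by linarith, by linarith⟩
  refine ⟨(hP' x hx).differentiableAt.hasDerivAt,
    ((hG' x).add_const κ).congr_of_eventuallyEq ?_⟩
  filter_upwards [Ioo_mem_nhds hx.1 hx.2] with z hz using (hP' z hz).deriv

theorem HasWeakSecondDeriv.hasDerivAt {P g : ℝ → ℝ} {U : Set ℝ} (hU : IsOpen U)
    (hP : ContinuousOn P U) (hg : ContinuousOn g U) (h : HasWeakSecondDeriv P g U) {x : ℝ}
    (hx : x ∈ U) : HasDerivAt P (deriv P x) x ∧ HasDerivAt (deriv P) (g x) x := by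
  obtain ⟨ε, hε, hball⟩ := Metric.nhds_basis_closedBall.mem_iff.1 (hU.mem_nhds hx)
  have hhalf : Metric.closedBall x (ε / 2 + ε / 2) ⊆ U := by rwa [add_halves]
  have hle : x - (ε / 2 + ε / 2) ≤ x + (ε / 2 + ε / 2) := by linarith
  have hext : ∀ f : ℝ → ℝ, ContinuousOn f U →
      ∃ f' : ℝ → ℝ, Continuous f' ∧ EqOn f f' (Metric.closedBall x (ε / 2 + ε / 2)) := by
    intro f hf
    rw [Real.closedBall_eq_Icc] at hhalf ⊢
    exact ⟨IccExtend hle ((Icc _ _).domRestrict f),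
      (continuousOn_iff_continuous_domRestrict.1 (hf.mono hhalf)).Icc_extend',
      fun y hy => (IccExtend_of_mem hle ((Icc _ _).domRestrict f) hy).symm⟩
  obtain ⟨P', hP', hPP'⟩ := hext P hP
  obtain ⟨g', hg', hgg'⟩ := hext g hg
  have hreg := ((h.mono hhalf).congr hPP' hgg').hasDerivAt_of_continuous hP' hg' (half_pos hε)
  have hev : P =ᶠ[𝓝 x] P' := hPP'.eventuallyEq_of_mem
    (Metric.closedBall_mem_nhds x (by positivity))
  rw [hev.deriv_eq, hgg' (Metric.mem_closedBall_self (by positivity))]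
  exact ⟨hreg.1.congr_of_eventuallyEq hev, hreg.2.congr_of_eventuallyEq hev.deriv⟩

/-! ### The potential of a solution -/

/-- The potential on `(0, ∞)` of the initial mass density `f`: it has weak second derivative
`f r / r`. -/
def initialPotential (f : ℝ → ℝ) (r : ℝ) : ℝ := ∫ ρ in Ioi 0, max (1 - r / ρ) 0 * f ρ

section initialPotential

variable {f : ℝ → ℝ}

lemma initialPotential_nonneg (hf : ∀ x, 0 < x → 0 ≤ f x) (r : ℝ) : 0 ≤ initialPotential f r :=
  setIntegral_nonneg measurableSet_Ioi fun x hx => mul_nonneg (le_max_right _ _) (hf x hx)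

lemma abs_initialPotential_kernel_le {r ρ : ℝ} (hr : 0 ≤ r) (hρ : 0 < ρ) :
    |max (1 - r / ρ) 0| ≤ 1 := by
  rw [abs_of_nonneg (le_max_right _ _)]
  exact max_le (by linarith [div_nonneg hr hρ.le]) zero_le_one

lemma ae_norm_initialPotential_integrand_le (f : ℝ → ℝ) {r : ℝ} (hr : 0 ≤ r) :
    ∀ᵐ ρ ∂volume.restrict (Ioi 0), ‖max (1 - r / ρ) 0 * f ρ‖ ≤ ‖f ρ‖ :=
  ae_restrict_of_forall_mem measurableSet_Ioi fun ρ hρ => by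
    rw [norm_mul]
    exact mul_le_of_le_one_left (norm_nonneg _) (abs_initialPotential_kernel_le hr hρ)

lemma aestronglyMeasurable_initialPotential_integrand (hf : IntegrableOn f (Ioi 0)) (r : ℝ) :
    AEStronglyMeasurable (fun ρ => max (1 - r / ρ) 0 * f ρ) (volume.restrict (Ioi 0)) :=
  (by fun_prop : Measurable fun ρ : ℝ => max (1 - r / ρ) 0).aestronglyMeasurable.mul
    hf.aestronglyMeasurable

lemma initialPotential_le (hf : IntegrableOn f (Ioi 0)) (hf₀ : ∀ x, 0 < x → 0 ≤ f x) {r : ℝ}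
    (hr : 0 ≤ r) : initialPotential f r ≤ ∫ x in Ioi 0, f x := by
  refine integral_mono_ae (Integrable.mono hf (aestronglyMeasurable_initialPotential_integrand hf r)
    (ae_norm_initialPotential_integrand_le f hr)) hf ?_
  filter_upwards [ae_norm_initialPotential_integrand_le f hr,
    ae_restrict_mem measurableSet_Ioi] with ρ hle hρ
  rw [Real.norm_of_nonneg (hf₀ ρ hρ)] at hle
  exact (le_abs_self _).trans hle

lemma tendsto_initialPotential {ι : Type*} {l : Filter ι} [l.IsCountablyGenerated] {r : ι → ℝ}
    (hf : IntegrableOn f (Ioi 0)) (hr : ∀ᶠ i in l, 0 ≤ r i) {K : ℝ → ℝ}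
    (hK : ∀ ρ, 0 < ρ → Tendsto (fun i => max (1 - r i / ρ) 0) l (𝓝 (K ρ))) :
    Tendsto (fun i => initialPotential f (r i)) l (𝓝 (∫ ρ in Ioi 0, K ρ * f ρ)) :=
  tendsto_integral_filter_of_dominated_convergence (fun ρ => ‖f ρ‖)
    (.of_forall fun _ => aestronglyMeasurable_initialPotential_integrand hf _)
    (hr.mono fun _ hi => ae_norm_initialPotential_integrand_le f hi) hf.norm
    (ae_restrict_of_forall_mem measurableSet_Ioi fun ρ hρ => (hK ρ hρ).mul_const _)

lemma continuousOn_initialPotential (hf : IntegrableOn f (Ioi 0)) :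
    ContinuousOn (initialPotential f) (Ioi 0) := fun r _ =>
  (tendsto_initialPotential hf (eventually_mem_nhdsWithin.mono fun _ h => (mem_Ioi.1 h).le)
    fun _ _ => (Continuous.tendsto (by fun_prop) r).mono_left nhdsWithin_le_nhds)

lemma tendsto_initialPotential_zero (hf : IntegrableOn f (Ioi 0)) :
    Tendsto (initialPotential f) (𝓝[>] 0) (𝓝 (∫ x in Ioi 0, f x)) := by
  simpa only [one_mul] using tendsto_initialPotential hf (K := fun _ => 1)
    (eventually_mem_nhdsWithin.mono fun _ h => (mem_Ioi.1 h).le) fun ρ _ =>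
      (Continuous.tendsto' (by fun_prop) 0 1 (by simp)).mono_left nhdsWithin_le_nhds

lemma tendsto_initialPotential_atTop (hf : IntegrableOn f (Ioi 0)) :
    Tendsto (initialPotential f) atTop (𝓝 0) := by
  simpa only [zero_mul, integral_zero] using tendsto_initialPotential hf (K := fun _ => 0)
    (eventually_ge_atTop 0) fun ρ hρ => tendsto_const_nhds.congr' (by
      filter_upwards [eventually_ge_atTop ρ] with r hr
      rw [max_eq_right (sub_nonpos.2 ((one_le_div hρ).2 hr))])

lemma integral_deriv_deriv_mul_kernel {φ : ℝ → ℝ} (hφ : ContDiff ℝ 2 φ)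
    (hs : HasCompactSupport φ) {ρ : ℝ} (hρ : 0 < ρ) :
    ∫ r, deriv (deriv φ) r * max (1 - r / ρ) 0 = φ ρ / ρ := by
  have hφ' : ContDiff ℝ 1 (deriv φ) := contDiff_deriv_of_contDiff_two hφ
  have hder : ∀ r, HasDerivAt (fun r => deriv φ r * (1 - r / ρ) + φ r / ρ)
      (deriv (deriv φ) r * (1 - r / ρ)) r := fun r =>
    (((hφ'.differentiable one_ne_zero r).hasDerivAt.mul
      (((hasDerivAt_id r).div_const ρ).const_sub 1)).add
      ((hφ.differentiable two_ne_zero r).hasDerivAt.div_const ρ)).congr_deriv (by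
        simp only [id]; ring)
  have hcont : ContDiff ℝ 1 fun r => deriv φ r * (1 - r / ρ) + φ r / ρ :=
    (hφ'.mul (by fun_prop)).add ((hφ.of_le one_le_two).div_const ρ)
  have hcpt : HasCompactSupport fun r => deriv φ r * (1 - r / ρ) + φ r / ρ :=
    hs.deriv.mul_right.add (hs.comp_left (g := fun x => x / ρ) (zero_div ρ))
  calc ∫ r, deriv (deriv φ) r * max (1 - r / ρ) 0
      = ∫ r in Iic ρ, deriv (fun r => deriv φ r * (1 - r / ρ) + φ r / ρ) r := by
        rw [← integral_indicator measurableSet_Iic]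
        congr 1 with r
        rw [indicator_apply, (hder r).deriv]
        split_ifs with hr
        · rw [max_eq_left (sub_nonneg.2 ((div_le_one hρ).2 hr))]
        · rw [max_eq_right (sub_nonpos.2 ((one_le_div hρ).2 (not_le.1 hr).le)), mul_zero]
    _ = φ ρ / ρ := by
        rw [hcpt.integral_Iic_deriv_eq hcont, div_self hρ.ne']; ring

lemma hasWeakSecondDeriv_initialPotential (hf : IntegrableOn f (Ioi 0)) :
    HasWeakSecondDeriv (initialPotential f) (fun x => f x / x) (Ioi 0) := fun φ hφ => by
  have hφ'' := hφ.contDiff_deriv.continuous_deriv le_rfl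
  have hint : Integrable (Function.uncurry fun r ρ =>
      deriv (deriv φ) r * (max (1 - r / ρ) 0 * f ρ)) (volume.prod (volume.restrict (Ioi 0))) := by
    refine ((hφ''.integrable_of_hasCompactSupport hφ.hasCompactSupport.deriv.deriv).norm.mul_prod
      hf.norm).mono' ?_ ?_
    · exact hφ''.aestronglyMeasurable.comp_fst.mul ((by fun_prop : Measurable fun z : ℝ × ℝ =>
        max (1 - z.1 / z.2) 0).aestronglyMeasurable.mul hf.aestronglyMeasurable.comp_snd)
    · have hae : ∀ᵐ z ∂(volume : Measure ℝ).prod (volume.restrict (Ioi (0 : ℝ))), 0 < z.2 :=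
        Measure.quasiMeasurePreserving_snd.ae (ae_restrict_mem measurableSet_Ioi)
      filter_upwards [hae] with z hz
      rw [Function.uncurry_apply_pair, norm_mul, norm_mul]
      by_cases hr : 0 < z.1
      · gcongr
        exact mul_le_of_le_one_left (norm_nonneg _) (abs_initialPotential_kernel_le hr.le hz)
      · rw [hφ.deriv_deriv_eq_zero hr, norm_zero, zero_mul, zero_mul]
  calc ∫ r, deriv (deriv φ) r * initialPotential f r
      = ∫ r, ∫ ρ in Ioi 0, deriv (deriv φ) r * (max (1 - r / ρ) 0 * f ρ) := by
        simp only [initialPotential, integral_const_mul]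
    _ = ∫ ρ in Ioi 0, ∫ r, deriv (deriv φ) r * (max (1 - r / ρ) 0 * f ρ) :=
        integral_integral_swap hint
    _ = ∫ ρ in Ioi 0, φ ρ * (f ρ / ρ) := setIntegral_congr_fun measurableSet_Ioi fun ρ hρ => by
        simp only [← mul_assoc]
        rw [integral_mul_const, integral_deriv_deriv_mul_kernel hφ.contDiff hφ.hasCompactSupport hρ]
        ring
    _ = ∫ ρ, φ ρ * (f ρ / ρ) := setIntegral_eq_integral_of_forall_compl_eq_zero fun ρ hρ => by
        rw [hφ.apply_eq_zero hρ, zero_mul]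

end initialPotential

/-- The regularity shared by a very weak solution and its powers: `w` is nonnegative, continuous
for positive `r` and `t`, and bounded on bounded time intervals. -/
structure IsStripBounded (w : ℝ → ℝ → ℝ) : Prop where
  nonneg : ∀ r t, 0 ≤ w r t
  continuousOn : ContinuousOn (fun z : ℝ × ℝ => w z.1 z.2) (Ioi 0 ×ˢ Ioi 0)
  bdd : ∀ T, 0 < T → ∃ C, ∀ r t, 0 < r → 0 < t → t ≤ T → w r t ≤ C

/-- The part of the potential produced up to time `t` by the flux `w`. -/
def timePotential (w : ℝ → ℝ → ℝ) (r t : ℝ) : ℝ := ∫ τ in 0..t, w r τ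

lemma timePotential_eq_mul_integral (w : ℝ → ℝ → ℝ) (r t : ℝ) :
    timePotential w r t = t * ∫ σ in 0..1, w r (t * σ) := by
  rw [intervalIntegral.mul_integral_comp_mul_left (f := fun σ => w r σ), mul_zero, mul_one,
    timePotential]

namespace IsStripBounded

variable {w : ℝ → ℝ → ℝ} {r t : ℝ}

lemma rpow (h : IsStripBounded w) {m : ℝ} (hm : 0 ≤ m) : IsStripBounded fun r t => w r t ^ m where
  nonneg r t := rpow_nonneg (h.nonneg r t) m
  continuousOn := h.continuousOn.rpow_const fun _ _ => .inr hm
  bdd T hT :=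
    have ⟨C, hC⟩ := h.bdd T hT
    ⟨C ^ m, fun r t hr ht htT => rpow_le_rpow (h.nonneg r t) (hC r t hr ht htT) hm⟩

lemma continuousAt (h : IsStripBounded w) (hr : 0 < r) (ht : 0 < t) :
    ContinuousAt (fun z : ℝ × ℝ => w z.1 z.2) (r, t) :=
  h.continuousOn.continuousAt (prod_mem_nhds (Ioi_mem_nhds hr) (Ioi_mem_nhds ht))

lemma continuousOn_time (h : IsStripBounded w) (hr : 0 < r) : ContinuousOn (w r) (Ioi 0) :=
  h.continuousOn.comp (f := fun τ => (r, τ)) (by fun_prop) fun _ ht => ⟨hr, ht⟩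

lemma continuousOn_space (h : IsStripBounded w) (ht : 0 < t) :
    ContinuousOn (fun r => w r t) (Ioi 0) :=
  h.continuousOn.comp (f := fun r => (r, t)) (by fun_prop) fun _ hr => ⟨hr, ht⟩

lemma intervalIntegrable (h : IsStripBounded w) (hr : 0 < r) (ht : 0 < t) :
    IntervalIntegrable (w r) volume 0 t := by
  obtain ⟨C, hC⟩ := h.bdd t ht
  rw [intervalIntegrable_iff_integrableOn_Ioc_of_le ht.le]
  refine .of_bound measure_Ioc_lt_top
    (((h.continuousOn_time hr).mono Ioc_subset_Ioi_self).aestronglyMeasurable measurableSet_Ioc) C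
    (ae_restrict_of_forall_mem measurableSet_Ioc fun τ hτ => ?_)
  rw [Real.norm_of_nonneg (h.nonneg r τ)]
  exact hC r τ hr hτ.1 hτ.2

lemma timePotential_nonneg (h : IsStripBounded w) (ht : 0 ≤ t) : 0 ≤ timePotential w r t :=
  intervalIntegral.integral_nonneg ht fun _ _ => h.nonneg _ _

lemma timePotential_le (h : IsStripBounded w) {C : ℝ} (hr : 0 < r) (ht : 0 < t)
    (hC : ∀ τ, 0 < τ → τ ≤ t → w r τ ≤ C) : timePotential w r t ≤ C * t := by
  have hmono := intervalIntegral.integral_mono_on_of_le_Ioo ht.le (h.intervalIntegrable hr ht)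
    (intervalIntegrable_const (c := C)) fun τ hτ => hC τ hτ.1 hτ.2.le
  rwa [intervalIntegral.integral_const, sub_zero, smul_eq_mul, mul_comm] at hmono

lemma hasDerivAt_timePotential (h : IsStripBounded w) (hr : 0 < r) (ht : 0 < t) :
    HasDerivAt (timePotential w r) (w r t) t :=
  intervalIntegral.integral_hasDerivAt_right (h.intervalIntegrable hr ht)
    ((h.continuousOn_time hr).stronglyMeasurableAtFilter isOpen_Ioi t ht)
    ((h.continuousOn_time hr).continuousAt (Ioi_mem_nhds ht))

lemma continuousOn_timePotential (h : IsStripBounded w) :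
    ContinuousOn (fun z : ℝ × ℝ => timePotential w z.1 z.2) (Ioi 0 ×ˢ Ioi 0) := by
  rintro ⟨r, t⟩ ⟨hr, ht⟩
  simp only [timePotential_eq_mul_integral]
  refine (continuousAt_snd.mul ?_).continuousWithinAt
  obtain ⟨C, hC⟩ := h.bdd (2 * t) (by linarith [mem_Ioi.1 ht])
  have hnear : ∀ᶠ z : ℝ × ℝ in 𝓝 (r, t), z ∈ Ioi (0 : ℝ) ×ˢ Ioo 0 (2 * t) :=
    prod_mem_nhds (Ioi_mem_nhds hr) (Ioo_mem_nhds ht (by linarith [mem_Ioi.1 ht]))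
  refine intervalIntegral.continuousAt_of_dominated_interval (bound := fun _ => C)
    (hnear.mono fun z hz => ?_) (hnear.mono fun z hz => .of_forall fun σ hσ => ?_)
    intervalIntegrable_const (.of_forall fun σ hσ => ?_)
  · rw [uIoc_of_le zero_le_one]
    exact ((h.continuousOn_time hz.1).comp (f := fun σ => z.2 * σ) (by fun_prop)
      fun σ hσ => mul_pos hz.2.1 hσ.1).aestronglyMeasurable measurableSet_Ioc
  · rw [uIoc_of_le zero_le_one] at hσ
    rw [Real.norm_of_nonneg (h.nonneg _ _)]
    exact hC _ _ hz.1 (mul_pos hz.2.1 hσ.1)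
      ((mul_le_of_le_one_right hz.2.1.le hσ.2).trans hz.2.2.le)
  · rw [uIoc_of_le zero_le_one] at hσ
    exact ContinuousAt.comp (f := fun z : ℝ × ℝ => (z.1, z.2 * σ))
      (h.continuousAt hr (mul_pos ht hσ.1)) (by fun_prop)

lemma integral_integral_mul_eq (h : IsStripBounded w) {ψ : ℝ → ℝ} (hψ : Continuous ψ)
    {a b T : ℝ} (ha : 0 < a) (hab : a ≤ b) (hT : 0 < T) :
    ∫ t in 0..T, ∫ r in a..b, ψ r * w r t = ∫ r in a..b, ψ r * timePotential w r T := by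
  rw [intervalIntegral_intervalIntegral_swap]
  · simp only [intervalIntegral.integral_const_mul, timePotential]
  obtain ⟨C, hC⟩ := h.bdd T hT
  obtain ⟨D, hD⟩ := (isCompact_Icc (a := a) (b := b)).exists_bound_of_continuousOn
    hψ.continuousOn
  rw [uIoc_of_le hT.le, uIoc_of_le hab]
  refine .of_bound ?_ (ContinuousOn.aestronglyMeasurable ?_
    (measurableSet_Ioc.prod measurableSet_Ioc)) (D * C)
    (ae_restrict_of_forall_mem (measurableSet_Ioc.prod measurableSet_Ioc) ?_)
  · rw [Measure.volume_eq_prod, Measure.prod_prod]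
    exact ENNReal.mul_lt_top measure_Ioc_lt_top measure_Ioc_lt_top
  · exact (hψ.comp continuous_snd).continuousOn.mul (h.continuousOn.comp (f := Prod.swap)
      continuous_swap.continuousOn fun z hz => ⟨ha.trans hz.2.1, hz.1.1⟩)
  · rintro ⟨t, r⟩ ⟨ht, hr⟩
    have hψr := hD r (Ioc_subset_Icc_self hr)
    rw [Function.uncurry_apply_pair, norm_mul, Real.norm_of_nonneg (h.nonneg r t)]
    exact mul_le_mul hψr (hC r t (ha.trans hr.1) ht.1 ht.2) (h.nonneg r t)
      ((norm_nonneg _).trans hψr)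

end IsStripBounded

lemma exists_subset_Ioo_of_subset_Ioi {K : Set ℝ} {c : ℝ} (hK : IsCompact K) (hc : K ⊆ Ioi c) :
    ∃ a b, c < a ∧ a < b ∧ K ⊆ Ioo a b := by
  rcases K.eq_empty_or_nonempty with rfl | hne
  · exact ⟨c + 1, c + 2, by linarith, by linarith, empty_subset _⟩
  obtain ⟨x, hxK, hx⟩ := hK.exists_isLeast hne
  obtain ⟨B, hB⟩ := hK.bddAbove
  obtain ⟨a, hca, hax⟩ := exists_between (mem_Ioi.1 (hc hxK))
  exact ⟨a, B + 1, hca, by linarith [hB hxK],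
    fun y hy => ⟨hax.trans_le (hx hy), (hB hy).trans_lt (lt_add_one B)⟩⟩

lemma HasWeakSecondDeriv.of_intervalIntegral {P g : ℝ → ℝ} {c : ℝ}
    (h : ∀ φ a b, c < a → a < b → IsTestFunction φ (Ioo a b) →
      ∫ x in a..b, deriv (deriv φ) x * P x = ∫ x in a..b, φ x * g x) :
    HasWeakSecondDeriv P g (Ioi c) := fun φ hφ => by
  obtain ⟨a, b, ha, hab, hsub⟩ := exists_subset_Ioo_of_subset_Ioi hφ.hasCompactSupport
    hφ.tsupport_subset
  have hφ' : IsTestFunction φ (Ioo a b) := { hφ with tsupport_subset := hsub }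
  rw [← intervalIntegral.integral_eq_integral_of_support_subset
      ((Function.support_mul_subset_left _ _).trans ((subset_tsupport _).trans
        (hφ'.tsupport_deriv_deriv_subset.trans Ioo_subset_Ioc_self))),
    ← intervalIntegral.integral_eq_integral_of_support_subset
      ((Function.support_mul_subset_left _ _).trans ((subset_tsupport _).trans
        (hsub.trans Ioo_subset_Ioc_self)))]
  exact h φ a b ha hab hφ'

/-- The potential of a solution, in the radial variable: `P_t = u ^ m` and `P_rr = u / r ^ 2`. -/
def radialPotential (m : ℝ) (u : ℝ → ℝ → ℝ) (u₀ : ℝ → ℝ) (r t : ℝ) : ℝ :=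
  timePotential (fun r t => u r t ^ m) r t + initialPotential (fun x => u₀ x / x) r

namespace IsRadialVeryWeakSolution

variable {m T : ℝ} {u : ℝ → ℝ → ℝ} {u₀ : ℝ → ℝ}

lemma isStripBounded {N : ℕ} (h : IsRadialVeryWeakSolution N m u u₀) : IsStripBounded u where
  nonneg := h.1
  continuousOn := h.2.1.mono (prod_mono_left Ioi_subset_Ici_self)
  bdd T hT := (h.2.2.1 T hT).imp fun _ hC r t hr ht htT => hC r hr.le t ⟨ht.le, htT⟩

lemma hasWeakSecondDeriv_timePotential (h : IsRadialVeryWeakSolution 1 m u u₀) (hm : 0 ≤ m)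
    (hT : 0 < T) :
    HasWeakSecondDeriv (fun r => timePotential (fun r t => u r t ^ m) r T)
      (fun r => u r T / r ^ 2 - u₀ r / r / r) (Ioi 0) := by
  refine .of_intervalIntegral fun φ a b ha hab hφ => ?_
  have hφ'' := hφ.contDiff_deriv.continuous_deriv le_rfl
  have hna : a ∉ tsupport φ := fun hmem => (hφ.tsupport_subset hmem).1.ne rfl
  have hnb : b ∉ tsupport φ := fun hmem => (hφ.tsupport_subset hmem).2.ne rfl
  have hweak := h.2.2.2 a b T (fun r _ => φ r) (fun _ _ => 0) (fun r _ => deriv φ r)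
    (fun r _ => deriv (deriv φ) r) ha hab hT (fun r _ => hφ.nonneg r)
    (fun _ _ => hasDerivAt_const _ _)
    (fun r _ => (hφ.contDiff.differentiable two_ne_zero r).hasDerivAt)
    (fun r _ => (hφ.contDiff_deriv.differentiable one_ne_zero r).hasDerivAt)
    (hφ.contDiff.continuous.comp continuous_fst) continuous_const
    (hφ.contDiff_deriv.continuous.comp continuous_fst) (hφ''.comp continuous_fst)
    (fun _ _ => ⟨image_eq_zero_of_notMem_tsupport hna, image_eq_zero_of_notMem_tsupport hnb⟩)
  simp only [Nat.cast_one, sub_self, zero_div, zero_mul, mul_zero, add_zero, zero_add, rpow_zero,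
    mul_one, one_mul, deriv_of_notMem_tsupport hna, deriv_of_notMem_tsupport hnb,
    intervalIntegral.integral_zero] at hweak
  rw [← (h.isStripBounded.rpow hm).integral_integral_mul_eq hφ'' ha hab.le hT, hweak]
  refine intervalIntegral.integral_congr fun r hr => ?_
  rw [uIcc_of_le hab.le] at hr
  simp only [rpow_neg (ha.le.trans hr.1), rpow_two]
  ring

lemma hasWeakSecondDeriv_radialPotential (h : IsRadialVeryWeakSolution 1 m u u₀) (hm : 0 ≤ m)
    (hint : IntegrableOn (fun x => u₀ x / x) (Ioi 0)) (hT : 0 < T) :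
    HasWeakSecondDeriv (fun r => radialPotential m u u₀ r T) (fun r => u r T / r ^ 2)
      (Ioi 0) := by
  have hflux : ContinuousOn (fun r => timePotential (fun r t => u r t ^ m) r T) (Ioi 0) :=
    (h.isStripBounded.rpow hm).continuousOn_timePotential.comp (f := fun r => (r, T))
      (by fun_prop) fun _ hr => ⟨hr, hT⟩
  have hinit : LocallyIntegrableOn (fun r => u₀ r / r / r) (Ioi 0) := by
    simpa only [div_eq_mul_inv] using hint.locallyIntegrableOn.mul_continuousOn
      (continuousOn_inv₀.mono fun _ hr => (mem_Ioi.1 hr).ne') isOpen_Ioi.isLocallyClosed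
  have hdensity : LocallyIntegrableOn (fun r => u r T / r ^ 2) (Ioi 0) :=
    ((h.isStripBounded.continuousOn_space hT).div (by fun_prop) fun _ hr =>
      (pow_pos (mem_Ioi.1 hr) 2).ne').locallyIntegrableOn measurableSet_Ioi
  simpa only [radialPotential, Pi.sub_apply, sub_add_cancel] using
    (h.hasWeakSecondDeriv_timePotential hm hT).add
    (hflux.locallyIntegrableOn measurableSet_Ioi)
    ((continuousOn_initialPotential hint).locallyIntegrableOn measurableSet_Ioi)
    (hdensity.sub hinit) hinit (hasWeakSecondDeriv_initialPotential hint)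

lemma continuousOn_radialPotential (h : IsRadialVeryWeakSolution 1 m u u₀) (hm : 0 ≤ m)
    (hint : IntegrableOn (fun x => u₀ x / x) (Ioi 0)) :
    ContinuousOn (fun z : ℝ × ℝ => radialPotential m u u₀ z.1 z.2) (Ioi 0 ×ˢ Ioi 0) :=
  (h.isStripBounded.rpow hm).continuousOn_timePotential.add
    ((continuousOn_initialPotential hint).comp continuousOn_fst fun _ hz => hz.1)

lemma hasLogJetAt_radialPotential (h : IsRadialVeryWeakSolution 1 m u u₀) (hm : 0 ≤ m)
    (hint : IntegrableOn (fun x => u₀ x / x) (Ioi 0)) (s : ℝ) {t : ℝ} (ht : 0 < t) :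
    HasLogJetAt (fun s t => radialPotential m u u₀ (exp s) t) (u (exp s) t ^ m)
      (deriv fun σ => radialPotential m u u₀ (exp σ) t) (u (exp s) t) s t := by
  have hweyl : ∀ σ,
      HasDerivAt (fun r => radialPotential m u u₀ r t)
        (deriv (fun r => radialPotential m u u₀ r t) (exp σ)) (exp σ) ∧
      HasDerivAt (deriv fun r => radialPotential m u u₀ r t)
        (u (exp σ) t / exp σ ^ 2) (exp σ) := fun σ =>
    (h.hasWeakSecondDeriv_radialPotential hm hint ht).hasDerivAt isOpen_Ioi
      ((h.continuousOn_radialPotential hm hint).comp (f := fun r => (r, t)) (by fun_prop)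
        fun _ hr => ⟨hr, ht⟩)
      ((h.isStripBounded.continuousOn_space ht).div (by fun_prop) fun _ hr =>
        (pow_pos (mem_Ioi.1 hr) 2).ne') (exp_pos σ)
  have hspace : ∀ σ, HasDerivAt (fun σ => radialPotential m u u₀ (exp σ) t)
      (deriv (fun r => radialPotential m u u₀ r t) (exp σ) * exp σ) σ :=
    fun σ => (hweyl σ).1.comp σ (Real.hasDerivAt_exp σ)
  have hderiv : (deriv fun σ => radialPotential m u u₀ (exp σ) t) =
      fun σ => deriv (fun r => radialPotential m u u₀ r t) (exp σ) * exp σ :=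
    funext fun σ => (hspace σ).deriv
  refine ⟨((h.isStripBounded.rpow hm).hasDerivAt_timePotential (exp_pos s) ht).add_const _,
    .of_forall fun σ => (hspace σ).differentiableAt.hasDerivAt, ?_⟩
  rw [hderiv]
  refine (((hweyl s).2.comp s (Real.hasDerivAt_exp s)).mul
    (Real.hasDerivAt_exp s)).congr_deriv ?_
  simp only [Function.comp_apply]
  field_simp

theorem isLogPotential (h : IsRadialVeryWeakSolution 1 m u u₀) (hm : 0 ≤ m)
    (hu₀ : ∀ x, 0 < x → 0 ≤ u₀ x) (hint : IntegrableOn (fun x => u₀ x / x) (Ioi 0)) :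
    IsLogPotential m (∫ x in Ioi 0, u₀ x / x) (fun s t => u (exp s) t)
      (fun s t => radialPotential m u u₀ (exp s) t)
      (fun s => initialPotential (fun x => u₀ x / x) (exp s)) := by
  have hdensity := h.isStripBounded
  have hflux := hdensity.rpow hm
  have hmass : ∀ x, 0 < x → 0 ≤ u₀ x / x := fun x hx => div_nonneg (hu₀ x hx) hx.le
  exact
    { density_nonneg := fun s t => hdensity.nonneg _ t
      density_bdd := fun T hT => (hdensity.bdd T hT).imp fun _ hC s t => hC _ t (exp_pos s)
      hasLogJetAt := fun s t ht => h.hasLogJetAt_radialPotential hm hint s ht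
      continuousOn := (h.continuousOn_radialPotential hm hint).comp
        (f := fun z : ℝ × ℝ => (exp z.1, z.2)) (by fun_prop) fun z hz => ⟨exp_pos z.1, hz.2⟩
      initial_le := fun s t ht => le_add_of_nonneg_left (hflux.timePotential_nonneg ht.le)
      le_initial_add := fun T hT => (hflux.bdd T hT).imp fun C hC s t ht htT => by
        linarith [hflux.timePotential_le (exp_pos s) ht fun τ hτ hτt =>
          hC _ τ (exp_pos s) hτ (hτt.trans htT),
          show radialPotential m u u₀ (exp s) t = _ + _ from rfl]
      initial_nonneg := fun s => initialPotential_nonneg hmass _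
      initial_le_mass := fun s => initialPotential_le hint hmass (exp_pos s).le
      tendsto_initial_atBot := (tendsto_initialPotential_zero hint).comp tendsto_exp_atBot_nhdsGT
      tendsto_initial_atTop := (tendsto_initialPotential_atTop hint).comp tendsto_exp_atTop }

end IsRadialVeryWeakSolution

lemma integral_comp_exp_mul (g : ℝ → ℝ) :
    ∫ x, exp x * g (exp x) = ∫ y in Ioi 0, g y := by
  rw [← Real.range_exp, ← image_univ, integral_image_eq_integral_abs_deriv_smul MeasurableSet.univ
    (fun x _ => (Real.hasDerivAt_exp x).hasDerivWithinAt) exp_injective.injOn, setIntegral_univ]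
  simp only [abs_of_pos (exp_pos _), smul_eq_mul]

lemma integral_div_abs_eq_of_even {g : ℝ → ℝ} (hg : ∀ x, g (-x) = g x) {L : ℝ} (hL : 0 < L) :
    ∫ x, g x / |x| = 2 * (L * ∫ y, g (exp (y * L))) := by
  have habs : ∀ x, g x / |x| = (fun r => g r / r) |x| := fun x => by
    rcases abs_choice x with h | h <;> simp only [h, hg]
  rw [integral_congr_ae (.of_forall habs), integral_comp_abs (f := fun r => g r / r),
    ← integral_comp_exp_mul, Measure.integral_comp_mul_right (fun x => g (exp x)), abs_inv,
    abs_of_pos hL, smul_eq_mul, mul_inv_cancel_left₀ hL.ne']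
  simp only [mul_div_cancel₀ _ (exp_ne_zero _)]

lemma rarefaction_one_of_nonneg {m k : ℝ} (hm : 1 < m) (hk : 0 ≤ k) :
    rarefaction m k 1 = (m - 1) / m * m ^ (-(1 / (m - 1))) * k ^ (m / (m - 1)) := by
  have hm₀ : 0 < m := one_pos.trans hm
  have hm₁ : m - 1 ≠ 0 := (sub_pos.2 hm).ne'
  have hexp : m / (m - 1) = 1 / (m - 1) + 1 := by field_simp; ring
  rw [rarefaction_one hm₀, max_eq_left (div_nonneg hk hm₀.le), hexp, div_rpow hk hm₀.le,
    rpow_neg hm₀.le, rpow_add_one hm₀.ne']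
  field_simp

/-- The Barenblatt-type profile of the equation in the physical variables, called `F` in the
statement. -/
def barenblattProfile (m k x t : ℝ) : ℝ :=
  if |x| < exp (k * t ^ (1 / m)) then
    t ^ (-(1 / m)) * (max (1 / m * t ^ (-(1 / m)) * log |x|) 0) ^ (1 / (m - 1))
  else 0

lemma barenblattProfile_neg (m k x t : ℝ) :
    barenblattProfile m k (-x) t = barenblattProfile m k x t := by
  simp only [barenblattProfile, abs_neg]

lemma mul_barenblattProfile_exp {m k t : ℝ} (ht : 0 < t) (y : ℝ) :
    t ^ (1 / m) * barenblattProfile m k (exp (y * t ^ (1 / m))) t = frontProfile m k y := by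
  have hL : 0 < t ^ (1 / m) := rpow_pos_of_pos ht _
  have hlog : 1 / m * (t ^ (1 / m))⁻¹ * (y * t ^ (1 / m)) = y / m := by
    field_simp
  simp only [barenblattProfile, frontProfile, abs_of_pos (exp_pos _), log_exp, rpow_neg ht.le,
    exp_lt_exp, mul_lt_mul_iff_left₀ hL, hlog, mul_ite, mul_zero, mul_inv_cancel_left₀ hL.ne']

lemma integral_abs_sub_barenblattProfile {m k t p : ℝ} (ht : 0 < t) {v : ℝ → ℝ}
    (hv : ∀ x, v (-x) = v x) :
    ∫ x, |v x - barenblattProfile m k x t| ^ p / |x| = (t ^ (1 / m)) ^ (1 - p) *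
      (2 * ∫ y, |t ^ (1 / m) * v (exp (y * t ^ (1 / m))) - frontProfile m k y| ^ p) := by
  have hL : 0 < t ^ (1 / m) := rpow_pos_of_pos ht _
  have hscale : ∀ y, |v (exp (y * t ^ (1 / m))) -
      barenblattProfile m k (exp (y * t ^ (1 / m))) t| ^ p =
      ((t ^ (1 / m)) ^ p)⁻¹ *
        |t ^ (1 / m) * v (exp (y * t ^ (1 / m))) - frontProfile m k y| ^ p := fun y => by
    rw [← mul_barenblattProfile_exp ht, ← mul_sub, abs_mul, abs_of_pos hL,
      mul_rpow hL.le (abs_nonneg _), inv_mul_cancel_left₀ (rpow_pos_of_pos hL p).ne']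
  rw [integral_div_abs_eq_of_even (fun x => by rw [hv, barenblattProfile_neg]) hL,
    integral_congr_ae (.of_forall hscale), integral_const_mul, rpow_sub hL, rpow_one]
  ring

/-- The exponent `(p - 1) / (m p)` is the one that makes the weighted `L^p` norm invariant under
the scaling `log |x| = y * t ^ (1 / m)`. -/
lemma rpow_mul_integral_rpow_eq {m k t p : ℝ} (ht : 0 < t) {v : ℝ → ℝ}
    (hv : ∀ x, v (-x) = v x) :
    t ^ ((p - 1) / (m * p)) *
        (∫ x, |v x - barenblattProfile m k x t| ^ p / |x|) ^ (1 / p) =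
      (2 * ∫ y, |t ^ (1 / m) * v (exp (y * t ^ (1 / m))) - frontProfile m k y| ^ p) ^
        (1 / p) := by
  have hL : 0 < t ^ (1 / m) := rpow_pos_of_pos ht _
  have hexp : (p - 1) / (m * p) + 1 / m * ((1 - p) * (1 / p)) = 0 := by
    rw [div_mul_eq_div_div_swap]; ring
  rw [integral_abs_sub_barenblattProfile ht hv, mul_rpow (rpow_nonneg hL.le _)
    (mul_nonneg zero_le_two (integral_nonneg fun y => rpow_nonneg (abs_nonneg _) _)),
    ← mul_assoc, ← rpow_mul hL.le, ← rpow_mul ht.le, ← rpow_add ht, hexp, rpow_zero, one_mul]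

theorem asymptotics_N1_zero_data_Lp_general (m k : ℝ) (hm : 1 < m) (u : ℝ → ℝ → ℝ)
    (u₀ : ℝ → ℝ) (hsol : IsRadialVeryWeakSolution 1 m u u₀) (heven : ∀ x t, u (-x) t = u x t)
    (hu₀nonneg : ∀ x, 0 < x → 0 ≤ u₀ x) (hint : IntegrableOn (fun x => u₀ x / x) (Ioi 0))
    (hkpos : 0 < k)
    (hk : (m - 1) / m * m ^ (-(1 / (m - 1))) * k ^ (m / (m - 1)) = ∫ x in Ioi 0, u₀ x / x)
    (p : ℝ) (hp : 1 ≤ p) :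
    Tendsto (fun t => t ^ ((p - 1) / (m * p)) *
      (∫ x, |u x t - barenblattProfile m k x t| ^ p / |x|) ^ (1 / p)) atTop (𝓝 0) := by
  have hp₀ : 0 < p := one_pos.trans_le hp
  have hpotential : IsLogPotential m (rarefaction m k 1) (fun s t => u (exp s) t)
      (fun s t => radialPotential m u u₀ (exp s) t)
      (fun s => initialPotential (fun x => u₀ x / x) (exp s)) := by
    rw [rarefaction_one_of_nonneg hm hkpos.le, hk]
    exact hsol.isLogPotential (one_pos.trans hm).le hu₀nonneg hint
  have hrescaled := ((hpotential.tendsto_integral_abs_sub_rpow hm hkpos hp).const_mul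
    2).rpow_const (p := 1 / p) (.inr (one_div_pos.2 hp₀).le)
  rw [mul_zero, zero_rpow (one_div_pos.2 hp₀).ne'] at hrescaled
  refine hrescaled.congr' ?_
  filter_upwards [eventually_gt_atTop 0] with t ht
  exact (rpow_mul_integral_rpow_eq ht (v := fun x => u x t) fun x => heven x t).symm

/-- **Theorem 1.3(a) (N = 1, `u₀(0) = 0`).** Let `m > 1` and let `u` be an even (radially
symmetric) very weak solution of `|x|^{-2} ∂ₜ u = ∂ₓₓ(u^m)` on `ℝ × (0,∞)` with even
initial datum `u₀ ∈ L^∞ ∩ C`, `u₀ ≥ 0`, `u₀ ≢ 0`, `u₀(0) = 0` and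
`M₀ = ∫₀^∞ u₀(x)/x dx < ∞`.  With `k > 0` determined by
`((m-1)/m) m^{-1/(m-1)} k^{m/(m-1)} = M₀` and the profile
`F(x,t) = t^{-1/m} [(1/m) t^{-1/m} log|x|]₊^{1/(m-1)}` for `0 < |x| < e^{k t^{1/m}}`,
`F(x,t) = 0` otherwise, one has for every `p ∈ [1,∞)`:
`t^{(p-1)/(mp)} ‖u(·,t) - F(·,t)‖_{p,1} → 0` as `t → ∞`, where
`‖h‖_{p,1} = (∫_ℝ |h(x)|^p/|x| dx)^{1/p}`. -/
theorem asymptotics_N1_zero_data_Lp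
    (m M₀ k : ℝ) (hm : 1 < m) (u : ℝ → ℝ → ℝ) (u₀ : ℝ → ℝ)
    (hsol : IsRadialVeryWeakSolution 1 m u u₀)
    (heven : ∀ x t, u (-x) t = u x t)
    (heven₀ : ∀ x, u₀ (-x) = u₀ x)
    (hu₀cont : Continuous u₀)
    (hu₀bdd : ∃ C : ℝ, ∀ x, u₀ x ≤ C)
    (hu₀nonneg : ∀ x, 0 ≤ u₀ x)
    (hu₀ne : ∃ x, u₀ x ≠ 0)
    (hu₀zero : u₀ 0 = 0)
    (hint : IntegrableOn (fun x => u₀ x / x) (Ioi 0))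
    (hM₀ : M₀ = ∫ x in Ioi (0 : ℝ), u₀ x / x)
    (hkpos : 0 < k)
    (hk : ((m - 1) / m) * m ^ (-(1 / (m - 1))) * k ^ (m / (m - 1)) = M₀)
    (F : ℝ → ℝ → ℝ)
    (hF : ∀ x t, F x t =
      if |x| < Real.exp (k * t ^ (1 / m)) then
        t ^ (-(1 / m)) * (max ((1 / m) * t ^ (-(1 / m)) * Real.log |x|) 0) ^ (1 / (m - 1))
      else 0) :
    ∀ p : ℝ, 1 ≤ p →
      Tendsto (fun t : ℝ =>
          t ^ ((p - 1) / (m * p)) * (∫ x : ℝ, |u x t - F x t| ^ p / |x|) ^ (1 / p))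
        atTop (𝓝 0) := by
  obtain rfl : F = barenblattProfile m k := funext fun x => funext fun t => hF x t
  exact asymptotics_N1_zero_data_Lp_general m k hm u u₀ hsol heven (fun x _ => hu₀nonneg x) hint
    hkpos (hk.trans hM₀)
end
end

section
/- Let N ≥ 1, m > 1, and let u be a radial very weak solution of Eq. (E) with initial datum u₀ ∈ L^∞(ℝ^N) ∩ C(ℝ^N), u₀ ≥ 0, u₀ ≢ 0, which is radially symmetric and radially non-increasing (i.e., u₀(r₁) ≥ u₀(r₂) whenever 0 ≤ r₁ ≤ r₂). Then for every t > 0 the function u(·,t) is radially symmetric and radially non-increasing in r = |x|. -/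
open Real MeasureTheory Set Filter Topology

noncomputable section

/-!
In the variable `s = log r` the equation reads `u_t = L (u ^ m)` with `L = ∂² + c ∂`, `c = N - 2`:
it is invariant under translations in `s`, that is, under dilations in `r`. Preservation of
monotonicity is therefore the comparison of a solution with its own dilations.

For two solutions `u₁, u₂`, add to `∫₀ᵗ (u₁ ^ m - u₂ ^ m)` a function which `L` maps to the
difference of the initial data. The sum `R` satisfies `L R = u₁ - u₂`, classically by Weyl's lemma,
and solves the degenerate linear equation `R_t = a L R` with a bounded coefficient `a ≥ 0`. In the
scale variable `σ` annihilated by `L`, the inequality `u₁ ≤ u₂` says that `R(·, t)` is concave, and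
concavity is preserved by a maximum principle for the gap between the graph of `R(·, t)` and its
chords. Working with gaps instead of `L R` avoids differentiating `R` beyond second order in space
and first order in time.
-/

/-! ### The operator `f ↦ f'' + c f'` and its scale function -/

/-- `f'' + c f' = g` in the classical sense on the whole line. -/
def HasDriftLaplacian (c : ℝ) (f g : ℝ → ℝ) : Prop :=
  ∃ f' : ℝ → ℝ, ∀ s, HasDerivAt f (f' s) s ∧ HasDerivAt f' (g s - c * f' s) s

namespace HasDriftLaplacian

variable {c : ℝ} {f g f₁ g₁ f₂ g₂ : ℝ → ℝ}

lemma continuous (h : HasDriftLaplacian c f g) : Continuous f :=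
  let ⟨_, hf'⟩ := h
  continuous_iff_continuousAt.2 fun s => (hf' s).1.continuousAt

lemma add (h₁ : HasDriftLaplacian c f₁ g₁) (h₂ : HasDriftLaplacian c f₂ g₂) :
    HasDriftLaplacian c (fun s => f₁ s + f₂ s) (fun s => g₁ s + g₂ s) := by
  obtain ⟨f₁', hf₁⟩ := h₁
  obtain ⟨f₂', hf₂⟩ := h₂
  refine ⟨fun s => f₁' s + f₂' s, fun s => ⟨(hf₁ s).1.add (hf₂ s).1, ?_⟩⟩
  exact ((hf₁ s).2.add (hf₂ s).2).congr_deriv (by ring)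

lemma const_mul (a : ℝ) (h : HasDriftLaplacian c f g) :
    HasDriftLaplacian c (fun s => a * f s) (fun s => a * g s) := by
  obtain ⟨f', hf⟩ := h
  refine ⟨fun s => a * f' s, fun s => ⟨(hf s).1.const_mul a, ?_⟩⟩
  exact ((hf s).2.const_mul a).congr_deriv (by ring)

lemma sub (h₁ : HasDriftLaplacian c f₁ g₁) (h₂ : HasDriftLaplacian c f₂ g₂) :
    HasDriftLaplacian c (fun s => f₁ s - f₂ s) (fun s => g₁ s - g₂ s) := by
  simpa only [neg_one_mul, ← sub_eq_add_neg] using h₁.add (h₂.const_mul (-1))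

lemma comp_add_const (h : HasDriftLaplacian c f g) (l : ℝ) :
    HasDriftLaplacian c (fun s => f (s + l)) (fun s => g (s + l)) :=
  let ⟨f', hf⟩ := h
  ⟨fun s => f' (s + l), fun s => ⟨(hf (s + l)).1.comp_add_const s l,
    (hf (s + l)).2.comp_add_const s l⟩⟩

lemma nonpos_of_isLocalMax {s : ℝ} (h : HasDriftLaplacian c f g) (hmax : IsLocalMax f s) :
    g s ≤ 0 := by
  obtain ⟨f', hf⟩ := h
  have hderiv : deriv f = f' := funext fun s => (hf s).1.deriv
  have hcrit : f' s = 0 := hderiv ▸ hmax.deriv_eq_zero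
  have hsecond : deriv (deriv f) s = g s := by
    rw [hderiv, (hf s).2.deriv, hcrit, mul_zero, sub_zero]
  by_contra! hpos
  -- a point that is both a local minimum and a local maximum has a constant neighbourhood
  have hmin : IsLocalMin f s := isLocalMin_of_deriv_deriv_pos (hsecond ▸ hpos)
    (hderiv ▸ hcrit) (hf s).1.continuousAt
  have hconst : f =ᶠ[𝓝 s] fun _ => f s := (hmax.and hmin).mono fun _ h => le_antisymm h.1 h.2
  have : deriv (deriv f) s = 0 := by rw [hconst.deriv.deriv_eq]; simp
  exact hpos.ne' (hsecond ▸ this)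

end HasDriftLaplacian

lemma hasDerivAt_exp_mul_of_drift {c a s : ℝ} {F : ℝ → ℝ} (h : HasDerivAt F (a - c * F s) s) :
    HasDerivAt (fun s => exp (c * s) * F s) (exp (c * s) * a) s := by
  refine (((hasDerivAt_id s).const_mul c).exp.mul h).congr_deriv ?_
  simp only [id_eq]
  ring

lemma hasDriftLaplacian_const (c a : ℝ) : HasDriftLaplacian c (fun _ => a) fun _ => 0 :=
  ⟨fun _ => 0, fun s => ⟨hasDerivAt_const s a, (hasDerivAt_const s 0).congr_deriv (by ring)⟩⟩

/-- The scale function `σ(s) = ∫₀ˢ e^{-cτ} dτ`: together with the constants it spans the kernel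
of `f ↦ f'' + c f'`. -/
def driftScale (c s : ℝ) : ℝ := ∫ τ in (0 : ℝ)..s, exp (-(c * τ))

lemma driftScale_zero (c : ℝ) : driftScale c 0 = 0 := intervalIntegral.integral_same

lemma hasDerivAt_driftScale (c s : ℝ) : HasDerivAt (driftScale c) (exp (-(c * s))) s :=
  (Continuous.integral_hasStrictDerivAt (by fun_prop) 0 s).hasDerivAt

lemma hasDerivAt_exp_neg_mul (c s : ℝ) :
    HasDerivAt (fun s => exp (-(c * s))) (0 - c * exp (-(c * s))) s := by
  refine ((hasDerivAt_id s).const_mul c).neg.exp.congr_deriv ?_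
  simp only [id_eq, Pi.neg_apply]
  ring

lemma hasDriftLaplacian_driftScale (c : ℝ) : HasDriftLaplacian c (driftScale c) fun _ => 0 :=
  ⟨_, fun s => ⟨hasDerivAt_driftScale c s, hasDerivAt_exp_neg_mul c s⟩⟩

@[fun_prop]
lemma continuous_driftScale (c : ℝ) : Continuous (driftScale c) :=
  (hasDriftLaplacian_driftScale c).continuous

lemma driftScale_strictMono (c : ℝ) : StrictMono (driftScale c) :=
  strictMono_of_hasDerivAt_pos (hasDerivAt_driftScale c) fun _ => exp_pos _

lemma exp_neg_mul_eq_one_sub_driftScale (c s : ℝ) :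
    exp (-(c * s)) = 1 - c * driftScale c s := by
  have hderiv (s : ℝ) : HasDerivAt (fun s => exp (-(c * s)) + c * driftScale c s) 0 s :=
    ((hasDerivAt_exp_neg_mul c s).add ((hasDerivAt_driftScale c s).const_mul c)).congr_deriv
      (by ring)
  have := is_const_of_deriv_eq_zero (fun s => (hderiv s).differentiableAt)
    (fun s => (hderiv s).deriv) s 0
  simp only [driftScale_zero, mul_zero, neg_zero, exp_zero, add_zero] at this
  linarith

/-- The solution `f` of `f'' + c f' = g` with `f(0) = f'(0) = 0`. -/
def driftPrimitive (c : ℝ) (g : ℝ → ℝ) (s : ℝ) : ℝ :=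
  ∫ τ in (0 : ℝ)..s, exp (-(c * τ)) * ∫ ρ in (0 : ℝ)..τ, exp (c * ρ) * g ρ

lemma hasDriftLaplacian_driftPrimitive (c : ℝ) {g : ℝ → ℝ} (hg : Continuous g) :
    HasDriftLaplacian c (driftPrimitive c g) g := by
  have hinner (s : ℝ) :
      HasDerivAt (fun τ => ∫ ρ in (0 : ℝ)..τ, exp (c * ρ) * g ρ) (exp (c * s) * g s) s :=
    (Continuous.integral_hasStrictDerivAt (by fun_prop) 0 s).hasDerivAt
  have houter (s : ℝ) := (hasDerivAt_exp_neg_mul c s).mul (hinner s)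
  refine ⟨_, fun s => ⟨(Continuous.integral_hasStrictDerivAt ?_ 0 s).hasDerivAt,
    (houter s).congr_deriv ?_⟩⟩
  · exact continuous_iff_continuousAt.2 fun s => (houter s).continuousAt
  · have : exp (-(c * s)) * exp (c * s) = 1 := by rw [← exp_add, neg_add_cancel, exp_zero]
    linear_combination g s * this

/-! ### Concavity in the scale variable -/

/-- The alternating determinant of the rows `(1, σ, f)` at the points `x, m, y`. For `x < m < y`
it is positive exactly when, in the variable `σ`, the graph of `f` lies at `m` below its chord
over `[x, y]`. -/
def chordGap (c : ℝ) (f : ℝ → ℝ) (x m y : ℝ) : ℝ :=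
  (driftScale c y - driftScale c m) * f x + (driftScale c x - driftScale c y) * f m
    + (driftScale c m - driftScale c x) * f y

lemma chordGap_rotate (c : ℝ) (f : ℝ → ℝ) (x m y : ℝ) :
    chordGap c f m y x = chordGap c f x m y := by
  unfold chordGap
  ring

lemma HasDriftLaplacian.chordGap_left {c : ℝ} {f g : ℝ → ℝ} (h : HasDriftLaplacian c f g)
    (m y : ℝ) : HasDriftLaplacian c (fun x => chordGap c f x m y)
      fun x => (driftScale c y - driftScale c m) * g x := by
  have hσ := hasDriftLaplacian_driftScale c
  convert ((h.const_mul (driftScale c y - driftScale c m)).add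
    (hσ.const_mul (f m - f y))).add
    (hasDriftLaplacian_const c (driftScale c m * f y - driftScale c y * f m)) using 2 with x x
  · unfold chordGap
    ring
  · ring

theorem hasDriftLaplacian_zero_iff_chordGap_eq_zero {c : ℝ} {f : ℝ → ℝ} :
    HasDriftLaplacian c f (fun _ => 0) ↔ ∀ x m y, chordGap c f x m y = 0 := by
  refine ⟨fun ⟨f', hf⟩ x m y => ?_, fun h => ?_⟩
  · have hflux (s : ℝ) : exp (c * s) * f' s = f' 0 := by
      have hderiv (s : ℝ) := hasDerivAt_exp_mul_of_drift (hf s).2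
      have := is_const_of_deriv_eq_zero (fun s => (hderiv s).differentiableAt)
        (fun s => by rw [(hderiv s).deriv, mul_zero]) s 0
      simpa only [mul_zero, exp_zero, one_mul] using this
    have hf' (s : ℝ) : f' s = f' 0 * exp (-(c * s)) := by
      rw [← hflux s, mul_right_comm, ← exp_add, add_neg_cancel, exp_zero, one_mul]
    have haffine (s : ℝ) : f s = f 0 + f' 0 * driftScale c s := by
      have hderiv (s : ℝ) : HasDerivAt (fun s => f s - f' 0 * driftScale c s) 0 s :=
        ((hf s).1.sub ((hasDerivAt_driftScale c s).const_mul (f' 0))).congr_deriv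
          (sub_eq_zero.2 (hf' s))
      have := is_const_of_deriv_eq_zero (fun s => (hderiv s).differentiableAt)
        (fun s => (hderiv s).deriv) s 0
      simp only [driftScale_zero, mul_zero, sub_zero] at this
      linarith
    simp only [chordGap, haffine x, haffine m, haffine y]
    ring
  · have hσ : 0 < driftScale c 1 := driftScale_zero c ▸ driftScale_strictMono c one_pos
    convert ((hasDriftLaplacian_driftScale c).const_mul ((f 1 - f 0) / driftScale c 1)).add
      (hasDriftLaplacian_const c (f 0)) using 2 with s s
    · have := h 0 1 s
      simp only [chordGap, driftScale_zero] at this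
      field_simp
      linarith
    · ring

lemma exists_sub_eq_driftScale_sub_mul (c : ℝ) {f f' : ℝ → ℝ} (hf : ∀ s, HasDerivAt f (f' s) s)
    {x y : ℝ} (hxy : x < y) : ∃ ξ ∈ Ioo x y,
      f y - f x = (driftScale c y - driftScale c x) * (exp (c * ξ) * f' ξ) := by
  have hσ := hasDerivAt_driftScale c
  obtain ⟨ξ, hξ, h⟩ := exists_ratio_hasDerivAt_eq_ratio_slope f f' hxy
    (fun s _ => (hf s).continuousAt.continuousWithinAt) (fun s _ => hf s) (driftScale c) _
    (fun s _ => (hσ s).continuousAt.continuousWithinAt) (fun s _ => hσ s)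
  refine ⟨ξ, hξ, ?_⟩
  have : exp (-(c * ξ)) * exp (c * ξ) = 1 := by rw [← exp_add, neg_add_cancel, exp_zero]
  linear_combination -exp (c * ξ) * h - (f y - f x) * this

/-- The mean value theorem for `f'' + c f'`. -/
lemma HasDriftLaplacian.exists_chordGap_eq {c : ℝ} {f g : ℝ → ℝ} (h : HasDriftLaplacian c f g)
    {x m y : ℝ} (hxm : x < m) (hmy : m < y) :
    ∃ ζ ∈ Ioo x y, ∃ k > 0, chordGap c f x m y = k * g ζ := by
  obtain ⟨f', hf⟩ := h
  obtain ⟨ξ, hξ, hleft⟩ := exists_sub_eq_driftScale_sub_mul c (fun s => (hf s).1) hxm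
  obtain ⟨η, hη, hright⟩ := exists_sub_eq_driftScale_sub_mul c (fun s => (hf s).1) hmy
  have hflux (s : ℝ) := hasDerivAt_exp_mul_of_drift (hf s).2
  have hξη : ξ < η := hξ.2.trans hη.1
  obtain ⟨ζ, hζ, hslope⟩ := exists_hasDerivAt_eq_slope _ _ hξη
    (fun s _ => (hflux s).continuousAt.continuousWithinAt) fun s _ => hflux s
  rw [eq_div_iff (sub_pos.2 hξη).ne'] at hslope
  have hσ := driftScale_strictMono c
  refine ⟨ζ, ⟨hξ.1.trans hζ.1, hζ.2.trans hη.2⟩,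
    (driftScale c m - driftScale c x) * (driftScale c y - driftScale c m)
      * ((η - ξ) * exp (c * ζ)), ?_, ?_⟩
  · have := sub_pos.2 (hσ hxm)
    have := sub_pos.2 (hσ hmy)
    have := sub_pos.2 hξη
    positivity
  · unfold chordGap
    linear_combination (driftScale c m - driftScale c x) * hright
      - (driftScale c y - driftScale c m) * hleft
      - (driftScale c m - driftScale c x) * (driftScale c y - driftScale c m) * hslope

/-- Concavity in the variable `σ`. -/
def DriftConcave (c : ℝ) (f : ℝ → ℝ) : Prop :=
  ∀ ⦃x m y : ℝ⦄, x ≤ m → m ≤ y → chordGap c f x m y ≤ 0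

lemma chordGap_self_left (c : ℝ) (f : ℝ → ℝ) (x y : ℝ) : chordGap c f x x y = 0 := by
  unfold chordGap
  ring

theorem driftConcave_iff_nonpos {c : ℝ} {f g : ℝ → ℝ} (h : HasDriftLaplacian c f g)
    (hg : Continuous g) : DriftConcave c f ↔ ∀ s, g s ≤ 0 := by
  refine ⟨fun hf s => ?_, fun hg x m y hxm hmy => ?_⟩
  · by_contra! hs
    obtain ⟨x, y, hsxy, hpos⟩ := mem_nhds_iff_exists_Ioo_subset.1
      (hg.continuousAt.eventually_const_lt hs)
    obtain ⟨ζ, hζ, k, hk, hgap⟩ := h.exists_chordGap_eq hsxy.1 hsxy.2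
    exact (hf hsxy.1.le hsxy.2.le).not_gt (hgap ▸ mul_pos hk (hpos hζ))
  · obtain rfl | hxm := hxm.eq_or_lt
    · exact (chordGap_self_left c f x y).le
    obtain rfl | hmy := hmy.eq_or_lt
    · exact (chordGap_rotate c f x m m ▸ chordGap_self_left c f m x).le
    obtain ⟨ζ, -, k, hk, hgap⟩ := h.exists_chordGap_eq hxm hmy
    exact hgap ▸ mul_nonpos_of_nonneg_of_nonpos hk.le (hg ζ)

/-! ### The maximum principle for chord gaps -/

/-- The growth function `1 + s² + σ(s)²`, which penalizes spatial infinity in the maximum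
principle. -/
def driftBarrier (c s : ℝ) : ℝ := 1 + s ^ 2 + driftScale c s ^ 2

@[fun_prop]
lemma continuous_driftBarrier (c : ℝ) : Continuous (driftBarrier c) := by
  unfold driftBarrier
  fun_prop

lemma one_le_driftBarrier (c s : ℝ) : 1 ≤ driftBarrier c s := by
  unfold driftBarrier
  nlinarith [sq_nonneg s, sq_nonneg (driftScale c s)]

lemma driftBarrier_add_add_pos (c x m y : ℝ) :
    0 < driftBarrier c x + driftBarrier c m + driftBarrier c y := by
  linarith [one_le_driftBarrier c x, one_le_driftBarrier c m, one_le_driftBarrier c y]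

lemma hasDriftLaplacian_driftBarrier (c : ℝ) :
    HasDriftLaplacian c (driftBarrier c) fun s => 2 + 2 * c * s + 2 * exp (-(c * s)) ^ 2 := by
  refine ⟨fun s => 2 * s + 2 * driftScale c s * exp (-(c * s)), fun s => ⟨?_, ?_⟩⟩
  · refine (((hasDerivAt_pow 2 s).const_add 1).add
      ((hasDerivAt_driftScale c s).pow 2)).congr_deriv ?_
    push_cast
    ring
  · refine (((hasDerivAt_id s).const_mul 2).add
      (((hasDerivAt_driftScale c s).const_mul 2).mul (hasDerivAt_exp_neg_mul c s))).congr_deriv ?_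
    ring

lemma laplacian_driftBarrier_le (c s : ℝ) :
    2 + 2 * c * s + 2 * exp (-(c * s)) ^ 2 ≤ (7 + 4 * c ^ 2) * driftBarrier c s := by
  rw [exp_neg_mul_eq_one_sub_driftScale, driftBarrier]
  nlinarith [sq_nonneg (1 - c * s), sq_nonneg (1 + c * driftScale c s),
    sq_nonneg (c * s), sq_nonneg s, sq_nonneg (driftScale c s), sq_nonneg c]

lemma chordGap_le_of_abs_sub_le {c C : ℝ} {f f₀ : ℝ → ℝ} (hf₀ : DriftConcave c f₀)
    (hC : ∀ s, |f s - f₀ s| ≤ C) {x m y : ℝ} (hxm : x ≤ m) (hmy : m ≤ y) :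
    chordGap c f x m y ≤ 2 * C * (driftScale c y - driftScale c x) := by
  have hσ := (driftScale_strictMono c).monotone
  have hα := sub_nonneg.2 (hσ hmy)
  have hβ := sub_nonneg.2 (hσ hxm)
  have hgap₀ := hf₀ hxm hmy
  have hx := mul_le_mul_of_nonneg_left (abs_le.1 (hC x)).2 hα
  have hy := mul_le_mul_of_nonneg_left (abs_le.1 (hC y)).2 hβ
  have hm := mul_le_mul_of_nonneg_left (abs_le.1 (hC m)).1 (add_nonneg hα hβ)
  unfold chordGap at hgap₀ ⊢
  linarith

lemma HasDriftLaplacian.left_le_of_isLocalMax {c δ : ℝ} {f g b k : ℝ → ℝ}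
    (hf : HasDriftLaplacian c f g) (hb : HasDriftLaplacian c b k) {x m y : ℝ}
    (hmax : IsLocalMax (fun x => chordGap c f x m y - δ * b x) x) :
    (driftScale c y - driftScale c m) * g x ≤ δ * k x :=
  sub_nonpos.1 (((hf.chordGap_left m y).sub (hb.const_mul δ)).nonpos_of_isLocalMax hmax)

lemma nonneg_of_hasDerivAt_of_isMaxOn_Icc {f : ℝ → ℝ} {f' a b : ℝ} (hab : a < b)
    (hf : HasDerivAt f f' b) (hmax : IsMaxOn f (Icc a b) b) : 0 ≤ f' := by
  have hleft : a - b ∈ posTangentConeAt (Icc a b) b :=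
    sub_mem_posTangentConeAt_of_segment_subset (segment_symm ℝ a b ▸ segment_eq_Icc hab.le).subset
  have := hmax.localize.hasFDerivWithinAt_nonpos hf.hasFDerivAt.hasFDerivWithinAt hleft
  simp only [ContinuousLinearMap.toSpanSingleton_apply, smul_eq_mul] at this
  exact nonneg_of_mul_nonpos_right this (sub_neg.2 hab)

/-- A bounded perturbation `R(·, t)` of `R(·, 0)` that solves the degenerate parabolic equation
`R_t = a (R_ss + c R_s)` classically for `0 < t ≤ T`, where `w = R_ss + c R_s` and the coefficient
takes values in `[0, K]`. -/
structure IsDriftFlow (c K T : ℝ) (R a w : ℝ → ℝ → ℝ) : Prop where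
  continuousOn : ContinuousOn (fun p : ℝ × ℝ => R p.1 p.2) (univ ×ˢ Icc 0 T)
  bounded : ∃ C, ∀ s, ∀ t ∈ Icc 0 T, |R s t - R s 0| ≤ C
  hasDriftLaplacian : ∀ t ∈ Ioc 0 T, HasDriftLaplacian c (fun s => R s t) fun s => w s t
  hasDerivAt : ∀ s, ∀ t ∈ Ioc 0 T, HasDerivAt (R s) (a s t * w s t) t
  coeff_mem : ∀ s, ∀ t ∈ Ioc 0 T, a s t ∈ Icc 0 K

/-- The chord gap of `R(·, t)` at the points `x, m, y` of `p = (x, m, y, t)`, minus a penalty which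
grows at spatial infinity and exponentially in time. -/
def penalizedGap (c : ℝ) (R : ℝ → ℝ → ℝ) (ε Λ : ℝ) (p : ℝ × ℝ × ℝ × ℝ) : ℝ :=
  chordGap c (fun s => R s p.2.2.2) p.1 p.2.1 p.2.2.1
    - ε * exp (Λ * p.2.2.2) * (driftBarrier c p.1 + driftBarrier c p.2.1 + driftBarrier c p.2.2.1)

/-- The points `(x, m, y, t)` with `x ≤ m ≤ y` and `0 ≤ t ≤ T`. -/
def orderedTriples (T : ℝ) : Set (ℝ × ℝ × ℝ × ℝ) :=
  {p | p.1 ≤ p.2.1 ∧ p.2.1 ≤ p.2.2.1 ∧ p.2.2.2 ∈ Icc 0 T}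

lemma isClosed_orderedTriples (T : ℝ) : IsClosed (orderedTriples T) := by
  refine (isClosed_le continuous_fst ?_).inter
    ((isClosed_le (f := fun p : ℝ × ℝ × ℝ × ℝ => p.2.1) ?_ ?_).inter
      (isClosed_Icc.preimage (f := fun p : ℝ × ℝ × ℝ × ℝ => p.2.2.2) ?_)) <;> fun_prop

namespace IsDriftFlow

variable {c K T : ℝ} {R a w : ℝ → ℝ → ℝ}

lemma continuousOn_penalizedGap (h : IsDriftFlow c K T R a w) (ε Λ : ℝ) :
    ContinuousOn (penalizedGap c R ε Λ) (orderedTriples T) := by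
  have hR {φ : ℝ × ℝ × ℝ × ℝ → ℝ} (hφ : Continuous φ) :
      ContinuousOn (fun p => R (φ p) p.2.2.2) (orderedTriples T) :=
    h.continuousOn.comp (f := fun p => (φ p, p.2.2.2)) (by fun_prop)
      fun p hp => ⟨mem_univ _, hp.2.2⟩
  have hx := hR continuous_fst
  have hm := hR (φ := fun p => p.2.1) (by fun_prop)
  have hy := hR (φ := fun p => p.2.2.1) (by fun_prop)
  exact ((((Continuous.continuousOn (by fun_prop)).mul hx).add
    ((Continuous.continuousOn (by fun_prop)).mul hm)).add
    ((Continuous.continuousOn (by fun_prop)).mul hy)).sub (Continuous.continuousOn (by fun_prop))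

lemma exists_penalizedGap_le (h : IsDriftFlow c K T R a w) (h₀ : DriftConcave c fun s => R s 0)
    {ε Λ : ℝ} (hε : 0 < ε) (hΛ : 0 ≤ Λ) : ∃ B, ∀ p ∈ orderedTriples T,
      penalizedGap c R ε Λ p ≤ B - ε * (p.1 ^ 2 + p.2.1 ^ 2 + p.2.2.1 ^ 2) := by
  obtain ⟨C, hC⟩ := h.bounded
  refine ⟨2 * (C ^ 2 / ε), fun ⟨x, m, y, t⟩ ⟨hxm, hmy, ht⟩ => ?_⟩
  have hgap : chordGap c (fun s => R s t) x m y ≤ 2 * C * (driftScale c y - driftScale c x) :=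
    chordGap_le_of_abs_sub_le h₀ (fun s => hC s t ht) hxm hmy
  have hyoung (q : ℝ) : 2 * C * q ≤ C ^ 2 / ε + ε * q ^ 2 := by
    have : 0 ≤ (C - ε * q) ^ 2 / ε := by positivity
    have : C ^ 2 / ε + ε * q ^ 2 - 2 * C * q = (C - ε * q) ^ 2 / ε := by
      field_simp
      ring
    linarith
  have hpenalty := mul_le_mul_of_nonneg_right
    (le_mul_of_one_le_right hε.le (one_le_exp (mul_nonneg hΛ ht.1)))
    (driftBarrier_add_add_pos c x m y).le
  have hyoung_y := hyoung (driftScale c y)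
  have hyoung_x := hyoung (-driftScale c x)
  simp only [penalizedGap, driftBarrier] at hpenalty ⊢
  linarith [mul_nonneg hε.le (sq_nonneg (driftScale c m))]

lemma exists_isMaxOn_penalizedGap (h : IsDriftFlow c K T R a w)
    (h₀ : DriftConcave c fun s => R s 0) {ε Λ : ℝ} (hε : 0 < ε) (hΛ : 0 ≤ Λ)
    {p₀ : ℝ × ℝ × ℝ × ℝ} (hp₀ : p₀ ∈ orderedTriples T) (hpos : 0 < penalizedGap c R ε Λ p₀) :
    ∃ p ∈ orderedTriples T, IsMaxOn (penalizedGap c R ε Λ) (orderedTriples T) p := by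
  obtain ⟨B, hB⟩ := h.exists_penalizedGap_le h₀ hε hΛ
  refine (h.continuousOn_penalizedGap ε Λ).exists_isMaxOn' (isClosed_orderedTriples T) hp₀ ?_
  have hbox := (isCompact_closedBall (0 : ℝ × ℝ × ℝ × ℝ) (1 + B / ε + T)).compl_mem_cocompact
  refine eventually_inf_principal.2 (mem_of_superset hbox fun p hout hp => ?_)
  refine le_trans ?_ hpos.le
  contrapose! hout
  have hsum : p.1 ^ 2 + p.2.1 ^ 2 + p.2.2.1 ^ 2 ≤ B / ε :=
    (le_div_iff₀' hε).2 (by linarith [hB p hp])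
  have habs (q : ℝ) (hq : q ^ 2 ≤ B / ε) : |q| ≤ 1 + B / ε + T := by
    nlinarith [sq_abs q, sq_nonneg (|q| - 1), hp.2.2.1.trans hp.2.2.2]
  rw [notMem_compl_iff, mem_closedBall_zero_iff]
  simp only [Prod.norm_def, norm_eq_abs, sup_le_iff]
  refine ⟨habs _ ?_, habs _ ?_, habs _ ?_, ?_⟩
  iterate 3 nlinarith [sq_nonneg p.1, sq_nonneg p.2.1, sq_nonneg p.2.2.1]
  rw [abs_of_nonneg hp.2.2.1]
  nlinarith [hp.2.2.2, sq_nonneg p.1, sq_nonneg p.2.1, sq_nonneg p.2.2.1]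

lemma hasDerivAt_penalizedGap (h : IsDriftFlow c K T R a w) (ε Λ x m y : ℝ) {t : ℝ}
    (ht : t ∈ Ioc 0 T) : HasDerivAt (fun τ => penalizedGap c R ε Λ (x, m, y, τ))
      (chordGap c (fun s => a s t * w s t) x m y
        - Λ * (ε * exp (Λ * t) * (driftBarrier c x + driftBarrier c m + driftBarrier c y))) t := by
  have hR (s α : ℝ) := (h.hasDerivAt s t ht).const_mul α
  have hexp := (((hasDerivAt_id t).const_mul Λ).exp.const_mul ε).mul_const
    (driftBarrier c x + driftBarrier c m + driftBarrier c y)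
  refine ((((hR x (driftScale c y - driftScale c m)).add
    (hR m (driftScale c x - driftScale c y))).add
    (hR y (driftScale c m - driftScale c x))).sub hexp).congr_deriv ?_
  simp only [chordGap, id_eq]
  ring

/-- At a maximum `x < m < y` of the penalized gap the second derivative test in each of the three
variables bounds `w` there, hence bounds the time derivative of the gap by its penalty. -/
lemma chordGap_le_of_isMaxOn_penalizedGap (h : IsDriftFlow c K T R a w) {ε Λ x m y t : ℝ}
    (hε : 0 < ε) (hxm : x < m) (hmy : m < y) (ht : t ∈ Ioc 0 T)
    (hmax : IsMaxOn (penalizedGap c R ε Λ) (orderedTriples T) (x, m, y, t)) :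
    chordGap c (fun s => a s t * w s t) x m y ≤ K * (7 + 4 * c ^ 2)
      * (ε * exp (Λ * t) * (driftBarrier c x + driftBarrier c m + driftBarrier c y)) := by
  set δ := ε * exp (Λ * t) with hδ_def
  have hδ : 0 < δ := by positivity
  have hR := h.hasDriftLaplacian t ht
  have hb := hasDriftLaplacian_driftBarrier c
  have hle {x' m' y' : ℝ} (hxm' : x' ≤ m') (hmy' : m' ≤ y') :=
    hmax (show (x', m', y', t) ∈ orderedTriples T from ⟨hxm', hmy', Ioc_subset_Icc_self ht⟩)
  simp only [penalizedGap, ← hδ_def, mem_ofPred_eq] at hle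
  have hx : (driftScale c y - driftScale c m) * w x t ≤ δ * _ := hR.left_le_of_isLocalMax hb (by
    filter_upwards [Iio_mem_nhds hxm] with x' hx'
    linarith [hle (mem_Iio.1 hx').le hmy.le])
  have hm : (driftScale c x - driftScale c y) * w m t ≤ δ * _ := hR.left_le_of_isLocalMax hb (by
    filter_upwards [Ioo_mem_nhds hxm hmy] with m' hm'
    simp only [chordGap_rotate]
    linarith [hle hm'.1.le hm'.2.le])
  have hy : (driftScale c m - driftScale c x) * w y t ≤ δ * _ := hR.left_le_of_isLocalMax hb (by
    filter_upwards [Ioi_mem_nhds hmy] with y' hy'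
    simp only [← chordGap_rotate c _ _ x m]
    linarith [hle hxm.le (mem_Ioi.1 hy').le])
  have hscale {s α : ℝ}
      (hw : α * w s t ≤ δ * (2 + 2 * c * s + 2 * exp (-(c * s)) ^ 2)) :
      α * (a s t * w s t) ≤ K * (7 + 4 * c ^ 2) * (δ * driftBarrier c s) := by
    have ha := h.coeff_mem s t ht
    have hw' := hw.trans (mul_le_mul_of_nonneg_left (laplacian_driftBarrier_le c s) hδ.le)
    have hnonneg : 0 ≤ δ * ((7 + 4 * c ^ 2) * driftBarrier c s) := by
      have := one_le_driftBarrier c s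
      positivity
    linarith [mul_le_mul_of_nonneg_left hw' ha.1, mul_le_mul_of_nonneg_right ha.2 hnonneg]
  unfold chordGap
  linarith [hscale hx, hscale hm, hscale hy]

lemma not_isMaxOn_penalizedGap (h : IsDriftFlow c K T R a w) {ε Λ x m y t : ℝ}
    (hε : 0 < ε) (hΛ : K * (7 + 4 * c ^ 2) < Λ) (hxm : x < m) (hmy : m < y) (ht : t ∈ Ioc 0 T) :
    ¬ IsMaxOn (penalizedGap c R ε Λ) (orderedTriples T) (x, m, y, t) := by
  intro hmax
  have hspace := h.chordGap_le_of_isMaxOn_penalizedGap hε hxm hmy ht hmax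
  have htime := nonneg_of_hasDerivAt_of_isMaxOn_Icc ht.1
    (h.hasDerivAt_penalizedGap ε Λ x m y ht)
    fun τ hτ => hmax ⟨hxm.le, hmy.le, hτ.1, hτ.2.trans ht.2⟩
  have hpenalty := mul_pos (mul_pos hε (exp_pos (Λ * t)))
    (driftBarrier_add_add_pos c x m y)
  linarith [mul_lt_mul_of_pos_right hΛ hpenalty]

theorem penalizedGap_nonpos (h : IsDriftFlow c K T R a w) (h₀ : DriftConcave c fun s => R s 0)
    {ε Λ : ℝ} (hε : 0 < ε) (hΛ₀ : 0 ≤ Λ) (hΛ : K * (7 + 4 * c ^ 2) < Λ) {p : ℝ × ℝ × ℝ × ℝ}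
    (hp : p ∈ orderedTriples T) : penalizedGap c R ε Λ p ≤ 0 := by
  by_contra! hpos
  obtain ⟨⟨x, m, y, t⟩, ⟨hxm, hmy, ht⟩, hmax⟩ :=
    h.exists_isMaxOn_penalizedGap h₀ hε hΛ₀ hp hpos
  have hgap : 0 < chordGap c (fun s => R s t) x m y :=
    (mul_pos (mul_pos hε (exp_pos _)) (driftBarrier_add_add_pos c x m y)).trans
      (sub_pos.1 (hpos.trans_le (hmax hp)))
  have hxm' : x < m := hxm.lt_of_ne fun h => by
    simp [show x = m from h, chordGap_self_left] at hgap
  have hmy' : m < y := hmy.lt_of_ne fun h => by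
    simp [show m = y from h, ← chordGap_rotate c _ x, chordGap_self_left] at hgap
  have ht' : 0 < t := ht.1.lt_of_ne fun h => by
    rw [← show 0 = t from h] at hgap
    exact hgap.not_ge (h₀ hxm hmy)
  exact h.not_isMaxOn_penalizedGap hε hΛ hxm' hmy' ⟨ht', ht.2⟩ hmax

theorem driftConcave (h : IsDriftFlow c K T R a w) (h₀ : DriftConcave c fun s => R s 0)
    {t : ℝ} (ht : t ∈ Icc 0 T) : DriftConcave c fun s => R s t := by
  obtain rfl | ht' := ht.1.eq_or_lt
  · exact h₀
  have ha := h.coeff_mem 0 t ⟨ht', ht.2⟩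
  intro x m y hxm hmy
  by_contra! hgap
  set G := chordGap c (fun s => R s t) x m y
  set Λ := K * (7 + 4 * c ^ 2) + 1
  set A := exp (Λ * t) * (driftBarrier c x + driftBarrier c m + driftBarrier c y)
  have hA : 0 < A := mul_pos (exp_pos _) (driftBarrier_add_add_pos c x m y)
  have hK : 0 ≤ K := ha.1.trans ha.2
  have hle : G - G / (2 * A) * exp (Λ * t)
      * (driftBarrier c x + driftBarrier c m + driftBarrier c y) ≤ 0 :=
    h.penalizedGap_nonpos h₀ (by positivity) (by positivity) (lt_add_one _)
      (show (x, m, y, t) ∈ orderedTriples T from ⟨hxm, hmy, ht⟩)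
  rw [mul_assoc, show G / (2 * A) * A = G / 2 by field_simp] at hle
  linarith

end IsDriftFlow

/-! ### Distributional solutions -/

/-- `f'' + c f' = g` in the sense of distributions, tested against nonnegative functions. -/
def IsWeakDriftLaplacian (c : ℝ) (f g : ℝ → ℝ) : Prop :=
  ∀ η : ℝ → ℝ, ContDiff ℝ 2 η → HasCompactSupport η → (∀ s, 0 ≤ η s) →
    ∫ s, f s * (deriv (deriv η) s - c * deriv η s) = ∫ s, g s * η s

lemma integrable_mul_of_hasCompactSupport {f k : ℝ → ℝ} (hf : Continuous f)
    (hk : Continuous k) (hsupp : HasCompactSupport k) : Integrable fun s => f s * k s :=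
  (hf.mul hk).integrable_of_hasCompactSupport hsupp.mul_left

lemma integrable_mul_adjoint {c : ℝ} {f η : ℝ → ℝ} (hf : Continuous f) (hη : ContDiff ℝ 2 η)
    (hsupp : HasCompactSupport η) :
    Integrable fun s => f s * (deriv (deriv η) s - c * deriv η s) := by
  have hη₁ : ContDiff ℝ 1 (deriv η) := hη.deriv'
  exact integrable_mul_of_hasCompactSupport hf
    ((hη₁.continuous_deriv le_rfl).sub (hη₁.continuous.const_mul c))
    (hsupp.deriv.deriv.sub hsupp.deriv.mul_left)

lemma HasDriftLaplacian.isWeakDriftLaplacian {c : ℝ} {f g : ℝ → ℝ} (h : HasDriftLaplacian c f g)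
    (hg : Continuous g) : IsWeakDriftLaplacian c f g := by
  have hf_cont := h.continuous
  obtain ⟨f', hf⟩ := h
  have hf'_cont : Continuous f' := continuous_iff_continuousAt.2 fun s => (hf s).2.continuousAt
  intro η hη hsupp _
  have hη₁ : ContDiff ℝ 1 (deriv η) := hη.deriv'
  have hderiv (s : ℝ) : HasDerivAt (fun s => f s * (deriv η s - c * η s) - f' s * η s)
      (f s * (deriv (deriv η) s - c * deriv η s) - g s * η s) s := by
    have hηs := (hη.differentiable two_ne_zero s).hasDerivAt
    have hη₁s := (hη₁.differentiable one_ne_zero s).hasDerivAt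
    refine (((hf s).1.mul (hη₁s.sub (hηs.const_mul c))).sub ((hf s).2.mul hηs)).congr_deriv ?_
    simp only [Pi.sub_apply]
    ring
  have hleft := integrable_mul_adjoint (c := c) hf_cont hη hsupp
  have hright := integrable_mul_of_hasCompactSupport hg hη.continuous hsupp
  have hprim := (integrable_mul_of_hasCompactSupport hf_cont
    (hη₁.continuous.sub (hη.continuous.const_mul c)) (hsupp.deriv.sub hsupp.mul_left)).sub
    (integrable_mul_of_hasCompactSupport hf'_cont hη.continuous hsupp)
  have := integral_eq_zero_of_hasDerivAt_of_integrable hderiv (hleft.sub hright) hprim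
  rwa [integral_sub hleft hright, sub_eq_zero] at this

namespace IsWeakDriftLaplacian

open scoped Convolution

variable {c : ℝ} {f g f₁ g₁ f₂ g₂ : ℝ → ℝ}

/-- Test against `τ ↦ φ (s - τ)`. -/
lemma hasDriftLaplacian_convolution (h : IsWeakDriftLaplacian c f g) (hf : Continuous f)
    {φ : ℝ → ℝ} (hφ : ContDiff ℝ 2 φ) (hsupp : HasCompactSupport φ) (hnonneg : ∀ s, 0 ≤ φ s) :
    HasDriftLaplacian c (φ ⋆ f) (φ ⋆ g) := by
  have hφ₁ : ContDiff ℝ 1 (deriv φ) := hφ.deriv'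
  refine ⟨deriv φ ⋆ f, fun s => ⟨?_, ?_⟩⟩
  · exact hsupp.hasDerivAt_convolution_left _ (hφ.of_le one_le_two) hf.locallyIntegrable s
  · refine (hsupp.deriv.hasDerivAt_convolution_left _ hφ₁ hf.locallyIntegrable s).congr_deriv ?_
    have hφ₂ : Continuous (deriv (deriv φ)) := hφ₁.continuous_deriv le_rfl
    have htest := h (fun τ => φ (s - τ)) (by fun_prop)
      (hsupp.comp_homeomorph (Homeomorph.subLeft s)) fun τ => hnonneg _
    have hη₁ : deriv (fun τ => φ (s - τ)) = fun τ => -deriv φ (s - τ) :=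
      funext fun τ => deriv_comp_const_sub ..
    have hη₂ : deriv (deriv fun τ => φ (s - τ)) = fun τ => deriv (deriv φ) (s - τ) := by
      funext τ
      rw [hη₁, deriv.fun_neg, deriv_comp_const_sub, neg_neg]
    have hint {ψ : ℝ → ℝ} (hψ : Continuous ψ) (hψsupp : HasCompactSupport ψ) :
        Integrable fun τ => ψ (s - τ) • f τ := by
      simpa only [smul_eq_mul, mul_comm] using integrable_mul_of_hasCompactSupport
        (k := fun τ => ψ (s - τ)) hf (by fun_prop)
        (hψsupp.comp_homeomorph (Homeomorph.subLeft s))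
    rw [eq_sub_iff_add_eq, convolution_lsmul_swap, convolution_lsmul_swap, convolution_lsmul_swap,
      ← integral_const_mul, ← integral_add (hint hφ₂ hsupp.deriv.deriv)
        ((hint hφ₁.continuous hsupp.deriv).const_mul c)]
    rw [hη₂, hη₁] at htest
    convert htest using 2
    · ext τ
      rw [smul_eq_mul, smul_eq_mul]
      ring
    · ext τ
      rw [smul_eq_mul, mul_comm]

lemma sub (h₁ : IsWeakDriftLaplacian c f₁ g₁) (h₂ : IsWeakDriftLaplacian c f₂ g₂)
    (hf₁ : Continuous f₁) (hf₂ : Continuous f₂) (hg₁ : Continuous g₁) (hg₂ : Continuous g₂) :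
    IsWeakDriftLaplacian c (fun s => f₁ s - f₂ s) fun s => g₁ s - g₂ s := by
  intro η hη hsupp hnonneg
  simp only [sub_mul]
  rw [integral_sub (integrable_mul_adjoint hf₁ hη hsupp) (integrable_mul_adjoint hf₂ hη hsupp),
    integral_sub (integrable_mul_of_hasCompactSupport hg₁ hη.continuous hsupp)
      (integrable_mul_of_hasCompactSupport hg₂ hη.continuous hsupp),
    h₁ η hη hsupp hnonneg, h₂ η hη hsupp hnonneg]

lemma hasDriftLaplacian_zero (h : IsWeakDriftLaplacian c f fun _ => 0) (hf : Continuous f) :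
    HasDriftLaplacian c f fun _ => 0 := by
  let φ (n : ℕ) : ContDiffBump (0 : ℝ) := ⟨1 / (n + 1) / 2, 1 / (n + 1), by positivity,
    half_lt_self (by positivity)⟩
  have hlim (s : ℝ) := ContDiffBump.convolution_tendsto_right_of_continuous (μ := volume)
    (φ := φ) tendsto_one_div_add_atTop_nhds_zero_nat hf s
  rw [hasDriftLaplacian_zero_iff_chordGap_eq_zero]
  intro x m y
  have hgap := (((hlim x).const_mul (driftScale c y - driftScale c m)).add
    ((hlim m).const_mul (driftScale c x - driftScale c y))).add
    ((hlim y).const_mul (driftScale c m - driftScale c x))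
  refine tendsto_nhds_unique hgap (tendsto_const_nhds.congr fun n => ?_)
  have hmollified := h.hasDriftLaplacian_convolution hf ((φ n).contDiff_normed (μ := volume))
    (φ n).hasCompactSupport_normed fun s => (φ n).nonneg_normed s
  have hzero : ((φ n).normed volume ⋆ fun _ => (0 : ℝ)) = fun _ => 0 := convolution_zero
  rw [hzero, hasDriftLaplacian_zero_iff_chordGap_eq_zero] at hmollified
  exact (hmollified x m y).symm

/-- Weyl's lemma. -/
theorem hasDriftLaplacian (h : IsWeakDriftLaplacian c f g) (hf : Continuous f)
    (hg : Continuous g) : HasDriftLaplacian c f g := by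
  have hprim := hasDriftLaplacian_driftPrimitive c hg
  have hharmonic := h.sub (hprim.isWeakDriftLaplacian hg) hf hprim.continuous hg hg
  simp only [sub_self] at hharmonic
  simpa only [sub_add_cancel, zero_add] using
    (hharmonic.hasDriftLaplacian_zero (hf.sub hprim.continuous)).add hprim

end IsWeakDriftLaplacian

/-! ### Time-integrated densities -/

/-- A density `W s t`, `t > 0`, which can be integrated in time from `t = 0`. -/
structure IsBoundedDensity (W : ℝ → ℝ → ℝ) : Prop where
  continuousOn : ContinuousOn (fun p : ℝ × ℝ => W p.1 p.2) (univ ×ˢ Ioi 0)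
  bounded : ∀ T, ∃ M, ∀ s, ∀ t ∈ Ioc 0 T, |W s t| ≤ M

/-- The accumulated density `∫₀ᵗ W(s,τ) dτ`. -/
def timeIntegral (W : ℝ → ℝ → ℝ) (s t : ℝ) : ℝ := ∫ τ in (0 : ℝ)..t, W s τ

namespace IsBoundedDensity

variable {W W₁ W₂ : ℝ → ℝ → ℝ}

lemma sub (h₁ : IsBoundedDensity W₁) (h₂ : IsBoundedDensity W₂) :
    IsBoundedDensity fun s t => W₁ s t - W₂ s t := by
  refine ⟨h₁.continuousOn.sub h₂.continuousOn, fun T => ?_⟩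
  obtain ⟨M₁, hM₁⟩ := h₁.bounded T
  obtain ⟨M₂, hM₂⟩ := h₂.bounded T
  exact ⟨M₁ + M₂, fun s t ht => (abs_sub _ _).trans (add_le_add (hM₁ s t ht) (hM₂ s t ht))⟩

lemma comp_add_const (h : IsBoundedDensity W) (l : ℝ) :
    IsBoundedDensity fun s t => W (s + l) t where
  continuousOn := h.continuousOn.comp (f := fun p : ℝ × ℝ => (p.1 + l, p.2)) (by fun_prop)
    fun _ hp => ⟨mem_univ _, hp.2⟩
  bounded T := (h.bounded T).imp fun _ hM s => hM (s + l)

lemma comp_left (h : IsBoundedDensity W) (hnonneg : ∀ s t, 0 ≤ W s t) {Φ : ℝ → ℝ}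
    (hΦ : ContinuousOn Φ (Ici 0)) : IsBoundedDensity fun s t => Φ (W s t) where
  continuousOn := hΦ.comp h.continuousOn fun _ _ => hnonneg _ _
  bounded T := by
    obtain ⟨M, hM⟩ := h.bounded T
    obtain ⟨B, hB⟩ := isCompact_Icc.exists_bound_of_continuousOn
      (hΦ.mono (Icc_subset_Ici_self : Icc 0 M ⊆ Ici 0))
    exact ⟨B, fun s t ht => hB _ ⟨hnonneg s t, (le_abs_self _).trans (hM s t ht)⟩⟩

lemma continuous_left (h : IsBoundedDensity W) {t : ℝ} (ht : 0 < t) : Continuous (W · t) :=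
  h.continuousOn.comp_continuous (by fun_prop : Continuous fun s : ℝ => (s, t))
    fun _ => ⟨mem_univ _, ht⟩

lemma continuousOn_right (h : IsBoundedDensity W) (s : ℝ) : ContinuousOn (W s) (Ioi 0) :=
  h.continuousOn.comp (f := fun t : ℝ => (s, t)) (by fun_prop) fun _ ht => ⟨mem_univ _, ht⟩

lemma intervalIntegrable (h : IsBoundedDensity W) (s : ℝ) {t₁ t₂ : ℝ} (ht₁ : 0 ≤ t₁)
    (ht₂ : 0 ≤ t₂) : IntervalIntegrable (W s) volume t₁ t₂ := by
  obtain ⟨M, hM⟩ := h.bounded (max t₁ t₂)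
  refine intervalIntegrable_iff.2 <| IntegrableOn.of_bound measure_Ioc_lt_top
    (((h.continuousOn_right s).mono fun t ht => ?_).aestronglyMeasurable measurableSet_uIoc) M
    (ae_restrict_of_forall_mem measurableSet_uIoc fun t ht => ?_)
  · exact (le_min ht₁ ht₂).trans_lt ht.1
  · exact hM s t ⟨(le_min ht₁ ht₂).trans_lt ht.1, ht.2⟩

lemma hasDerivAt_timeIntegral (h : IsBoundedDensity W) (s : ℝ) {t : ℝ} (ht : 0 < t) :
    HasDerivAt (timeIntegral W s) (W s t) t :=
  intervalIntegral.integral_hasDerivAt_right (h.intervalIntegrable s le_rfl ht.le)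
    ((h.continuousOn_right s).stronglyMeasurableAtFilter isOpen_Ioi t ht)
    ((h.continuousOn_right s).continuousAt (Ioi_mem_nhds ht))

lemma lipschitzOnWith_timeIntegral (h : IsBoundedDensity W) (T : ℝ) :
    ∃ M, ∀ s, LipschitzOnWith M (timeIntegral W s) (Icc 0 T) := by
  obtain ⟨M, hM⟩ := h.bounded T
  refine ⟨M.toNNReal, fun s => LipschitzOnWith.of_dist_le_mul fun t₂ ht₂ t₁ ht₁ => ?_⟩
  rw [dist_eq, dist_eq, timeIntegral, timeIntegral, intervalIntegral.integral_interval_sub_left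
    (h.intervalIntegrable s le_rfl ht₂.1) (h.intervalIntegrable s le_rfl ht₁.1)]
  refine intervalIntegral.norm_integral_le_of_norm_le_const (E := ℝ) fun t ht => ?_
  exact (hM s t ⟨(le_min ht₁.1 ht₂.1).trans_lt ht.1, ht.2.trans (max_le ht₁.2 ht₂.2)⟩).trans
    (le_coe_toNNReal M)

lemma continuous_timeIntegral (h : IsBoundedDensity W) {t : ℝ} (ht : 0 ≤ t) :
    Continuous (timeIntegral W · t) := by
  obtain ⟨M, hM⟩ := h.bounded t
  refine intervalIntegral.continuous_of_dominated_interval (bound := fun _ => M)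
    (fun s => (h.intervalIntegrable s le_rfl ht).def'.aestronglyMeasurable)
    (fun s => ae_of_all _ fun τ hτ => hM s τ (by rwa [uIoc_of_le ht] at hτ))
    intervalIntegrable_const (ae_of_all _ fun τ hτ => h.continuous_left ?_)
  rw [uIoc_of_le ht] at hτ
  exact hτ.1

lemma continuousOn_timeIntegral (h : IsBoundedDensity W) (T : ℝ) :
    ContinuousOn (fun p : ℝ × ℝ => timeIntegral W p.1 p.2) (univ ×ˢ Icc 0 T) :=
  let ⟨M, hM⟩ := h.lipschitzOnWith_timeIntegral T
  continuousOn_prod_of_continuousOn_lipschitzOnWith' _ M (fun s _ => hM s)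
    fun _ ht => (h.continuous_timeIntegral ht.1).continuousOn

lemma timeIntegral_sub (h₁ : IsBoundedDensity W₁) (h₂ : IsBoundedDensity W₂) (s : ℝ) {t : ℝ}
    (ht : 0 ≤ t) :
    timeIntegral (fun s t => W₁ s t - W₂ s t) s t = timeIntegral W₁ s t - timeIntegral W₂ s t :=
  intervalIntegral.integral_sub (h₁.intervalIntegrable s le_rfl ht)
    (h₂.intervalIntegrable s le_rfl ht)

lemma integrable_prod_mul (h : IsBoundedDensity W) {k : ℝ → ℝ} (hk : Integrable k) (T : ℝ) :
    Integrable (fun p : ℝ × ℝ => W p.2 p.1 * k p.2) ((volume.restrict (Ioc 0 T)).prod volume) := by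
  obtain ⟨M, hM⟩ := h.bounded T
  have hμ : (volume.restrict (Ioc 0 T)).prod volume =
      (volume : Measure (ℝ × ℝ)).restrict (Ioc 0 T ×ˢ univ) := by
    rw [Measure.volume_eq_prod, ← Measure.prod_restrict, Measure.restrict_univ]
  have hmeas : MeasurableSet (Ioc (0 : ℝ) T ×ˢ (univ : Set ℝ)) :=
    measurableSet_Ioc.prod MeasurableSet.univ
  refine (hk.comp_snd _).bdd_mul (c := M) ?_ ?_ <;> rw [hμ]
  · exact (h.continuousOn.comp continuous_swap.continuousOn fun p hp =>
      ⟨mem_univ _, hp.1.1⟩).aestronglyMeasurable hmeas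
  · exact ae_restrict_of_forall_mem hmeas fun p hp => hM _ _ hp.1

lemma integral_timeIntegral_mul (h : IsBoundedDensity W) {k : ℝ → ℝ} (hk : Integrable k)
    {T : ℝ} (hT : 0 ≤ T) :
    ∫ s, timeIntegral W s T * k s = ∫ τ in (0 : ℝ)..T, ∫ s, W s τ * k s := by
  rw [intervalIntegral_integral_swap (uIoc_of_le hT ▸ h.integrable_prod_mul hk T)]
  simp only [timeIntegral, intervalIntegral.integral_mul_const]

end IsBoundedDensity

/-! ### Comparison of time-integrated solutions -/

/-- `u ≥ 0` solves `u_t = Φ(u)_ss + c Φ(u)_s` with datum `u₀`, in time-integrated form: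
`(∫₀ᵗ Φ(u))_ss + c (∫₀ᵗ Φ(u))_s = u(·,t) - u₀`, with classical derivatives in `s`. -/
structure IsIntegratedSolution (c : ℝ) (Φ : ℝ → ℝ) (u : ℝ → ℝ → ℝ) (u₀ : ℝ → ℝ) : Prop where
  nonneg : ∀ s t, 0 ≤ u s t
  isBoundedDensity : IsBoundedDensity u
  continuous_initial : Continuous u₀
  hasDriftLaplacian : ∀ t, 0 < t →
    HasDriftLaplacian c (timeIntegral (fun s τ => Φ (u s τ)) · t) fun s => u s t - u₀ s

lemma exists_slope_mem_Icc {Φ : ℝ → ℝ} (hmono : MonotoneOn Φ (Ici 0))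
    (hlip : LocallyLipschitzOn (Ici 0) Φ) (M : ℝ) :
    ∃ K, ∀ x ∈ Icc 0 M, ∀ y ∈ Icc 0 M, slope Φ x y ∈ Icc 0 K := by
  obtain ⟨K, hK⟩ := (hlip.mono (Icc_subset_Ici_self : Icc 0 M ⊆ Ici 0)
    ).exists_lipschitzOnWith_of_compact isCompact_Icc
  refine ⟨K, fun x hx y hy => ⟨hmono.slope_nonneg hx.1 hy.1, ?_⟩⟩
  rw [slope_def_field]
  refine (le_abs_self _).trans ?_
  rw [abs_div]
  exact div_le_of_le_mul₀ (abs_nonneg _) K.2 (hK.dist_le_mul y hy x hx)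

namespace IsIntegratedSolution

variable {c : ℝ} {Φ : ℝ → ℝ} {u u₁ u₂ : ℝ → ℝ → ℝ} {u₀ u₀₁ u₀₂ : ℝ → ℝ}

lemma comp_add_const (h : IsIntegratedSolution c Φ u u₀) (l : ℝ) :
    IsIntegratedSolution c Φ (fun s t => u (s + l) t) fun s => u₀ (s + l) where
  nonneg s := h.nonneg (s + l)
  isBoundedDensity := h.isBoundedDensity.comp_add_const l
  continuous_initial := h.continuous_initial.comp (continuous_add_const l)
  hasDriftLaplacian t ht := (h.hasDriftLaplacian t ht).comp_add_const l

/-- Adding `driftPrimitive c (u₀₁ - u₀₂)` makes the image of the accumulated flux difference under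
`∂² + c ∂` equal to `u₁ - u₂` itself. -/
lemma exists_isDriftFlow (h₁ : IsIntegratedSolution c Φ u₁ u₀₁)
    (h₂ : IsIntegratedSolution c Φ u₂ u₀₂) (hmono : MonotoneOn Φ (Ici 0))
    (hlip : LocallyLipschitzOn (Ici 0) Φ) (T : ℝ) :
    ∃ K, IsDriftFlow c K T
      (fun s t => timeIntegral (fun s τ => Φ (u₁ s τ) - Φ (u₂ s τ)) s t +
        driftPrimitive c (fun s => u₀₁ s - u₀₂ s) s)
      (fun s t => slope Φ (u₂ s t) (u₁ s t)) fun s t => u₁ s t - u₂ s t := by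
  have hdens₁ := h₁.isBoundedDensity.comp_left h₁.nonneg hlip.continuousOn
  have hdens₂ := h₂.isBoundedDensity.comp_left h₂.nonneg hlip.continuousOn
  have hdens := hdens₁.sub hdens₂
  have hcont₀ : Continuous fun s => u₀₁ s - u₀₂ s :=
    h₁.continuous_initial.sub h₂.continuous_initial
  have hprim := hasDriftLaplacian_driftPrimitive c hcont₀
  obtain ⟨M₁, hM₁⟩ := h₁.isBoundedDensity.bounded T
  obtain ⟨M₂, hM₂⟩ := h₂.isBoundedDensity.bounded T
  obtain ⟨K, hK⟩ := exists_slope_mem_Icc hmono hlip (max M₁ M₂)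
  refine ⟨K, ?_, ?_, fun t ht => ?_, fun s t ht => ?_, fun s t ht => hK _ ?_ _ ?_⟩
  · exact (hdens.continuousOn_timeIntegral T).add
      (hprim.continuous.comp continuous_fst).continuousOn
  · obtain ⟨L, hL⟩ := hdens.lipschitzOnWith_timeIntegral T
    refine ⟨L * T, fun s t ht => ?_⟩
    rw [add_sub_add_right_eq_sub]
    refine ((hL s).dist_le_mul t ht 0 ⟨le_rfl, ht.1.trans ht.2⟩).trans ?_
    rw [dist_zero_right, norm_of_nonneg ht.1]
    exact mul_le_mul_of_nonneg_left ht.2 L.2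
  · convert ((h₁.hasDriftLaplacian t ht.1).sub (h₂.hasDriftLaplacian t ht.1)).add hprim using 2
    · rw [hdens₁.timeIntegral_sub hdens₂ _ ht.1.le]
    · ring
  · refine ((hdens.hasDerivAt_timeIntegral s ht.1).add_const _).congr_deriv ?_
    rw [mul_comm, ← smul_eq_mul, sub_smul_slope, vsub_eq_sub]
  · exact ⟨h₂.nonneg s t, (le_abs_self _).trans ((hM₂ s t ht).trans (le_max_right _ _))⟩
  · exact ⟨h₁.nonneg s t, (le_abs_self _).trans ((hM₁ s t ht).trans (le_max_left _ _))⟩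

theorem le_of_initial_le (h₁ : IsIntegratedSolution c Φ u₁ u₀₁)
    (h₂ : IsIntegratedSolution c Φ u₂ u₀₂) (hmono : MonotoneOn Φ (Ici 0))
    (hlip : LocallyLipschitzOn (Ici 0) Φ) (hle : ∀ s, u₀₁ s ≤ u₀₂ s) {t : ℝ} (ht : 0 < t) (s : ℝ) :
    u₁ s t ≤ u₂ s t := by
  obtain ⟨K, hflow⟩ := h₁.exists_isDriftFlow h₂ hmono hlip t
  have hcont₀ := h₁.continuous_initial.sub h₂.continuous_initial
  have hconcave₀ : DriftConcave c (driftPrimitive c fun s => u₀₁ s - u₀₂ s) :=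
    (driftConcave_iff_nonpos (hasDriftLaplacian_driftPrimitive c hcont₀) hcont₀).2
      fun s => sub_nonpos.2 (hle s)
  have hconcave := hflow.driftConcave
    (by simpa only [timeIntegral, intervalIntegral.integral_same, zero_add] using hconcave₀)
    (right_mem_Icc.2 ht.le)
  have hcont := (h₁.isBoundedDensity.continuous_left ht).sub
    (h₂.isBoundedDensity.continuous_left ht)
  exact sub_nonpos.1
    ((driftConcave_iff_nonpos (hflow.hasDriftLaplacian t ⟨ht, le_rfl⟩) hcont).1 hconcave s)

end IsIntegratedSolution

/-! ### Logarithmic variables -/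

lemma intervalIntegral_exp_eq_integral {G : ℝ → ℝ} {R : ℝ} (hR : 0 ≤ R)
    (hG : ∀ s, R ≤ |s| → G (exp s) = 0) :
    ∫ r in exp (-R)..exp R, G r = ∫ s, exp s * G (exp s) := by
  have hsubst := integral_image_eq_integral_abs_deriv_smul (measurableSet_Ioc (a := -R) (b := R))
    (fun s _ => (Real.hasDerivAt_exp s).hasDerivWithinAt) exp_injective.injOn G
  simp only [image_exp_Ioc, abs_exp, smul_eq_mul] at hsubst
  rw [intervalIntegral.integral_of_le (exp_le_exp.2 (neg_le_self hR)), hsubst]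
  refine setIntegral_eq_integral_of_forall_compl_eq_zero fun s hs => ?_
  rw [hG s ?_, mul_zero]
  by_contra! habs
  exact hs ⟨(abs_lt.1 habs).1, (abs_lt.1 habs).2.le⟩

lemma exp_rpow_sub_one (s a : ℝ) : exp s ^ (a - 1) = exp ((a - 2) * s) * exp s := by
  rw [← exp_mul, ← exp_add]
  ring_nf

lemma exists_forall_notMem_tsupport {f : ℝ → ℝ} (hsupp : HasCompactSupport f) :
    ∃ R, 0 < R ∧ ∀ s, R ≤ |s| → s ∉ tsupport f :=
  let ⟨R, hR, hlt⟩ := hsupp.isCompact.isBounded.exists_pos_norm_lt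
  ⟨R, hR, fun _ hs hmem => (hlt _ hmem).not_ge hs⟩

/-- The derivative `d/dr = e^{-s} d/ds` in the variable `s = log r`. -/
def radialDeriv (f : ℝ → ℝ) (s : ℝ) : ℝ := exp (-s) * deriv f s

section radialDeriv

variable {f : ℝ → ℝ}

lemma contDiff_radialDeriv {n : ℕ} (hf : ContDiff ℝ (n + 1) f) :
    ContDiff ℝ n (radialDeriv f) :=
  (contDiff_exp.comp contDiff_neg).mul hf.deriv'

lemma tsupport_radialDeriv_subset (f : ℝ → ℝ) : tsupport (radialDeriv f) ⊆ tsupport f :=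
  tsupport_mul_subset_right.trans tsupport_deriv_subset

lemma radialDeriv_radialDeriv (hf : ContDiff ℝ 2 f) (s : ℝ) :
    radialDeriv (radialDeriv f) s = exp (-s) ^ 2 * (deriv (deriv f) s - deriv f s) := by
  have hf₁ : ContDiff ℝ 1 (deriv f) := hf.deriv'
  have hderiv : HasDerivAt (radialDeriv f)
      (-exp (-s) * deriv f s + exp (-s) * deriv (deriv f) s) s := by
    refine (((hasDerivAt_neg s).exp).mul
      (hf₁.differentiable one_ne_zero s).hasDerivAt).congr_deriv ?_
    ring
  rw [radialDeriv, hderiv.deriv]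
  ring

end radialDeriv

/-- The function `f ∘ log` on `r > 0`, extended by zero to the whole line. -/
def logPull (f : ℝ → ℝ) : ℝ → ℝ := (Ioi 0).indicator fun r => f (log r)

section logPull

variable {f : ℝ → ℝ}

lemma logPull_exp (f : ℝ → ℝ) (s : ℝ) : logPull f (exp s) = f s := by
  rw [logPull, indicator_of_mem (mem_Ioi.2 (exp_pos s)), log_exp]

lemma logPull_nonneg (hf : ∀ s, 0 ≤ f s) (r : ℝ) : 0 ≤ logPull f r :=
  indicator_nonneg (fun _ _ => hf _) r

lemma logPull_eventuallyEq_of_pos (f : ℝ → ℝ) {r : ℝ} (hr : 0 < r) :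
    logPull f =ᶠ[𝓝 r] fun r => f (log r) :=
  eqOn_indicator.eventuallyEq_of_mem (Ioi_mem_nhds hr)

lemma logPull_eventuallyEq_zero (hsupp : HasCompactSupport f) {r : ℝ} (hr : r ≤ 0) :
    logPull f =ᶠ[𝓝 r] fun _ => 0 := by
  obtain ⟨R, -, hR⟩ := hsupp.exists_pos_le_norm
  filter_upwards [Iio_mem_nhds (hr.trans_lt (exp_pos (-R)))] with x hx
  refine indicator_apply_eq_zero.2 fun hx₀ => hR _ ?_
  rw [norm_eq_abs]
  exact le_abs.2 (Or.inr (le_neg_of_le_neg ((log_lt_iff_lt_exp hx₀).2 hx).le))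

lemma continuous_logPull (hf : Continuous f) (hsupp : HasCompactSupport f) :
    Continuous (logPull f) := by
  refine continuous_iff_continuousAt.2 fun r => ?_
  rcases le_or_gt r 0 with hr | hr
  · exact continuousAt_const.congr (logPull_eventuallyEq_zero hsupp hr).symm
  · exact (hf.continuousAt.comp (continuousAt_log hr.ne')).congr
      (logPull_eventuallyEq_of_pos f hr).symm

lemma hasDerivAt_logPull (hf : Differentiable ℝ f) (hsupp : HasCompactSupport f) (r : ℝ) :
    HasDerivAt (logPull f) (logPull (radialDeriv f) r) r := by
  rcases le_or_gt r 0 with hr | hr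
  · rw [show logPull (radialDeriv f) r = 0 from indicator_of_notMem (notMem_Ioi.2 hr) _]
    exact (hasDerivAt_const r 0).congr_of_eventuallyEq (logPull_eventuallyEq_zero hsupp hr)
  · refine (((hf _).hasDerivAt.comp r (hasDerivAt_log hr.ne')).congr_of_eventuallyEq
      (logPull_eventuallyEq_of_pos f hr)).congr_deriv ?_
    rw [(logPull_eventuallyEq_of_pos _ hr).eq_of_nhds, radialDeriv, exp_neg, exp_log hr, mul_comm]

end logPull

lemma deriv_exp_neg_mul_mul (c : ℝ) {f : ℝ → ℝ} (hf : Differentiable ℝ f) :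
    (deriv fun s => exp (-(c * s)) * f s) = fun s => exp (-(c * s)) * (deriv f s - c * f s) := by
  funext s
  refine ((hasDerivAt_exp_neg_mul c s).mul (hf s).hasDerivAt).deriv.trans ?_
  ring

namespace IsRadialVeryWeakSolution

variable {N : ℕ} {m : ℝ} {v : ℝ → ℝ → ℝ} {v₀ : ℝ → ℝ}

lemma weak_static (h : IsRadialVeryWeakSolution N m v v₀) {r₁ r₂ T : ℝ} {φ φ' φ'' : ℝ → ℝ}
    (hr₁ : 0 < r₁) (hr : r₁ < r₂) (hT : 0 < T) (hnonneg : ∀ r, 0 ≤ φ r)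
    (hφ : ∀ r, HasDerivAt φ (φ' r) r) (hφ' : ∀ r, HasDerivAt φ' (φ'' r) r)
    (hφ'' : Continuous φ'') (hφ₁ : φ r₁ = 0) (hφ₂ : φ r₂ = 0) (hφ'₁ : φ' r₁ = 0)
    (hφ'₂ : φ' r₂ = 0) :
    ∫ t in (0 : ℝ)..T, ∫ r in r₁..r₂,
        (φ'' r + (N - 1) / r * φ' r) * v r t ^ m * r ^ ((N : ℝ) - 1) =
      ∫ r in r₁..r₂, r ^ (-2 : ℝ) * (v r T * φ r - v₀ r * φ r) * r ^ ((N : ℝ) - 1) := by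
  have hcont : Continuous φ := continuous_iff_continuousAt.2 fun r => (hφ r).continuousAt
  have hcont' : Continuous φ' := continuous_iff_continuousAt.2 fun r => (hφ' r).continuousAt
  simpa only [hφ'₁, hφ'₂, mul_zero, sub_zero, zero_add, add_zero, intervalIntegral.integral_zero]
    using h.2.2.2 r₁ r₂ T (fun r _ => φ r) (fun _ _ => 0) (fun r _ => φ' r) (fun r _ => φ'' r)
      hr₁ hr hT (fun r _ => hnonneg r) (fun _ _ => hasDerivAt_const _ _) (fun r _ => hφ r)
      (fun r _ => hφ' r) (hcont.comp continuous_fst) continuous_const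
      (hcont'.comp continuous_fst) (hφ''.comp continuous_fst) fun _ _ => ⟨hφ₁, hφ₂⟩

/-- Test with `φ(r) = g(log r)` and substitute `r = eˢ`. -/
lemma weak_log (h : IsRadialVeryWeakSolution N m v v₀) {g : ℝ → ℝ} (hg : ContDiff ℝ 2 g)
    (hsupp : HasCompactSupport g) (hnonneg : ∀ s, 0 ≤ g s) {T : ℝ} (hT : 0 < T) :
    ∫ t in (0 : ℝ)..T, ∫ s, v (exp s) t ^ m *
        (exp ((N - 2) * s) * (deriv (deriv g) s + (N - 2) * deriv g s)) =
      ∫ s, (v (exp s) T - v₀ (exp s)) * (exp ((N - 2) * s) * g s) := by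
  have hsmooth₁ : ContDiff ℝ 1 (radialDeriv g) := contDiff_radialDeriv hg
  have hcont₂ : Continuous (radialDeriv (radialDeriv g)) :=
    (contDiff_radialDeriv hsmooth₁).continuous
  have hsub₁ := tsupport_radialDeriv_subset g
  have hsub₂ := (tsupport_radialDeriv_subset (radialDeriv g)).trans hsub₁
  have hsupp₁ := hsupp.of_isClosed_subset (isClosed_tsupport _) hsub₁
  have hsupp₂ := hsupp.of_isClosed_subset (isClosed_tsupport _) hsub₂
  obtain ⟨R, hR, hnotMem⟩ := exists_forall_notMem_tsupport hsupp
  have hzero (s : ℝ) (hs : R ≤ |s|) :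
      logPull g (exp s) = 0 ∧ logPull (radialDeriv g) (exp s) = 0 ∧
        logPull (radialDeriv (radialDeriv g)) (exp s) = 0 := by
    simp only [logPull_exp]
    exact ⟨image_eq_zero_of_notMem_tsupport (hnotMem s hs),
      image_eq_zero_of_notMem_tsupport fun hmem => hnotMem s hs (hsub₁ hmem),
      image_eq_zero_of_notMem_tsupport fun hmem => hnotMem s hs (hsub₂ hmem)⟩
  have hzero_right := hzero R (le_abs_self R)
  have hzero_left := hzero (-R) (abs_neg R ▸ le_abs_self R)
  have htest := h.weak_static (exp_pos (-R)) (exp_lt_exp.2 (neg_lt_self hR)) hT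
    (logPull_nonneg hnonneg) (hasDerivAt_logPull (hg.differentiable two_ne_zero) hsupp)
    (hasDerivAt_logPull (hsmooth₁.differentiable one_ne_zero) hsupp₁)
    (continuous_logPull hcont₂ hsupp₂) hzero_left.1 hzero_right.1 hzero_left.2.1 hzero_right.2.1
  rw [intervalIntegral_exp_eq_integral hR.le fun s hs => by rw [(hzero s hs).1]; ring] at htest
  convert htest using 1
  · congr 1 with t
    rw [intervalIntegral_exp_eq_integral hR.le fun s hs => by
      rw [(hzero s hs).2.1, (hzero s hs).2.2]; ring]
    congr 1 with s
    rw [logPull_exp, logPull_exp, radialDeriv_radialDeriv hg, radialDeriv, exp_rpow_sub_one,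
      exp_neg]
    field_simp
    ring
  · congr 1 with s
    rw [logPull_exp, exp_rpow_sub_one, rpow_neg (exp_pos s).le, rpow_ofNat]
    field_simp

/-- Take `g = e^{-(N-2)s} η` in `weak_log`, then exchange the integrals. -/
lemma isWeakDriftLaplacian (h : IsRadialVeryWeakSolution N m v v₀)
    (hdens : IsBoundedDensity fun s t => v (exp s) t ^ m) {T : ℝ} (hT : 0 < T) :
    IsWeakDriftLaplacian (N - 2) (timeIntegral (fun s t => v (exp s) t ^ m) · T)
      fun s => v (exp s) T - v₀ (exp s) := by
  intro η hη hsupp hnonneg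
  have hη₁ : ContDiff ℝ 1 (deriv η) := hη.deriv'
  have hη₂ : ContDiff ℝ 1 fun s => deriv η s - (N - 2) * η s :=
    hη₁.sub (contDiff_const.mul (hη.of_le one_le_two))
  have hderiv := deriv_exp_neg_mul_mul ((N : ℝ) - 2) (hη.differentiable two_ne_zero)
  have hderiv₂ (s : ℝ) : deriv (fun s => deriv η s - (N - 2) * η s) s =
      deriv (deriv η) s - (N - 2) * deriv η s :=
    ((hη₁.differentiable one_ne_zero s).hasDerivAt.sub
      ((hη.differentiable two_ne_zero s).hasDerivAt.const_mul _)).deriv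
  have hcancel (s : ℝ) : exp ((N - 2) * s) * exp (-((N - 2) * s)) = 1 := by
    rw [← exp_add, add_neg_cancel, exp_zero]
  have hweak := h.weak_log (g := fun s => exp (-((N - 2) * s)) * η s) (by fun_prop)
    hsupp.mul_left (fun s => mul_nonneg (exp_pos _).le (hnonneg s)) hT
  rw [hderiv, deriv_exp_neg_mul_mul _ (hη₂.differentiable one_ne_zero)] at hweak
  have hint : Integrable fun s => deriv (deriv η) s - (N - 2) * deriv η s :=
    ((hη₁.continuous_deriv le_rfl).sub (hη₁.continuous.const_mul _)
      ).integrable_of_hasCompactSupport (hsupp.deriv.deriv.sub hsupp.deriv.mul_left)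
  rw [hdens.integral_timeIntegral_mul hint hT.le]
  convert hweak using 5 with t s s
  · simp only [hderiv₂]
    linear_combination
      -(v (exp s) t ^ m) * (deriv (deriv η) s - (N - 2) * deriv η s) * hcancel s
  · linear_combination -η s * hcancel s

lemma isIntegratedSolution (h : IsRadialVeryWeakSolution N m v v₀) (hm : 1 ≤ m)
    (hv₀ : ContinuousOn v₀ (Ioi 0)) :
    IsIntegratedSolution (N - 2) (· ^ m) (fun s t => v (exp s) t) fun s => v₀ (exp s) := by
  have hu : IsBoundedDensity fun s t => v (exp s) t := by
    refine ⟨h.2.1.comp (f := fun p : ℝ × ℝ => (exp p.1, p.2)) (by fun_prop)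
      fun p hp => ⟨(exp_pos p.1).le, hp.2⟩, fun T => ?_⟩
    obtain ⟨C, hC⟩ := h.2.2.1 (max T 1) (by positivity)
    refine ⟨C, fun s t ht => ?_⟩
    rw [abs_of_nonneg (h.1 _ _)]
    exact hC _ (exp_pos s).le t ⟨ht.1.le, ht.2.trans (le_max_left _ _)⟩
  have hdens := hu.comp_left (fun s => h.1 (exp s))
    (continuous_rpow_const (zero_le_one.trans hm)).continuousOn
  have hv₀_exp : Continuous fun s => v₀ (exp s) :=
    hv₀.comp_continuous continuous_exp exp_pos
  refine ⟨fun s => h.1 (exp s), hu, hv₀_exp, fun t ht => ?_⟩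
  exact (h.isWeakDriftLaplacian hdens ht).hasDriftLaplacian (hdens.continuous_timeIntegral ht.le)
    ((hu.continuous_left ht).sub hv₀_exp)

end IsRadialVeryWeakSolution

/-! ### Preservation of monotonicity -/

lemma locallyLipschitz_rpow_const {m : ℝ} (hm : 1 ≤ m) : LocallyLipschitz fun x : ℝ => x ^ m :=
  (contDiff_rpow_const_of_le (n := 1) (by exact_mod_cast hm)).locallyLipschitz

/-- Compare the solution with its dilation by the factor `r₂ / r₁`. -/
lemma IsRadialVeryWeakSolution.antitoneOn_Ioi {N : ℕ} {m : ℝ} {v : ℝ → ℝ → ℝ} {v₀ : ℝ → ℝ}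
    (h : IsRadialVeryWeakSolution N m v v₀) (hm : 1 ≤ m) (hv₀ : ContinuousOn v₀ (Ioi 0))
    (hanti : AntitoneOn v₀ (Ioi 0)) {t : ℝ} (ht : 0 < t) : AntitoneOn (v · t) (Ioi 0) := by
  intro r₁ hr₁ r₂ hr₂ hr
  have hu := h.isIntegratedSolution hm hv₀
  have hlog : 0 ≤ log r₂ - log r₁ := sub_nonneg.2 (log_le_log hr₁ hr)
  have hle (s : ℝ) : v₀ (exp (s + (log r₂ - log r₁))) ≤ v₀ (exp s) :=
    hanti (exp_pos _) (exp_pos _) (exp_le_exp.2 (le_add_of_nonneg_right hlog))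
  have hcompare := (hu.comp_add_const (log r₂ - log r₁)).le_of_initial_le hu
    (monotoneOn_rpow_Ici_of_exponent_nonneg (zero_le_one.trans hm))
    (locallyLipschitz_rpow_const hm).locallyLipschitzOn hle ht (log r₁)
  rwa [add_sub_cancel, exp_log hr₁, exp_log hr₂] at hcompare

theorem radial_monotonicity_preserved_general {N : ℕ} {m : ℝ} {v : ℝ → ℝ → ℝ} {v₀ : ℝ → ℝ}
    (h : IsRadialVeryWeakSolution N m v v₀) (hm : 1 ≤ m) (hv₀ : ContinuousOn v₀ (Ioi 0))
    (hanti : AntitoneOn v₀ (Ioi 0)) {t : ℝ} (ht : 0 < t) : AntitoneOn (v · t) (Ici 0) := by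
  have hcont : ContinuousOn (v · t) (Ici 0) :=
    h.2.1.comp (f := fun r => (r, t)) (by fun_prop) fun r hr => ⟨hr, ht⟩
  rw [← Ioi_insert]
  exact (h.antitoneOn_Ioi hm hv₀ hanti ht).dual_right.insert_of_continuousWithinAt
    (mem_closure_iff_clusterPt.1 (by simp only [closure_Ioi, self_mem_Ici]))
    ((hcont 0 self_mem_Ici).mono Ioi_subset_Ici_self)

/-- **Lemma 2.3 (preservation of radial monotonicity).** Let `N ≥ 1`, `m > 1`, and let
`u` (radial representative `v`, `v r t = u(x,t)` for `r = |x|`) be a radial very weak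
solution of `|x|^{-2} ∂ₜ u = Δ(u^m)` with initial datum `u₀ ∈ L^∞(ℝ^N) ∩ C(ℝ^N)`,
`u₀ ≥ 0`, `u₀ ≢ 0`, radially symmetric and radially non-increasing.  Then for every
`t > 0`, `u(·,t)` is radially symmetric and radially non-increasing in `r = |x|`. -/
theorem radial_monotonicity_preserved
    (N : ℕ) (hN : 1 ≤ N) (m : ℝ) (hm : 1 < m)
    (v : ℝ → ℝ → ℝ) (v₀ : ℝ → ℝ)
    (hsol : IsRadialVeryWeakSolution N m v v₀)
    (hv₀cont : Continuous v₀)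
    (hv₀bdd : ∃ C : ℝ, ∀ r, v₀ r ≤ C)
    (hv₀nonneg : ∀ r, 0 ≤ v₀ r)
    (hv₀ne : ∃ r, 0 ≤ r ∧ v₀ r ≠ 0)
    (hv₀mono : ∀ r₁ r₂ : ℝ, 0 ≤ r₁ → r₁ ≤ r₂ → v₀ r₂ ≤ v₀ r₁) :
    ∀ t : ℝ, 0 < t → ∀ r₁ r₂ : ℝ, 0 ≤ r₁ → r₁ ≤ r₂ → v r₂ t ≤ v r₁ t :=
  fun _ ht _ _ hr₁ hr => radial_monotonicity_preserved_general hsol hm.le hv₀cont.continuousOn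
    (fun _ ha _ _ hab => hv₀mono _ _ (mem_Ioi.1 ha).le hab) ht hr₁ (hr₁.trans hr) hr
end
end
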